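/- arXiv:0706.2955 — 3 statements merged into one kernel-verified Lean document; each statement's English description precedes it below -/
import Mathlib

section
/- The elliptic curve over ℚ defined by Y² = X³ − 22187952X + 23592760704 has a rational point of order 8. -/
open WeierstrassCurve

theorem curve_has_point_of_order_eight
    (W : WeierstrassCurve.Affine ℚ) (hW : W = ⟨0, 0, 0, -22187952, 23592760704⟩) :
    ∃ P : W.Point, addOrderOf P = 8 := by
  classical
  subst hW
  set W : WeierstrassCurve.Affine ℚ := ⟨0, 0, 0, -22187952, 23592760704⟩ with hW
  have h1 : W.Nonsingular 588 103680 := by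
    rw [Affine.nonsingular_iff, Affine.equation_iff]; norm_num [hW]
  have h2 : W.Nonsingular 9228 777600 := by
    rw [Affine.nonsingular_iff, Affine.equation_iff]; norm_num [hW]
  have h4 : W.Nonsingular 4044 0 := by
    rw [Affine.nonsingular_iff, Affine.equation_iff]; norm_num [hW]
  have n1 : (103680 : ℚ) ≠ W.negY 588 103680 := by norm_num [hW, Affine.negY]
  have n2 : (777600 : ℚ) ≠ W.negY 9228 777600 := by norm_num [hW, Affine.negY]
  have e2 : Affine.Point.some _ _ h1 + Affine.Point.some _ _ h1 = Affine.Point.some _ _ h2 := by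
    rw [Affine.Point.add_self_of_Y_ne n1, Affine.Point.some.injEq, Affine.slope_of_Y_ne rfl n1]
    norm_num [hW, Affine.negY, Affine.addX, Affine.addY, Affine.negAddY]
  have e4 : Affine.Point.some _ _ h2 + Affine.Point.some _ _ h2 = Affine.Point.some _ _ h4 := by
    rw [Affine.Point.add_self_of_Y_ne n2, Affine.Point.some.injEq, Affine.slope_of_Y_ne rfl n2]
    norm_num [hW, Affine.negY, Affine.addX, Affine.addY, Affine.negAddY]
  have e8 : Affine.Point.some _ _ h4 + Affine.Point.some _ _ h4 = 0 :=
    Affine.Point.add_self_of_Y_eq (by norm_num [hW, Affine.negY])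
  have f4 : (4 : ℕ) • Affine.Point.some _ _ h1 = Affine.Point.some _ _ h4 := by
    rw [← e4, ← e2]; abel
  refine ⟨Affine.Point.some _ _ h1, ?_⟩
  have : Fact (Nat.Prime 2) := ⟨Nat.prime_two⟩
  refine addOrderOf_eq_prime_pow (p := 2) (n := 2) ?_ ?_
  · norm_num only
    rw [f4]
    exact Affine.Point.some_ne_zero h4
  · have : (2 ^ (2 + 1) : ℕ) = 4 + 4 := by norm_num
    rw [this, add_smul, f4, e8]
end

section
/- Fix a nonzero integer Δ and let t be the number of distinct prime factors of Δ. Then the set of pairs (A, B) ∈ ℤ × ℤ such that 4A³ + 27B² ≠ 0, the discriminant −16(4A³ + 27B²) of the elliptic curve Y² = X³ + A·X + B equals Δ, and this curve has a rational point of order 5, is finite and has cardinality at most 7¹⁸¹⁵ + 6·7^(20(t+1)). -/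
section PartEC
open WeierstrassCurve

lemma ec_dbl (A B : ℚ) (x y X Y : ℚ)
    (h : WeierstrassCurve.Affine.Nonsingular (⟨0, 0, 0, A, B⟩ : WeierstrassCurve.Affine ℚ) x y)
    (H : WeierstrassCurve.Affine.Nonsingular (⟨0, 0, 0, A, B⟩ : WeierstrassCurve.Affine ℚ) X Y)
    (e : Affine.Point.some _ _ h + Affine.Point.some _ _ h = Affine.Point.some _ _ H) :
    ∃ s : ℚ, 2 * y * s = 3 * x ^ 2 + A ∧ X = s ^ 2 - 2 * x ∧ Y = -(s * (X - x) + y) := by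
  by_cases hy : y = WeierstrassCurve.Affine.negY (⟨0, 0, 0, A, B⟩ : WeierstrassCurve.Affine ℚ) x y
  · rw [Affine.Point.add_self_of_Y_eq hy] at e
    exact absurd e.symm (Affine.Point.some_ne_zero _)
  · rw [Affine.Point.add_self_of_Y_ne hy] at e
    have hs := Affine.slope_of_Y_ne (W := (⟨0, 0, 0, A, B⟩ : WeierstrassCurve.Affine ℚ)) rfl hy
    simp only [Affine.Point.some.injEq] at e
    obtain ⟨e1, e2⟩ := e
    set s := WeierstrassCurve.Affine.slope (⟨0, 0, 0, A, B⟩ : WeierstrassCurve.Affine ℚ) x x y y with hsd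
    have hy0 : y ≠ 0 := by
      rintro rfl
      apply hy
      simp [Affine.negY]
    refine ⟨s, ?_, ?_, ?_⟩
    · rw [hs]
      simp [Affine.negY]
      field_simp
      ring
    · rw [← e1]
      simp [Affine.addX]
      ring
    · rw [← e2, ← e1]
      simp [Affine.addY, Affine.negAddY, Affine.negY]

lemma ec_param (A B : ℚ)
    (P : WeierstrassCurve.Affine.Point (⟨0, 0, 0, A, B⟩ : WeierstrassCurve.Affine ℚ))
    (hP : addOrderOf P = 5) :
    ∃ p q : ℚ, A = -(p ^ 4 - 12 * p ^ 3 * q + 14 * p ^ 2 * q ^ 2 + 12 * p * q ^ 3 + q ^ 4) / 48 ∧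
      -16 * (4 * A ^ 3 + 27 * B ^ 2) = p ^ 5 * q ^ 5 * (p ^ 2 - 11 * p * q - q ^ 2) := by
  have h5 : (5 : ℕ) • P = 0 := by rw [← hP]; exact addOrderOf_nsmul_eq_zero P
  have hP0 : P ≠ 0 := by rintro rfl; simp at hP
  have hQ0 : P + P ≠ 0 := by
    intro h
    have h2 : (2 : ℕ) • P = 0 := by rw [two_nsmul]; exact h
    have := addOrderOf_dvd_of_nsmul_eq_zero h2
    rw [hP] at this
    norm_num at this
  have hQQ : (P + P) + (P + P) = -P := by
    have : (P + P) + (P + P) + P = 0 := by rw [← h5]; abel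
    exact eq_neg_of_add_eq_zero_left this
  rcases hPe : P with _ | ⟨x, y, h⟩
  · exact absurd hPe hP0
  rcases hQe : P + P with _ | ⟨X, Y, H⟩
  · exact absurd hQe hQ0
  rw [hQe, hPe, Affine.Point.neg_some] at hQQ
  rw [hPe] at hQe
  obtain ⟨s, a1, a2, a3⟩ := ec_dbl _ _ _ _ _ _ _ _ hQe
  obtain ⟨s', b1, b2, b3⟩ := ec_dbl _ _ _ _ _ _ _ _ hQQ
  have heq := (Affine.equation_iff' _ _).mp h.1
  simp [Affine.negY] at heq b3
  clear hQQ hQe hPe hQ0 hP0 h5 hP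
  have ex : x = (2 * s ^ 2 - s' ^ 2) / 3 := by linarith
  have eX : X = (2 * s' ^ 2 - s ^ 2) / 3 := by linarith
  have ey : y = -(s + s') * (X - x) / 2 := by linarith
  have eA : A = 2 * y * s - 3 * x ^ 2 := by linarith
  have eB : B = y ^ 2 - x ^ 3 - A * x := by linarith
  refine ⟨s + s', s - s', ?_, ?_⟩
  · rw [eA, ey, eX, ex]; ring
  · rw [eB, eA, ey, eX, ex]; ring

lemma ec_main (A B Δ : ℤ) (hΔ : Δ ≠ 0) (hd : -16 * (4 * A ^ 3 + 27 * B ^ 2) = Δ)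
    (P : WeierstrassCurve.Affine.Point (⟨0, 0, 0, (A : ℚ), (B : ℚ)⟩ : WeierstrassCurve.Affine ℚ))
    (hP : addOrderOf P = 5) :
    ∃ a b : ℤ, IsCoprime a b ∧ a ≠ 0 ∧ b ≠ 0 ∧ a ^ 2 - 11 * a * b - b ^ 2 ≠ 0 ∧
      (∀ l : ℕ, l.Prime → (l : ℤ) ∣ a * b * (a ^ 2 - 11 * a * b - b ^ 2) → (l : ℤ) ∣ 5 * Δ) ∧
      -48 ^ 3 * A ^ 3 * (a ^ 5 * b ^ 5 * (a ^ 2 - 11 * a * b - b ^ 2)) =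
        Δ * (a ^ 4 - 12 * a ^ 3 * b + 14 * a ^ 2 * b ^ 2 + 12 * a * b ^ 3 + b ^ 4) ^ 3 := by
  obtain ⟨p, q, h1, h2⟩ := ec_param _ _ P hP
  have hd' : -16 * (4 * (A : ℚ) ^ 3 + 27 * (B : ℚ) ^ 2) = (Δ : ℚ) := by exact_mod_cast hd
  rw [hd'] at h2
  have hΔq : (Δ : ℚ) ≠ 0 := by exact_mod_cast hΔ
  have hne : p ^ 5 * q ^ 5 * (p ^ 2 - 11 * p * q - q ^ 2) ≠ 0 := h2 ▸ hΔq
  have hp : p ≠ 0 := by rintro rfl; simp at hne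
  have hq : q ≠ 0 := by rintro rfl; simp at hne
  set r := p / q with hr
  have hr0 : r ≠ 0 := div_ne_zero hp hq
  obtain ⟨a, ha⟩ : ∃ a : ℤ, a = r.num := ⟨_, rfl⟩
  obtain ⟨b, hb⟩ : ∃ b : ℤ, b = (r.den : ℤ) := ⟨_, rfl⟩
  have hcop : IsCoprime a b := by
    rw [ha, hb, Int.isCoprime_iff_gcd_eq_one]
    have := r.reduced
    simpa [Int.gcd] using this
  have ha0 : a ≠ 0 := by rw [ha]; exact Rat.num_ne_zero.mpr hr0
  have hb0 : b ≠ 0 := by rw [hb]; exact_mod_cast r.den_ne_zero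
  have hbq : (b : ℚ) ≠ 0 := by exact_mod_cast hb0
  have hab : r = a / b := by rw [ha, hb]; exact_mod_cast (Rat.num_div_den r).symm
  set u := q / b with hu
  have eq : q = u * b := by rw [hu]; field_simp
  have ep : p = u * a := by
    have : p = r * q := by rw [hr]; field_simp
    rw [this, hab, eq]; field_simp
  have hA : -48 * (A : ℚ) = u ^ 4 * (a ^ 4 - 12 * a ^ 3 * b + 14 * a ^ 2 * b ^ 2 + 12 * a * b ^ 3 + b ^ 4) := by
    rw [h1, ep, eq]; ring
  have hD : (Δ : ℚ) = u ^ 12 * (a ^ 5 * b ^ 5 * (a ^ 2 - 11 * a * b - b ^ 2)) := by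
    rw [h2, ep, eq]; ring
  have hc0 : a ^ 2 - 11 * a * b - b ^ 2 ≠ 0 := by
    intro h
    have : (a ^ 2 - 11 * a * b - b ^ 2 : ℚ) = 0 := by exact_mod_cast h
    rw [this] at hD
    simp at hD
    exact hΔ hD
  refine ⟨a, b, hcop, ha0, hb0, hc0, ?_, ?_⟩
  · intro l hl hdvd
    have hlp : Prime (l : ℤ) := Nat.prime_iff_prime_int.mp hl
    by_cases h5 : l = 5
    · subst h5; exact Dvd.intro _ rfl
    have hcopab : ¬ ((l : ℤ) ∣ a ∧ (l : ℤ) ∣ b) := by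
      rintro ⟨h3, h4⟩
      exact hlp.not_isUnit (hcop.isUnit_of_dvd' h3 h4)
    set f := a ^ 4 - 12 * a ^ 3 * b + 14 * a ^ 2 * b ^ 2 + 12 * a * b ^ 3 + b ^ 4 with hf
    have hlf : ¬ (l : ℤ) ∣ f := by
      intro hlf
      rcases hlp.dvd_or_dvd hdvd with h | h
      · rcases hlp.dvd_or_dvd h with h | h
        · refine hcopab ⟨h, hlp.dvd_of_dvd_pow (n := 4) ?_⟩
          have : b ^ 4 = f - a * (a ^ 3 - 12 * a ^ 2 * b + 14 * a * b ^ 2 + 12 * b ^ 3) := by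
            rw [hf]; ring
          rw [this]
          exact dvd_sub hlf (h.mul_right _)
        · refine hcopab ⟨hlp.dvd_of_dvd_pow (n := 4) ?_, h⟩
          have : a ^ 4 = f - b * (- 12 * a ^ 3 + 14 * a ^ 2 * b + 12 * a * b ^ 2 + b ^ 3) := by
            rw [hf]; ring
          rw [this]
          exact dvd_sub hlf (h.mul_right _)
      · have h1 : (l : ℤ) ∣ 5 * (b ^ 3 * (11 * a + b)) := by
          have : 5 * (b ^ 3 * (11 * a + b)) = f -
            (a ^ 2 - 11 * a * b - b ^ 2) * (a ^ 2 - a * b + 4 * b ^ 2) := by rw [hf]; ring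
          rw [this]
          exact dvd_sub hlf (h.mul_right _)
        have hb' : (l : ℤ) ∣ b → False := by
          intro hb'
          refine hcopab ⟨hlp.dvd_of_dvd_pow (n := 2) ?_, hb'⟩
          have : a ^ 2 = (a ^ 2 - 11 * a * b - b ^ 2) + b * (11 * a + b) := by ring
          rw [this]
          exact dvd_add h (hb'.mul_right _)
        rcases hlp.dvd_or_dvd h1 with h1 | h1
        · have : l ∣ 5 := by exact_mod_cast h1
          exact h5 ((Nat.prime_dvd_prime_iff_eq hl (by norm_num)).mp this)
        rcases hlp.dvd_or_dvd h1 with h1 | h1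
        · exact hb' (hlp.dvd_of_dvd_pow h1)
        · apply hb'
          apply hlp.dvd_of_dvd_pow (n := 2)
          have : b ^ 2 = 121 * (a ^ 2 - 11 * a * b - b ^ 2) - (11 * a + b) * (11 * a - 122 * b) := by ring
          rw [this]
          exact dvd_sub (h.mul_left _) (h1.mul_right _)
    have hden : (u.den : ℚ) ≠ 0 := by exact_mod_cast u.den_ne_zero
    have hun : u = u.num / u.den := (Rat.num_div_den u).symm
    have hld : ¬ (l : ℤ) ∣ u.den := by
      intro hld
      have e1 : (u.den : ℤ) ^ 4 * (-48 * A) = u.num ^ 4 * f := by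
        have : (u.den : ℚ) ^ 4 * (-48 * A) = u.num ^ 4 * f := by
          rw [hA, hf]
          have : (u.num : ℚ) = u * u.den := (Rat.mul_den_eq_num u).symm
          rw [this]; push_cast; ring
        exact_mod_cast this
      have : (l : ℤ) ∣ u.num ^ 4 * f := by
        rw [← e1]; exact (dvd_pow hld (by norm_num)).mul_right _
      rcases hlp.dvd_or_dvd this with h | h
      · have h := hlp.dvd_of_dvd_pow h
        have hc : IsCoprime u.num (u.den : ℤ) := by
          rw [Int.isCoprime_iff_gcd_eq_one]
          have := u.reduced
          simpa [Int.gcd] using this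
        exact hlp.not_isUnit (hc.isUnit_of_dvd' h hld)
      · exact hlf h
    have e2 : (u.den : ℤ) ^ 12 * Δ = u.num ^ 12 * (a ^ 4 * b ^ 4 * (a * b * (a ^ 2 - 11 * a * b - b ^ 2))) := by
      have : (u.den : ℚ) ^ 12 * Δ = u.num ^ 12 * (a ^ 4 * b ^ 4 * (a * b * (a ^ 2 - 11 * a * b - b ^ 2))) := by
        rw [hD]
        have : (u.num : ℚ) = u * u.den := (Rat.mul_den_eq_num u).symm
        rw [this]; ring
      exact_mod_cast this
    have : (l : ℤ) ∣ (u.den : ℤ) ^ 12 * Δ := by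
      rw [e2]; exact (hdvd.mul_left _).mul_left _
    rcases hlp.dvd_or_dvd this with h | h
    · exact absurd (hlp.dvd_of_dvd_pow h) hld
    · exact h.mul_left _
  · have : -48 ^ 3 * (A : ℚ) ^ 3 * (a ^ 5 * b ^ 5 * (a ^ 2 - 11 * a * b - b ^ 2)) =
        Δ * (a ^ 4 - 12 * a ^ 3 * b + 14 * a ^ 2 * b ^ 2 + 12 * a * b ^ 3 + b ^ 4) ^ 3 := by
      have : -48 ^ 3 * (A : ℚ) ^ 3 = (-48 * A) ^ 3 := by ring
      rw [this, hA, hD]; ring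
    exact_mod_cast this
end PartEC

section PartPade
open Finset

/-- Hermite-Pade polynomial with integer coefficients -/
def pd {R : Type*} [CommRing R] (N : ℕ) (x z : R) : R :=
  ∑ k ∈ range (N + 1), (((N + k).choose k * (3 * N + 1).choose (N - k) : ℕ) : R) * x ^ k * z ^ (N - k)

lemma pd_map {R S : Type*} [CommRing R] [CommRing S] (f : R →+* S) (N : ℕ) (x z : R) :
    f (pd N x z) = pd N (f x) (f z) := by
  simp [pd, map_sum]

lemma beta_nat (j : ℕ) : ∀ i : ℕ, ∫ u in (0:ℝ)..1, u ^ i * (1 - u) ^ j =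
    (i.factorial * j.factorial : ℝ) / ((i + j + 1).factorial : ℝ) := by
  induction j with
  | zero =>
    intro i
    simp [Nat.factorial_succ]
    have : (i.factorial : ℝ) ≠ 0 := by exact_mod_cast i.factorial_ne_zero
    field_simp
  | succ j ih =>
    intro i
    have hder : ∀ u : ℝ, HasDerivAt (fun u : ℝ => u ^ (i + 1) * (1 - u) ^ (j + 1))
        ((i + 1) * (u ^ i * (1 - u) ^ (j + 1)) - (j + 1) * (u ^ (i + 1) * (1 - u) ^ j)) u := by
      intro u
      have h1 := hasDerivAt_pow (i + 1) u
      have h2 : HasDerivAt (fun u : ℝ => (1 - u) ^ (j + 1)) _ u :=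
        ((hasDerivAt_id u).const_sub 1).pow (j + 1)
      refine (h1.mul h2).congr_deriv ?_
      have e1 : i + 1 - 1 = i := rfl
      have e2 : j + 1 - 1 = j := rfl
      rw [e1, e2]
      push_cast
      simp only [id]
      ring
    have hIn := intervalIntegral.integral_eq_sub_of_hasDerivAt (a := 0) (b := 1)
      (fun u _ => hder u) (by apply Continuous.intervalIntegrable; fun_prop)
    rw [intervalIntegral.integral_sub (by apply Continuous.intervalIntegrable; fun_prop)
      (by apply Continuous.intervalIntegrable; fun_prop),
      intervalIntegral.integral_const_mul, intervalIntegral.integral_const_mul, ih (i + 1)] at hIn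
    simp at hIn
    have h3 : ((i : ℝ) + 1) ≠ 0 := by positivity
    have e : i + 1 + j + 1 = i + (j + 1) + 1 := by ring
    rw [e] at hIn
    have h4 : ((i + (j + 1) + 1).factorial : ℝ) ≠ 0 := by exact_mod_cast Nat.factorial_ne_zero _
    have h5 : ∫ u in (0:ℝ)..1, u ^ i * (1 - u) ^ (j + 1) =
      ((j + 1) * (((i + 1).factorial * j.factorial : ℝ) / ((i + (j + 1) + 1).factorial : ℝ))) / (i + 1) := by
      field_simp
      field_simp at hIn
      linarith
    rw [h5, Nat.factorial_succ i, Nat.factorial_succ j]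
    push_cast
    field_simp

lemma pd_integral (N : ℕ) (x z : ℝ) :
    pd N x z = ((3 * N + 1).factorial : ℝ) / (N.factorial : ℝ) ^ 3 *
      ∫ u in (0:ℝ)..1, u ^ N * (1 - u) ^ N * (z + x * u) ^ N := by
  have h : ∀ u : ℝ, u ^ N * (1 - u) ^ N * (z + x * u) ^ N =
      ∑ k ∈ range (N + 1), (x ^ k * z ^ (N - k) * (N.choose k : ℝ)) * (u ^ (N + k) * (1 - u) ^ N) := by
    intro u
    rw [add_comm z, add_pow, mul_sum]
    refine sum_congr rfl fun k _ => ?_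
    ring
  simp_rw [h]
  rw [intervalIntegral.integral_finsetSum
    (fun k _ => by apply Continuous.intervalIntegrable; fun_prop), mul_sum, pd]
  refine sum_congr rfl fun k hk => ?_
  rw [intervalIntegral.integral_const_mul, beta_nat]
  have hk' : k ≤ N := by simpa [Nat.lt_succ_iff] using hk
  push_cast
  rw [Nat.cast_choose ℝ (show k ≤ N + k by omega), Nat.cast_choose ℝ (show N - k ≤ 3 * N + 1 by omega),
    Nat.cast_choose ℝ hk']
  have e1 : N + k - k = N := by omega
  have e2 : 3 * N + 1 - (N - k) = N + k + N + 1 := by omega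
  rw [e1, e2]
  have f1 : (N.factorial : ℝ) ≠ 0 := by exact_mod_cast Nat.factorial_ne_zero _
  have f2 : (k.factorial : ℝ) ≠ 0 := by exact_mod_cast Nat.factorial_ne_zero _
  have f3 : ((N - k).factorial : ℝ) ≠ 0 := by exact_mod_cast Nat.factorial_ne_zero _
  have f4 : ((N + k + N + 1).factorial : ℝ) ≠ 0 := by exact_mod_cast Nat.factorial_ne_zero _
  field_simp

lemma pd_identity (N : ℕ) (x y z : ℝ) (h : x + y + z = 0) :
    x ^ (2 * N + 1) * pd N x z + y ^ (2 * N + 1) * pd N y x + z ^ (2 * N + 1) * pd N z y = 0 := by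
  have key : ∀ x y z : ℝ, ∀ d : ℝ, x + y + z = 0 → x * ∫ u in (0:ℝ)..1,
      ((fun t : ℝ => ((t - d) * (t - d - x) * (t - d + z)) ^ N) (d + x * u)) = (-1) ^ N * x ^ (2 * N + 1) *
        ∫ u in (0:ℝ)..1, u ^ N * (1 - u) ^ N * (z + x * u) ^ N := by
    intro x y z d _
    rw [← intervalIntegral.integral_const_mul, ← intervalIntegral.integral_const_mul]
    refine intervalIntegral.integral_congr fun u _ => ?_
    simp only
    have : (d + x * u - d) * (d + x * u - d - x) * (d + x * u - d + z) =
      (-1) * x ^ 2 * (u * (1 - u) * (z + x * u)) := by ring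
    rw [this, mul_pow, mul_pow, mul_pow, mul_pow]
    ring
  have k1 := key x y z 0 h
  have k2 := key y z x x (by linarith)
  have k3 := key z x y (x + y) (by linarith)
  have s1 : ∀ d x z : ℝ, x * ∫ u in (0:ℝ)..1,
      ((fun t : ℝ => ((t - d) * (t - d - x) * (t - d + z)) ^ N) (d + x * u)) =
      ∫ t in d..(d + x), ((t - d) * (t - d - x) * (t - d + z)) ^ N := by
    intro d x z
    have := intervalIntegral.mul_integral_comp_add_mul (a := 0) (b := 1)
      (f := fun t : ℝ => ((t - d) * (t - d - x) * (t - d + z)) ^ N) x d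
    rw [this]; simp
  rw [s1] at k1 k2 k3
  have hz : x + y + z = 0 := h
  obtain rfl : z = -(x + y) := by linarith
  have c1 : ∀ t : ℝ, ((t - 0) * (t - 0 - x) * (t - 0 + -(x + y))) ^ N = (t * (t - x) * (t - (x + y))) ^ N := by
    intro t; ring
  have c2 : ∀ t : ℝ, ((t - x) * (t - x - y) * (t - x + x)) ^ N = (t * (t - x) * (t - (x + y))) ^ N := by
    intro t; congr 1; ring
  have c3 : ∀ t : ℝ, ((t - (x + y)) * (t - (x + y) - -(x + y)) * (t - (x + y) + y)) ^ N =
      (t * (t - x) * (t - (x + y))) ^ N := by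
    intro t; congr 1; ring
  simp_rw [c1] at k1
  simp_rw [c2] at k2
  simp_rw [c3] at k3
  have hsum : (∫ t in (0:ℝ)..(0 + x), (t * (t - x) * (t - (x + y))) ^ N) +
      (∫ t in x..(x + y), (t * (t - x) * (t - (x + y))) ^ N) +
      (∫ t in (x + y)..(x + y + -(x + y)), (t * (t - x) * (t - (x + y))) ^ N) = 0 := by
    have ii : ∀ a b : ℝ, IntervalIntegrable (fun t : ℝ => (t * (t - x) * (t - (x + y))) ^ N)
        MeasureTheory.volume a b := by
      intro a b; apply Continuous.intervalIntegrable; fun_prop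
    rw [zero_add, intervalIntegral.integral_add_adjacent_intervals (ii _ _) (ii _ _),
      intervalIntegral.integral_add_adjacent_intervals (ii _ _) (ii _ _)]
    simp
  rw [k1, k2, k3] at hsum
  rw [pd_integral, pd_integral, pd_integral]
  have hs : ((-1 : ℝ) ^ N) * (-1) ^ N = 1 := by rw [← mul_pow]; simp
  linear_combination ((3 * N + 1).factorial : ℝ) / (N.factorial : ℝ) ^ 3 * (-1) ^ N * hsum -
    ((3 * N + 1).factorial : ℝ) / (N.factorial : ℝ) ^ 3 * (x ^ (2 * N + 1) * (∫ u in (0:ℝ)..1, u ^ N * (1 - u) ^ N * (-(x + y) + x * u) ^ N)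
     + y ^ (2 * N + 1) * (∫ u in (0:ℝ)..1, u ^ N * (1 - u) ^ N * (x + y * u) ^ N)
     + (-(x + y)) ^ (2 * N + 1) * (∫ u in (0:ℝ)..1, u ^ N * (1 - u) ^ N * (y + -(x + y) * u) ^ N)) * hs

lemma pd_symm (N : ℕ) (x y z : ℝ) (h : x + y + z = 0) : pd N x z = (-1) ^ N * pd N x y := by
  rw [pd_integral, pd_integral]
  have := intervalIntegral.integral_comp_sub_left (a := 0) (b := 1)
    (fun u : ℝ => u ^ N * (1 - u) ^ N * (z + x * u) ^ N) 1
  simp only [sub_self, sub_zero] at this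
  rw [← this]
  have : ∀ u : ℝ, (1 - u) ^ N * (1 - (1 - u)) ^ N * (z + x * (1 - u)) ^ N =
      (-1) ^ N * (u ^ N * (1 - u) ^ N * (y + x * u) ^ N) := by
    intro u
    have : z + x * (1 - u) = (-1) * (y + x * u) := by linarith
    rw [this, mul_pow]; ring
  simp_rw [this]
  rw [intervalIntegral.integral_const_mul]
  ring

lemma pd_pos (N : ℕ) (x y : ℝ) (hx : 0 < x) (hy : 0 < y) : 0 < pd N x y := by
  unfold pd
  refine sum_pos (fun k hk => ?_) ⟨0, by simp⟩
  have h1 : 0 < (N + k).choose k := Nat.choose_pos (by omega)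
  have h2 : 0 < (3 * N + 1).choose (N - k) := Nat.choose_pos (by omega)
  have : (0:ℝ) < ((N + k).choose k * (3 * N + 1).choose (N - k) : ℕ) := by exact_mod_cast Nat.mul_pos h1 h2
  positivity

lemma pd_neg (N : ℕ) (x y : ℝ) : pd N (-x) (-y) = (-1) ^ N * pd N x y := by
  unfold pd
  rw [mul_sum]
  refine sum_congr rfl fun k hk => ?_
  have hk' : k ≤ N := by simpa [Nat.lt_succ_iff] using hk
  have : ((-1 : ℝ)) ^ N = (-1) ^ k * (-1) ^ (N - k) := by rw [← pow_add]; congr 1; omega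
  rw [neg_pow x, neg_pow y, this]; ring

lemma pd_sign (N : ℕ) (hN : Odd N) (x y z : ℝ) (h : x + y + z = 0) (hxy : 0 < x * y) :
    (x ^ (2 * N + 1) * pd N x z) * (y ^ (2 * N + 1) * pd N y x) < 0 := by
  rw [pd_symm N x y z h, hN.neg_one_pow]
  have hpp : 0 < pd N x y * pd N y x := by
    rcases pos_and_pos_or_neg_and_neg_of_mul_pos hxy with ⟨hx, hy⟩ | ⟨hx, hy⟩
    · exact mul_pos (pd_pos N x y hx hy) (pd_pos N y x hy hx)
    · have h1 := pd_pos N (-x) (-y) (by linarith) (by linarith)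
      have h2 := pd_pos N (-y) (-x) (by linarith) (by linarith)
      rw [pd_neg, hN.neg_one_pow] at h1 h2
      nlinarith
  have := mul_pos (pow_pos hxy (2 * N + 1)) hpp
  rw [mul_pow] at this
  nlinarith

lemma pd_bound (N : ℕ) (x z M : ℝ) (hx : |x| ≤ M) (hz : |z| ≤ M) :
    |pd N x z| ≤ 2 ^ (6 * N + 1) * M ^ N := by
  have hM : 0 ≤ M := (abs_nonneg x).trans hx
  unfold pd
  refine (abs_sum_le_sum_abs _ _).trans ?_
  have : ∀ k ∈ range (N + 1), |(((N + k).choose k * (3 * N + 1).choose (N - k) : ℕ) : ℝ) * x ^ k * z ^ (N - k)|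
      ≤ 2 ^ (5 * N + 1) * M ^ N := by
    intro k hk
    have hk' : k ≤ N := by simpa [Nat.lt_succ_iff] using hk
    rw [abs_mul, abs_mul, abs_pow, abs_pow, Nat.abs_cast]
    have h1 : (N + k).choose k * (3 * N + 1).choose (N - k) ≤ 2 ^ (5 * N + 1) := by
      calc _ ≤ 2 ^ (N + k) * 2 ^ (3 * N + 1) := Nat.mul_le_mul (Nat.choose_le_two_pow _ _) (Nat.choose_le_two_pow _ _)
        _ = 2 ^ (N + k + (3 * N + 1)) := (pow_add _ _ _).symm
        _ ≤ _ := Nat.pow_le_pow_right (by norm_num) (by omega)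
    have h1' : (((N + k).choose k * (3 * N + 1).choose (N - k) : ℕ) : ℝ) ≤ 2 ^ (5 * N + 1) := by exact_mod_cast h1
    have h2 : M ^ N = M ^ k * M ^ (N - k) := by rw [← pow_add]; congr 1; omega
    rw [h2, mul_assoc]
    have := pow_le_pow_left₀ (abs_nonneg x) hx k
    have := pow_le_pow_left₀ (abs_nonneg z) hz (N - k)
    gcongr
  refine (sum_le_card_nsmul _ _ _ this).trans ?_
  rw [card_range, nsmul_eq_mul, ← mul_assoc]
  refine mul_le_mul_of_nonneg_right ?_ (by positivity)
  have : ((N + 1 : ℕ) : ℝ) ≤ 2 ^ N := by exact_mod_cast Nat.lt_two_pow_self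
  calc _ ≤ (2:ℝ) ^ N * 2 ^ (5 * N + 1) := by gcongr
    _ = _ := by rw [← pow_add]; congr 1; ring
end PartPade

section PartArith
open Finset

/-- the quadratic form -/
def cc (a b : ℤ) : ℤ := a ^ 2 - 11 * a * b - b ^ 2

/-- the ring generated by a root of z^2 = 11 z + 1 -/
abbrev K5 := QuadraticAlgebra ℤ 1 11

/-- evaluation at a root -/
def evr {T : Type*} [CommRing T] (ρ : T) (h : ρ * ρ = 1 + 11 * ρ) : K5 →+* T where
  toFun z := (z.re : T) + (z.im : T) * ρ
  map_one' := by simp [QuadraticAlgebra.re_one, QuadraticAlgebra.im_one]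
  map_zero' := by simp
  map_add' x y := by simp; ring
  map_mul' x y := by
    simp
    linear_combination (-(x.im : T) * y.im) * h

lemma evr_norm {T : Type*} [CommRing T] (ρ ρt : T) (h : ρ * ρ = 1 + 11 * ρ) (h' : ρt * ρt = 1 + 11 * ρt)
    (hs : ρ + ρt = 11) (z : K5) : evr ρ h z * evr ρt h' z = ((QuadraticAlgebra.norm z : ℤ) : T) := by
  obtain rfl : ρt = 11 - ρ := by linear_combination hs
  simp only [evr, RingHom.coe_mk, MonoidHom.coe_mk, OneHom.coe_mk, QuadraticAlgebra.norm_def]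
  push_cast
  linear_combination (-(z.im : T) ^ 2) * h

/-- the solution triple -/
def xv {T : Type*} [CommRing T] (ρ : T) (a b : ℤ) : Fin 3 → T := ![(a : T), -(ρ * b), ρ * b - a]

lemma xv_sum {T : Type*} [CommRing T] (ρ : T) (a b : ℤ) : xv ρ a b 0 + xv ρ a b 1 + xv ρ a b 2 = 0 := by
  simp [xv]
  ring

lemma xv_map {T : Type*} [CommRing T] (ρ : T) (h : ρ * ρ = 1 + 11 * ρ) (a b : ℤ) (i : Fin 3) :
    evr ρ h (xv QuadraticAlgebra.omega a b i) = xv ρ a b i := by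
  have : evr ρ h QuadraticAlgebra.omega = ρ := by simp [evr]
  fin_cases i <;> simp [xv, this]

/-- the Pade triple -/
def II {T : Type*} [CommRing T] (N : ℕ) (x : Fin 3 → T) (i : Fin 3) : T :=
  x i ^ (2 * N + 1) * pd N (x i) (x (i + 2))

/-- the determinant -/
def DD {T : Type*} [CommRing T] (N : ℕ) (x y : Fin 3 → T) : T := y 0 * II N x 1 - y 1 * II N x 0

lemma II_map {R S : Type*} [CommRing R] [CommRing S] (f : R →+* S) (N : ℕ) (x : Fin 3 → R) (x' : Fin 3 → S)
    (hx : ∀ i, f (x i) = x' i) (i : Fin 3) : f (II N x i) = II N x' i := by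
  simp [II, pd_map, hx]

lemma DD_map {R S : Type*} [CommRing R] [CommRing S] (f : R →+* S) (N : ℕ) (x y : Fin 3 → R) (x' y' : Fin 3 → S)
    (hx : ∀ i, f (x i) = x' i) (hy : ∀ i, f (y i) = y' i) : f (DD N x y) = DD N x' y' := by
  simp [DD, II_map f N x x' hx, hy]

lemma DD_cyc {T : Type*} [CommRing T] (N : ℕ) (x y : Fin 3 → T) (hI : II N x 0 + II N x 1 + II N x 2 = 0)
    (hy : y 0 + y 1 + y 2 = 0) (i : Fin 3) : DD N x y = y i * II N x (i + 1) - y (i + 1) * II N x i := by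
  unfold DD
  fin_cases i
  · simp
  · show _ = y 1 * II N x 2 - y 2 * II N x 1
    linear_combination (-y 1) * hI + (II N x 1) * hy
  · show _ = y 2 * II N x 0 - y 0 * II N x 2
    linear_combination (y 0) * hI - (II N x 0) * hy

lemma II_real (N : ℕ) (x : Fin 3 → ℝ) (hx : x 0 + x 1 + x 2 = 0) : II N x 0 + II N x 1 + II N x 2 = 0 :=
  pd_identity N (x 0) (x 1) (x 2) hx

/-- first real root -/
noncomputable def r1 : ℝ := (11 + 5 * √5) / 2
/-- second real root -/
noncomputable def r2 : ℝ := (11 - 5 * √5) / 2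
lemma s5 : √(5:ℝ) * √5 = 5 := Real.mul_self_sqrt (by norm_num)
lemma r1_root : r1 * r1 = 1 + 11 * r1 := by unfold r1; linear_combination (25 / 4) * s5
lemma r2_root : r2 * r2 = 1 + 11 * r2 := by unfold r2; linear_combination (25 / 4) * s5
lemma r12 : r1 + r2 = 11 := by unfold r1 r2; ring
lemma r1r2 : r1 * r2 = -1 := by unfold r1 r2; linear_combination (-25 / 4) * s5

lemma K5_zero (z : K5) (h1 : evr r1 r1_root z = 0) (h2 : evr r2 r2_root z = 0) : z = 0 := by
  simp only [evr, RingHom.coe_mk, MonoidHom.coe_mk, OneHom.coe_mk] at h1 h2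
  have h5 : (0:ℝ) < √5 := by positivity
  have h3 : (z.im : ℝ) * (5 * √5) = 0 := by
    unfold r1 at h1; unfold r2 at h2; linear_combination h1 - h2
  have h4 : (z.im : ℝ) = 0 := by
    rcases mul_eq_zero.mp h3 with h | h
    · exact h
    · exfalso; linarith
  rw [h4] at h1
  have h6 : (z.re : ℝ) = 0 := by linarith
  ext
  · exact_mod_cast h6
  · exact_mod_cast h4

lemma II_K5 (N : ℕ) (a b : ℤ) :
    II N (xv (QuadraticAlgebra.omega : K5) a b) 0 + II N (xv (QuadraticAlgebra.omega : K5) a b) 1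
      + II N (xv (QuadraticAlgebra.omega : K5) a b) 2 = 0 := by
  apply K5_zero
  · rw [map_add, map_add, II_map _ N _ (xv r1 a b) (xv_map _ _ a b), II_map _ N _ (xv r1 a b) (xv_map _ _ a b),
      II_map _ N _ (xv r1 a b) (xv_map _ _ a b)]
    exact II_real N _ (xv_sum _ a b)
  · rw [map_add, map_add, II_map _ N _ (xv r2 a b) (xv_map _ _ a b), II_map _ N _ (xv r2 a b) (xv_map _ _ a b),
      II_map _ N _ (xv r2 a b) (xv_map _ _ a b)]
    exact II_real N _ (xv_sum _ a b)

/-- integer norm of the determinant -/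
noncomputable def ND (N : ℕ) (a b A B : ℤ) : ℤ :=
  QuadraticAlgebra.norm (DD N (xv (QuadraticAlgebra.omega : K5) a b) (xv QuadraticAlgebra.omega A B))

lemma ND_ring {T : Type*} [CommRing T] (ρ ρt : T) (h : ρ * ρ = 1 + 11 * ρ) (h' : ρt * ρt = 1 + 11 * ρt)
    (hs : ρ + ρt = 11) (N : ℕ) (a b A B : ℤ) :
    (ND N a b A B : T) = DD N (xv ρ a b) (xv ρ A B) * DD N (xv ρt a b) (xv ρt A B) := by
  rw [ND, ← evr_norm ρ ρt h h' hs, DD_map _ N _ _ (xv ρ a b) (xv ρ A B) (xv_map _ _ a b) (xv_map _ _ A B),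
    DD_map _ N _ _ (xv ρt a b) (xv ρt A B) (xv_map _ _ a b) (xv_map _ _ A B)]

lemma ND_dvd_int (N : ℕ) (a b A B d : ℤ) (i : Fin 3)
    (h1 : (d : K5) ∣ xv QuadraticAlgebra.omega A B i)
    (h2 : (d : K5) ∣ xv QuadraticAlgebra.omega a b i ^ (2 * N + 1)) : d ^ 2 ∣ ND N a b A B := by
  have : (d : K5) ∣ DD N (xv (QuadraticAlgebra.omega : K5) a b) (xv QuadraticAlgebra.omega A B) := by
    rw [DD_cyc N _ _ (II_K5 N a b) (xv_sum _ A B) i]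
    exact dvd_sub (h1.mul_right _) ((h2.mul_right _).mul_left _)
  have := map_dvd (QuadraticAlgebra.norm (R := ℤ) (a := 1) (b := 11)) this
  rw [QuadraticAlgebra.norm_intCast] at this
  exact_mod_cast this

lemma ND_dvd_padic (p : ℕ) [Fact p.Prime] (ρ : ℤ_[p]) (h : ρ * ρ = 1 + 11 * ρ) (N k : ℕ) (a b A B : ℤ)
    (h1 : (p : ℤ_[p]) ^ k ∣ (A : ℤ_[p]) - ρ * B) (h2 : (p : ℤ_[p]) ^ k ∣ ((a : ℤ_[p]) - ρ * b) ^ (2 * N + 1)) :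
    (p : ℤ) ^ k ∣ ND N a b A B := by
  rw [← PadicInt.pow_p_dvd_int_iff]
  have e := ND_ring ρ (11 - ρ) h (by linear_combination h) (by ring) N a b A B
  rw [e]
  apply Dvd.dvd.mul_right
  have hI : II N (xv ρ a b) 0 + II N (xv ρ a b) 1 + II N (xv ρ a b) 2 = 0 := by
    have := congrArg (evr ρ h) (II_K5 N a b)
    rwa [map_add, map_add, II_map _ N _ (xv ρ a b) (xv_map _ _ a b), II_map _ N _ (xv ρ a b) (xv_map _ _ a b),
      II_map _ N _ (xv ρ a b) (xv_map _ _ a b), map_zero] at this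
  rw [DD_cyc N _ _ hI (xv_sum _ A B) 2]
  have e1 : ∀ a b : ℤ, xv ρ a b 2 = -((a : ℤ_[p]) - ρ * b) := by intro a b; simp [xv]
  refine dvd_sub (Dvd.dvd.mul_right ?_ _) (Dvd.dvd.mul_left ?_ _)
  · rw [e1]; exact h1.neg_right
  · unfold II
    apply Dvd.dvd.mul_right
    rw [e1, Odd.neg_pow ⟨N, rfl⟩]; exact h2.neg_right

lemma hensel5 (p : ℕ) [hp : Fact p.Prime] (hp5 : p ≠ 5) (a b : ℤ) (hb : ¬ (p : ℤ) ∣ b) (hc : (p : ℤ) ∣ cc a b) :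
    ∃ ρ : ℤ_[p], ρ * ρ = 1 + 11 * ρ ∧ (p : ℤ_[p]) ∣ (a : ℤ_[p]) - ρ * b := by
  have hpp : Prime (p : ℤ_[p]) := PadicInt.prime_p
  have hlp : Prime (p : ℤ) := Nat.prime_iff_prime_int.mp hp.1
  have hcast : ∀ n : ℤ, (p : ℤ_[p]) ∣ (n : ℤ_[p]) ↔ (p : ℤ) ∣ n := by
    intro n; simpa using PadicInt.pow_p_dvd_int_iff 1 n
  have hnorm : ∀ z : ℤ_[p], (p : ℤ_[p]) ∣ z ↔ ‖z‖ < 1 := by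
    intro z; exact (PadicInt.norm_lt_one_iff_dvd z).symm
  have hbu : IsUnit (b : ℤ_[p]) := by
    rw [PadicInt.isUnit_iff]
    have : ¬ ‖(b : ℤ_[p])‖ < 1 := by rw [← hnorm, hcast]; exact hb
    exact le_antisymm (PadicInt.norm_le_one _) (not_lt.mp this)
  obtain ⟨β, hβ⟩ := hbu.exists_right_inv
  set z0 : ℤ_[p] := a * β with hz0
  have h1 : z0 * b = a := by rw [hz0]; linear_combination (a : ℤ_[p]) * hβ
  let F : Polynomial ℤ_[p] := Polynomial.X ^ 2 - 11 * Polynomial.X - 1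
  have hF : ∀ z : ℤ_[p], F.aeval z = z ^ 2 - 11 * z - 1 := by intro z; simp [F]
  have hF' : ∀ z : ℤ_[p], F.derivative.aeval z = 2 * z - 11 := by
    intro z
    have : F.derivative = 2 * Polynomial.X - 11 := by
      simp [F, Polynomial.derivative_mul]
      norm_num
    rw [this]; simp
  have hd1 : (p : ℤ_[p]) ∣ z0 ^ 2 - 11 * z0 - 1 := by
    have e : z0 ^ 2 - 11 * z0 - 1 = ((cc a b : ℤ) : ℤ_[p]) * β ^ 2 := by
      unfold cc; push_cast
      rw [hz0]
      linear_combination (11 * a * β + (b : ℤ_[p]) * β + 1) * hβ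
    rw [e]; exact ((hcast _).mpr hc).mul_right _
  have hd2 : ¬ (p : ℤ_[p]) ∣ 2 * z0 - 11 := by
    intro h
    have h3 : (p : ℤ_[p]) ∣ ((125 : ℤ) : ℤ_[p]) := by
      have : ((125 : ℤ) : ℤ_[p]) = (2 * z0 - 11) * (2 * z0 - 11) - 4 * (z0 ^ 2 - 11 * z0 - 1) := by
        push_cast; ring
      rw [this]; exact dvd_sub (h.mul_right _) (hd1.mul_left _)
    rw [hcast] at h3
    have h4 : p ∣ 5 ^ 3 := by exact_mod_cast h3
    exact hp5 ((Nat.prime_dvd_prime_iff_eq hp.1 (by norm_num)).mp (hp.1.dvd_of_dvd_pow h4))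
  have hn2 : ‖F.derivative.aeval z0‖ = 1 := by
    rw [hF']
    rw [hnorm] at hd2
    exact le_antisymm (PadicInt.norm_le_one _) (not_lt.mp hd2)
  have hn1 : ‖F.aeval z0‖ < ‖F.derivative.aeval z0‖ ^ 2 := by
    rw [hn2, hF]; rw [hnorm] at hd1; simpa using hd1
  obtain ⟨z, hz1, hz2, -⟩ := hensels_lemma hn1
  rw [hF] at hz1
  rw [hn2, ← hnorm] at hz2
  refine ⟨z, by linear_combination hz1, ?_⟩
  have : (a : ℤ_[p]) - z * b = -((z - z0) * b) := by linear_combination -h1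
  rw [this]; exact (hz2.mul_right _).neg_right

lemma root_dvd (p : ℕ) [hp : Fact p.Prime] (hp5 : p ≠ 5) (a b : ℤ) (hb : ¬ (p : ℤ) ∣ b) (ρ : ℤ_[p])
    (hρ : ρ * ρ = 1 + 11 * ρ) (hd : (p : ℤ_[p]) ∣ (a : ℤ_[p]) - ρ * b) (k : ℕ) (hk : (p : ℤ) ^ k ∣ cc a b) :
    (p : ℤ_[p]) ^ k ∣ (a : ℤ_[p]) - ρ * b := by
  have hpp : Prime (p : ℤ_[p]) := PadicInt.prime_p
  have hcast : ∀ n : ℤ, (p : ℤ_[p]) ∣ (n : ℤ_[p]) ↔ (p : ℤ) ∣ n := by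
    intro n; simpa using PadicInt.pow_p_dvd_int_iff 1 n
  have hu : ¬ (p : ℤ_[p]) ∣ (a : ℤ_[p]) - (11 - ρ) * b := by
    intro h
    have h1 : (p : ℤ_[p]) ∣ (11 - 2 * ρ) * b := by
      have : (11 - 2 * ρ) * b = ((a : ℤ_[p]) - ρ * b) - ((a : ℤ_[p]) - (11 - ρ) * b) := by ring
      rw [this]; exact dvd_sub hd h
    rcases hpp.dvd_or_dvd h1 with h2 | h2
    · have h3 : (p : ℤ_[p]) ∣ ((125 : ℤ) : ℤ_[p]) := by
        have : ((125 : ℤ) : ℤ_[p]) = (11 - 2 * ρ) * (11 - 2 * ρ) := by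
          push_cast; linear_combination (-4) * hρ
        rw [this]; exact h2.mul_right _
      rw [hcast] at h3
      have h4 : p ∣ 5 ^ 3 := by exact_mod_cast h3
      exact hp5 ((Nat.prime_dvd_prime_iff_eq hp.1 (by norm_num)).mp (hp.1.dvd_of_dvd_pow h4))
    · exact hb ((hcast _).mp h2)
  have e : ((cc a b : ℤ) : ℤ_[p]) = ((a : ℤ_[p]) - ρ * b) * ((a : ℤ_[p]) - (11 - ρ) * b) := by
    unfold cc; push_cast; linear_combination ((b : ℤ_[p]) ^ 2) * hρ
  have h5 : (p : ℤ_[p]) ^ k ∣ ((cc a b : ℤ) : ℤ_[p]) := (PadicInt.pow_p_dvd_int_iff k _).mpr hk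
  rw [e] at h5
  exact hpp.pow_dvd_of_dvd_mul_right k hu h5
end PartArith

section PartLoc
open Finset

/-- p-adic valuation of an integer -/
def vp (p : ℕ) (n : ℤ) : ℕ := n.natAbs.factorization p

lemma vp_dvd (p : ℕ) (n : ℤ) : (p : ℤ) ^ vp p n ∣ n := by
  have := Nat.ordProj_dvd n.natAbs p
  rw [← Int.natCast_dvd_natCast, Int.dvd_natAbs] at this
  exact_mod_cast this

lemma vp_zero (p : ℕ) (n : ℤ) (h : ¬ (p : ℤ) ∣ n) : vp p n = 0 := by
  apply Nat.factorization_eq_zero_of_not_dvd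
  rwa [← Int.natCast_dvd_natCast, Int.dvd_natAbs]

/-- exponent of p attached to a solution -/
def kp (p : ℕ) (a b : ℤ) : ℕ := 2 * vp p a + 2 * vp p b + if p = 5 then 0 else vp p (cc a b)

open Classical in
/-- a chosen root mod p -/
noncomputable def rp (p : ℕ) : ℤ := if h : ∃ r : ℤ, (p : ℤ) ∣ r ^ 2 - 11 * r - 1 then h.choose else 0

open Classical in
/-- type of a solution at p -/
noncomputable def ty (p : ℕ) (a b : ℤ) : Fin 4 :=
  if (p : ℤ) ∣ a then 0 else if (p : ℤ) ∣ b then 1 else if (p : ℤ) ∣ a - rp p * b then 2 else 3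

lemma rp_spec (p : ℕ) (hp : p.Prime) (a b : ℤ) (hb : ¬ (p : ℤ) ∣ b) (hc : (p : ℤ) ∣ cc a b) :
    (p : ℤ) ∣ a - rp p * b ∨ (p : ℤ) ∣ a - (11 - rp p) * b := by
  have hlp : Prime (p : ℤ) := Nat.prime_iff_prime_int.mp hp
  have hex : ∃ r : ℤ, (p : ℤ) ∣ r ^ 2 - 11 * r - 1 := by
    have hcop : IsCoprime (p : ℤ) b := (Prime.coprime_iff_not_dvd hlp).mpr hb
    obtain ⟨u, v, huv⟩ := hcop
    refine ⟨a * v, ?_⟩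
    have e : (a * v) ^ 2 - 11 * (a * v) - 1 = v ^ 2 * cc a b + (p : ℤ) * (-u * (11 * a * v + v * b + 1)) := by
      unfold cc
      linear_combination (11 * a * v + v * b + 1) * huv
    rw [e]
    exact dvd_add (hc.mul_left _) (Dvd.intro _ rfl)
  have hr : (p : ℤ) ∣ rp p ^ 2 - 11 * rp p - 1 := by
    unfold rp; rw [dif_pos hex]; exact hex.choose_spec
  apply hlp.dvd_or_dvd
  have e : (a - rp p * b) * (a - (11 - rp p) * b) = cc a b - b ^ 2 * (rp p ^ 2 - 11 * rp p - 1) := by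
    unfold cc; ring
  rw [e]
  exact dvd_sub hc (hr.mul_left _)

lemma ty_cross (p : ℕ) (hp : p.Prime) (a b A B : ℤ) (ha : ¬ (p : ℤ) ∣ a) (hb : ¬ (p : ℤ) ∣ b)
    (hA : ¬ (p : ℤ) ∣ A) (hB : ¬ (p : ℤ) ∣ B)
    (hc : (p : ℤ) ∣ cc a b) (hC : (p : ℤ) ∣ cc A B) (ht : ty p a b = ty p A B) :
    (p : ℤ) ∣ A * b - a * B := by
  unfold ty at ht
  rw [if_neg ha, if_neg hb, if_neg hA, if_neg hB] at ht
  have h1 := rp_spec p hp a b hb hc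
  have h2 := rp_spec p hp A B hB hC
  by_cases h3 : (p : ℤ) ∣ a - rp p * b
  · have h4 : (p : ℤ) ∣ A - rp p * B := by
      by_contra h4
      rw [if_pos h3, if_neg h4] at ht
      exact absurd ht (by decide)
    have : A * b - a * B = (A - rp p * B) * b - (a - rp p * b) * B := by ring
    rw [this]
    exact dvd_sub (h4.mul_right _) (h3.mul_right _)
  · have h4 : ¬ (p : ℤ) ∣ A - rp p * B := by
      intro h4
      rw [if_neg h3, if_pos h4] at ht
      exact absurd ht (by decide)
    have h1 := h1.resolve_left h3
    have h2 := h2.resolve_left h4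
    have : A * b - a * B = (A - (11 - rp p) * B) * b - (a - (11 - rp p) * b) * B := by ring
    rw [this]
    exact dvd_sub (h2.mul_right _) (h1.mul_right _)

lemma local_dvd (p : ℕ) (hp : p.Prime) (N : ℕ) (a b A B : ℤ) (hab : IsCoprime a b) (hAB : IsCoprime A B)
    (ht : ty p a b = ty p A B) :
    (p : ℤ) ^ (min (kp p A B) ((2 * N + 1) * kp p a b)) ∣ ND N a b A B := by
  have hlp : Prime (p : ℤ) := Nat.prime_iff_prime_int.mp hp
  have hcop : ∀ a b : ℤ, IsCoprime a b → ¬ ((p : ℤ) ∣ a ∧ (p : ℤ) ∣ b) := by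
    rintro a b h ⟨h3, h4⟩
    exact hlp.not_isUnit (h.isUnit_of_dvd' h3 h4)
  have hca : ∀ a b : ℤ, IsCoprime a b → (p : ℤ) ∣ a → kp p a b = 2 * vp p a := by
    intro a b h ha
    have hb : ¬ (p : ℤ) ∣ b := fun hb => hcop a b h ⟨ha, hb⟩
    have hc : ¬ (p : ℤ) ∣ cc a b := by
      intro hc
      apply hb
      apply hlp.dvd_of_dvd_pow (n := 2)
      have : b ^ 2 = a * (a - 11 * b) - cc a b := by unfold cc; ring
      rw [this]; exact dvd_sub (ha.mul_right _) hc
    simp [kp, vp_zero p b hb, vp_zero p _ hc]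
  have hcb : ∀ a b : ℤ, IsCoprime a b → (p : ℤ) ∣ b → kp p a b = 2 * vp p b := by
    intro a b h hb
    have ha : ¬ (p : ℤ) ∣ a := fun ha => hcop a b h ⟨ha, hb⟩
    have hc : ¬ (p : ℤ) ∣ cc a b := by
      intro hc
      apply ha
      apply hlp.dvd_of_dvd_pow (n := 2)
      have : a ^ 2 = b * (b + 11 * a) + cc a b := by unfold cc; ring
      rw [this]; exact dvd_add (hb.mul_right _) hc
    simp [kp, vp_zero p a ha, vp_zero p _ hc]
  have hmul : ∀ u v : ℕ, (p : ℤ) ^ (min (2 * u) ((2 * N + 1) * (2 * v))) = ((p : ℤ) ^ (min u ((2 * N + 1) * v))) ^ 2 := by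
    intro u v
    rw [← pow_mul]
    congr 1
    rw [show (2 * N + 1) * (2 * v) = 2 * ((2 * N + 1) * v) by ring]
    omega
  have h0 : ∀ a b : ℤ, (p : ℤ) ∣ a → ty p a b = 0 := by intro a b h; simp [ty, h]
  have h0' : ∀ a b : ℤ, ¬ (p : ℤ) ∣ a → ty p a b ≠ 0 := by
    intro a b h; simp only [ty, if_neg h]; split_ifs <;> decide
  have h1 : ∀ a b : ℤ, ¬ (p : ℤ) ∣ a → (p : ℤ) ∣ b → ty p a b = 1 := by intro a b h h'; simp [ty, h, h']
  have h1' : ∀ a b : ℤ, ¬ (p : ℤ) ∣ a → ¬ (p : ℤ) ∣ b → ty p a b ≠ 1 := by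
    intro a b h h'; simp only [ty, if_neg h, if_neg h']; split_ifs <;> decide
  have hpw : ∀ n : ℤ, ∀ k : ℕ, k ≤ vp p n → (((p : ℤ) ^ k : ℤ) : K5) ∣ (n : K5) := by
    intro n k hk
    have := map_dvd (Int.castRingHom K5) ((pow_dvd_pow (p : ℤ) hk).trans (vp_dvd p n))
    simpa using this
  have hpw2 : ∀ n : ℤ, ∀ k : ℕ, k ≤ (2 * N + 1) * vp p n → (((p : ℤ) ^ k : ℤ) : K5) ∣ (n : K5) ^ (2 * N + 1) := by
    intro n k hk
    have h := pow_dvd_pow_of_dvd (vp_dvd p n) (2 * N + 1)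
    rw [← pow_mul, mul_comm] at h
    have := map_dvd (Int.castRingHom K5) ((pow_dvd_pow (p : ℤ) hk).trans h)
    simpa using this
  by_cases ha : (p : ℤ) ∣ a
  · have hA : (p : ℤ) ∣ A := by
      by_contra hA; exact h0' A B hA (ht ▸ h0 a b ha)
    rw [hca a b hab ha, hca A B hAB hA, hmul]
    apply ND_dvd_int N a b A B _ 0
    · exact hpw A _ (min_le_left _ _)
    · exact hpw2 a _ (min_le_right _ _)
  have hA : ¬ (p : ℤ) ∣ A := by
    intro hA; exact h0' a b ha (ht ▸ h0 A B hA)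
  by_cases hb : (p : ℤ) ∣ b
  · have hB : (p : ℤ) ∣ B := by
      by_contra hB; exact h1' A B hA hB (ht ▸ h1 a b ha hb)
    rw [hcb a b hab hb, hcb A B hAB hB, hmul]
    apply ND_dvd_int N a b A B _ 1
    · exact ((hpw B _ (min_le_left _ _)).mul_left _).neg_right
    · have := (hpw2 b _ (min_le_right (vp p B) _))
      show _ ∣ (-(QuadraticAlgebra.omega * (b : K5))) ^ (2 * N + 1)
      rw [Odd.neg_pow ⟨N, rfl⟩, mul_pow]
      exact (this.mul_left _).neg_right
  have hB : ¬ (p : ℤ) ∣ B := by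
    intro hB; exact h1' a b ha hb (ht ▸ h1 A B hA hB)
  by_cases hp5 : p = 5
  · have : kp p a b = 0 := by unfold kp; rw [vp_zero p a ha, vp_zero p b hb, if_pos hp5]
    simp [this]
  have k1 : kp p a b = vp p (cc a b) := by simp [kp, vp_zero p a ha, vp_zero p b hb, hp5]
  have k2 : kp p A B = vp p (cc A B) := by simp [kp, vp_zero p A hA, vp_zero p B hB, hp5]
  by_cases hc : (p : ℤ) ∣ cc a b
  swap
  · simp [k1, vp_zero p _ hc]
  by_cases hC : (p : ℤ) ∣ cc A B
  swap
  · simp [k2, vp_zero p _ hC]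
  have hcr := ty_cross p hp a b A B ha hb hA hB hc hC ht
  have : Fact p.Prime := ⟨hp⟩
  obtain ⟨ρ, hρ, hd⟩ := hensel5 p hp5 a b hb hc
  have hpp : Prime (p : ℤ_[p]) := PadicInt.prime_p
  have hcast : ∀ n : ℤ, (p : ℤ_[p]) ∣ (n : ℤ_[p]) ↔ (p : ℤ) ∣ n := by
    intro n; simpa using PadicInt.pow_p_dvd_int_iff 1 n
  have hD : (p : ℤ_[p]) ∣ (A : ℤ_[p]) - ρ * B := by
    have h2 : (p : ℤ_[p]) ∣ (b : ℤ_[p]) * ((A : ℤ_[p]) - ρ * B) := by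
      have e : (b : ℤ_[p]) * ((A : ℤ_[p]) - ρ * B) = ((A * b - a * B : ℤ) : ℤ_[p]) + B * ((a : ℤ_[p]) - ρ * b) := by
        push_cast; ring
      rw [e]
      exact dvd_add ((hcast _).mpr hcr) (hd.mul_left _)
    rcases hpp.dvd_or_dvd h2 with h | h
    · exact absurd ((hcast _).mp h) hb
    · exact h
  apply ND_dvd_padic p ρ hρ
  · apply (pow_dvd_pow _ (min_le_left _ _)).trans
    rw [k2]
    exact root_dvd p hp5 A B hB ρ hρ hD _ (vp_dvd p _)
  · apply (pow_dvd_pow _ (min_le_right _ _)).trans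
    have := root_dvd p hp5 a b hb ρ hρ hd _ (vp_dvd p _)
    rw [k1, mul_comm, pow_mul]
    exact pow_dvd_pow_of_dvd this _
end PartLoc

section PartArch
open Finset

/-- maximum of absolute values -/
noncomputable def mx (x : Fin 3 → ℝ) : ℝ := max |x 0| (max |x 1| |x 2|)

lemma le_mx (x : Fin 3 → ℝ) (i : Fin 3) : |x i| ≤ mx x := by
  unfold mx
  fin_cases i <;> simp

lemma mx_cases (x : Fin 3 → ℝ) : ∃ i, mx x = |x i| := by
  unfold mx
  rcases max_choice |x 0| (max |x 1| |x 2|) with h | h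
  · exact ⟨0, h⟩
  · rcases max_choice |x 1| |x 2| with h2 | h2
    · exact ⟨1, by rw [h, h2]⟩
    · exact ⟨2, by rw [h, h2]⟩

lemma exists_imin (x : Fin 3 → ℝ) : ∃ i, ∀ j, |x i| ≤ |x j| := by
  obtain ⟨i, -, h⟩ := Finset.exists_min_image (Finset.univ : Finset (Fin 3)) (fun i => |x i|) ⟨0, by simp⟩
  exact ⟨i, fun j => h j (by simp)⟩

/-- index of a smallest entry -/
noncomputable def imin (x : Fin 3 → ℝ) : Fin 3 := (exists_imin x).choose

lemma imin_spec (x : Fin 3 → ℝ) (j : Fin 3) : |x (imin x)| ≤ |x j| := (exists_imin x).choose_spec j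

/-- archimedean weight -/
noncomputable def el (x : Fin 3 → ℝ) (i : Fin 3) : ℝ := Real.log (mx x) - Real.log |x i|

lemma mx_pos (x : Fin 3 → ℝ) (h : ∀ i, x i ≠ 0) : 0 < mx x := lt_of_lt_of_le (abs_pos.mpr (h 0)) (le_mx x 0)

lemma el_nonneg (x : Fin 3 → ℝ) (h : ∀ i, x i ≠ 0) (i : Fin 3) : 0 ≤ el x i :=
  sub_nonneg.mpr (Real.log_le_log (abs_pos.mpr (h i)) (le_mx x i))

lemma el_upper (x : Fin 3 → ℝ) (h : ∀ i, x i ≠ 0) (i : Fin 3) :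
    Real.log |x 0| + Real.log |x 1| + Real.log |x 2| + el x i ≤ 3 * Real.log (mx x) := by
  have h0 := el_nonneg x h 0
  have h1 := el_nonneg x h 1
  have h2 := el_nonneg x h 2
  unfold el at *
  fin_cases i <;> simp [-Real.log_abs] <;> linarith

lemma el_lower (x : Fin 3 → ℝ) (h : ∀ i, x i ≠ 0) (hs : x 0 + x 1 + x 2 = 0) :
    3 * Real.log (mx x) - Real.log 2 ≤ Real.log |x 0| + Real.log |x 1| + Real.log |x 2| + el x (imin x) := by
  have key : ∀ i j k : Fin 3, x i + x j + x k = 0 → |x i| ≤ |x j| → |x i| ≤ |x k| → (mx x = |x j| ∨ mx x = |x k|) →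
      2 * Real.log (mx x) - Real.log 2 ≤ Real.log |x j| + Real.log |x k| := by
    intro i j k hs h1 h2 hm
    have pj := abs_pos.mpr (h j)
    have pk := abs_pos.mpr (h k)
    rcases hm with hm | hm
    · have : |x j| ≤ 2 * |x k| := by
        have : x j = -(x i) - x k := by linarith
        rw [this]
        have := abs_sub (-(x i)) (x k)
        rw [abs_neg] at this
        linarith
      have := Real.log_le_log pj this
      rw [Real.log_mul (by norm_num) pk.ne'] at this
      rw [hm]; linarith
    · have : |x k| ≤ 2 * |x j| := by
        have : x k = -(x i) - x j := by linarith
        rw [this]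
        have := abs_sub (-(x i)) (x j)
        rw [abs_neg] at this
        linarith
      have := Real.log_le_log pk this
      rw [Real.log_mul (by norm_num) pj.ne'] at this
      rw [hm]; linarith
  have hi := imin_spec x
  obtain ⟨m, hm⟩ := mx_cases x
  have hle := le_mx x
  generalize imin x = i at hi ⊢
  have e : ∀ j k : Fin 3, mx x = |x i| → mx x = |x j| := fun j k h' => le_antisymm (h' ▸ hi j) (hle j)
  unfold el
  fin_cases i
  · have : mx x = |x 1| ∨ mx x = |x 2| := by
      fin_cases m
      · exact Or.inl (e 1 2 hm)
      · exact Or.inl hm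
      · exact Or.inr hm
    have := key 0 1 2 hs (hi 1) (hi 2) this
    simp [-Real.log_abs]; linarith
  · have : mx x = |x 2| ∨ mx x = |x 0| := by
      fin_cases m
      · exact Or.inr hm
      · exact Or.inl (e 2 2 hm)
      · exact Or.inl hm
    have := key 1 2 0 (by linarith) (hi 2) (hi 0) this
    simp [-Real.log_abs]; linarith
  · have : mx x = |x 0| ∨ mx x = |x 1| := by
      fin_cases m
      · exact Or.inl hm
      · exact Or.inr hm
      · exact Or.inl (e 0 2 hm)
    have := key 2 0 1 (by linarith) (hi 0) (hi 1) this
    simp [-Real.log_abs]; linarith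

lemma DD_bound (N : ℕ) (x y : Fin 3 → ℝ) (hx : ∀ i, x i ≠ 0) (hy : ∀ i, y i ≠ 0)
    (hxs : x 0 + x 1 + x 2 = 0) (hys : y 0 + y 1 + y 2 = 0) (i : Fin 3) (hD : DD N x y ≠ 0) :
    Real.log |DD N x y| ≤ (6 * N + 2) * Real.log 2 + Real.log (mx y) + (3 * N + 1) * Real.log (mx x)
      - min (el y i) ((2 * N + 1) * el x i) := by
  have hI := II_real N x hxs
  have hb : ∀ j, |II N x j| ≤ 2 ^ (6 * N + 1) * (|x j| ^ (2 * N + 1) * mx x ^ N) := by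
    intro j
    unfold II
    rw [abs_mul, abs_pow]
    have := pd_bound N (x j) (x (j + 2)) (mx x) (le_mx x _) (le_mx x _)
    calc _ ≤ |x j| ^ (2 * N + 1) * (2 ^ (6 * N + 1) * mx x ^ N) := by gcongr
      _ = _ := by ring
  have pM := mx_pos x hx
  have pM' := mx_pos y hy
  set E := min (el y i) ((2 * N + 1) * el x i) with hE
  have hyi : |y i| ≤ mx y * Real.exp (-E) := by
    have : |y i| = mx y * Real.exp (-(el y i)) := by
      unfold el
      rw [neg_sub, Real.exp_sub, Real.exp_log (abs_pos.mpr (hy i)), Real.exp_log pM']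
      field_simp
    rw [this]
    gcongr
    exact min_le_left _ _
  have hxi : |x i| ^ (2 * N + 1) ≤ mx x ^ (2 * N + 1) * Real.exp (-E) := by
    have : |x i| ^ (2 * N + 1) = mx x ^ (2 * N + 1) * Real.exp (-((2 * N + 1) * el x i)) := by
      have h1 : |x i| = mx x * Real.exp (-(el x i)) := by
        unfold el
        rw [neg_sub, Real.exp_sub, Real.exp_log (abs_pos.mpr (hx i)), Real.exp_log pM]
        field_simp
      rw [h1, mul_pow, ← Real.exp_nat_mul]
      congr 2
      push_cast; ring
    rw [this]
    gcongr
    exact min_le_right _ _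
  have hfin : |DD N x y| ≤ 2 ^ (6 * N + 2) * mx y * mx x ^ (3 * N + 1) * Real.exp (-E) := by
    rw [DD_cyc N x y hI hys i]
    calc |y i * II N x (i + 1) - y (i + 1) * II N x i|
        ≤ |y i| * |II N x (i + 1)| + |y (i + 1)| * |II N x i| := by
          rw [← abs_mul, ← abs_mul]; exact abs_sub _ _
      _ ≤ (mx y * Real.exp (-E)) * (2 ^ (6 * N + 1) * (mx x ^ (2 * N + 1) * mx x ^ N))
          + mx y * (2 ^ (6 * N + 1) * ((mx x ^ (2 * N + 1) * Real.exp (-E)) * mx x ^ N)) := by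
          have a1 := (hb (i + 1)).trans (show _ ≤ 2 ^ (6 * N + 1) * (mx x ^ (2 * N + 1) * mx x ^ N) by
            have := le_mx x (i + 1)
            gcongr)
          have a2 := (hb i).trans (show _ ≤ 2 ^ (6 * N + 1) * ((mx x ^ (2 * N + 1) * Real.exp (-E)) * mx x ^ N) by
            gcongr)
          have a3 := le_mx y (i + 1)
          gcongr
      _ = _ := by ring
  have := Real.log_le_log (abs_pos.mpr hD) hfin
  rw [Real.log_mul (by positivity) (by positivity), Real.log_mul (by positivity) (by positivity),
    Real.log_mul (by positivity) (by positivity), Real.log_pow, Real.log_pow, Real.log_exp] at this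
  push_cast at this
  linarith

lemma DD_ne (N : ℕ) (hN : Odd N) (x y : Fin 3 → ℝ) (hx : ∀ i, x i ≠ 0) (hy : ∀ i, y i ≠ 0)
    (hxs : x 0 + x 1 + x 2 = 0) (hys : y 0 + y 1 + y 2 = 0) (hsg : ∀ i, (0 < x i ↔ 0 < y i)) : DD N x y ≠ 0 := by
  have hI := II_real N x hxs
  have hss : ∀ i j, 0 < x i * x j → 0 < y i * y j := by
    intro i j h
    rcases lt_or_gt_of_ne (hx i) with h1 | h1
    · have h2 : x j < 0 := by nlinarith
      have h3 : ¬ 0 < y i := fun h' => by have := (hsg i).mpr h'; linarith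
      have h4 : ¬ 0 < y j := fun h' => by have := (hsg j).mpr h'; linarith
      exact mul_pos_of_neg_of_neg (lt_of_le_of_ne (not_lt.mp h3) (hy i)) (lt_of_le_of_ne (not_lt.mp h4) (hy j))
    · have h2 : 0 < x j := (pos_iff_pos_of_mul_pos h).mp h1
      exact mul_pos ((hsg i).mp h1) ((hsg j).mp h2)
  have key : ∀ i : Fin 3, 0 < x i * x (i + 1) → DD N x y ≠ 0 := by
    intro i h h0
    rw [DD_cyc N x y hI hys i] at h0
    have hs : x i + x (i + 1) + x (i + 2) = 0 := by
      fin_cases i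
      · exact hxs
      · show x 1 + x 2 + x 0 = 0
        linarith
      · show x 2 + x 0 + x 1 = 0
        linarith
    have h1 := pd_sign N hN (x i) (x (i + 1)) (x (i + 2)) hs h
    have e : II N x (i + 1) = x (i + 1) ^ (2 * N + 1) * pd N (x (i + 1)) (x i) := by
      unfold II
      have : i + 1 + 2 = i := by fin_cases i <;> rfl
      rw [this]
    rw [← e] at h1
    change II N x i * II N x (i + 1) < 0 at h1
    have h2 := hss _ _ h
    have h3 : y i * y (i + 1) * (II N x i * II N x (i + 1)) = (y (i + 1) * II N x i) ^ 2 := by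
      have : y i * II N x (i + 1) = y (i + 1) * II N x i := by linarith
      calc _ = (y i * II N x (i + 1)) * (y (i + 1) * II N x i) := by ring
        _ = _ := by rw [this]; ring
    have h4 := mul_neg_of_pos_of_neg h2 h1
    have := sq_nonneg (y (i + 1) * II N x i)
    linarith
  by_cases h0 : 0 < x 0 * x 1
  · exact key 0 h0
  by_cases h1 : 0 < x 1 * x 2
  · exact key 1 h1
  apply key 2
  show 0 < x 2 * x 0
  have e0 : x 0 * x 1 < 0 := lt_of_le_of_ne (not_lt.mp h0) (mul_ne_zero (hx 0) (hx 1))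
  have e1 : x 1 * x 2 < 0 := lt_of_le_of_ne (not_lt.mp h1) (mul_ne_zero (hx 1) (hx 2))
  have : 0 < (x 2 * x 0) * (x 1) ^ 2 := by nlinarith
  exact pos_of_mul_pos_left this (sq_nonneg _)

end PartArch

section PartGlob
open Finset

/-- the two real roots -/
noncomputable def rr : Bool → ℝ
  | true => r1
  | false => r2

lemma rr_root (σ : Bool) : rr σ * rr σ = 1 + 11 * rr σ := by
  cases σ
  · exact r2_root
  · exact r1_root

lemma rr_other (σ : Bool) : rr σ + rr (!σ) = 11 ∧ rr σ * rr (!σ) = -1 := by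
  cases σ
  · exact ⟨by rw [add_comm]; exact r12, by rw [mul_comm]; exact r1r2⟩
  · exact ⟨r12, r1r2⟩

/-- S-unit solutions -/
structure Sol (S : Finset ℕ) (a b : ℤ) : Prop where
  cop : IsCoprime a b
  ha : a ≠ 0
  hb : b ≠ 0
  hc : cc a b ≠ 0
  hS : ∀ p : ℕ, p.Prime → (p : ℤ) ∣ a * b * cc a b → p ∈ S

/-- height -/
noncomputable def hh (a b : ℤ) : ℝ := Real.log (mx (xv r1 a b)) + Real.log (mx (xv r2 a b))

lemma cc_factor (σ : Bool) (a b : ℤ) : (rr σ * b - a) * (rr (!σ) * b - a) = (cc a b : ℝ) := by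
  obtain ⟨h1, h2⟩ := rr_other σ
  unfold cc
  push_cast
  linear_combination (-(a : ℝ) * b) * h1 + (b : ℝ) ^ 2 * h2

lemma rr_ne (σ : Bool) : rr σ ≠ 0 := by
  intro h
  have := rr_root σ
  rw [h] at this
  norm_num at this

lemma xv_ne {S : Finset ℕ} {a b : ℤ} (h : Sol S a b) (σ : Bool) (i : Fin 3) : xv (rr σ) a b i ≠ 0 := by
  have ha : (a : ℝ) ≠ 0 := by exact_mod_cast h.ha
  have hb : (b : ℝ) ≠ 0 := by exact_mod_cast h.hb
  have hc : (cc a b : ℝ) ≠ 0 := by exact_mod_cast h.hc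
  fin_cases i
  · simpa [xv] using ha
  · simpa [xv] using ⟨rr_ne σ, h.hb⟩
  · rw [← cc_factor σ] at hc
    exact left_ne_zero_of_mul hc

/-- local weights -/
noncomputable def ww (S : Finset ℕ) (a b : ℤ) : S ⊕ Bool → ℝ
  | Sum.inl p => (kp p a b : ℝ) * Real.log (p : ℕ)
  | Sum.inr σ => el (xv (rr σ) a b) (imin (xv (rr σ) a b))

lemma ww_nonneg {S : Finset ℕ} {a b : ℤ} (h : Sol S a b) (v : S ⊕ Bool) : 0 ≤ ww S a b v := by
  rcases v with p | σ
  · exact mul_nonneg (Nat.cast_nonneg _) (Real.log_natCast_nonneg _)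
  · exact el_nonneg _ (xv_ne h σ) _

lemma sum_vp (S : Finset ℕ) (n : ℤ) (hn : n ≠ 0) (h : ∀ p : ℕ, p.Prime → (p : ℤ) ∣ n → p ∈ S) :
    ∑ p ∈ S, (vp p n : ℝ) * Real.log (p : ℕ) = Real.log |(n : ℝ)| := by
  have h1 : n.natAbs ≠ 0 := Int.natAbs_ne_zero.mpr hn
  have h2 := Nat.prod_factorization_pow_eq_self h1
  have hsub : n.natAbs.factorization.support ⊆ S := by
    intro p hp
    rw [Nat.support_factorization, Nat.mem_primeFactors] at hp
    exact h p hp.1 (Int.natCast_dvd.mpr hp.2.1)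
  have h3 : ((n.natAbs : ℕ) : ℝ) = |(n : ℝ)| := by
    rw [Nat.cast_natAbs]; simp
  rw [← h3]
  conv_rhs => rw [← h2]
  rw [Finsupp.prod]
  push_cast
  rw [Real.log_prod]
  · rw [← Finset.sum_subset hsub]
    · apply Finset.sum_congr rfl
      intro p hp
      rw [Real.log_pow]; rfl
    · intro p _ hp
      have : vp p n = 0 := Finsupp.notMem_support_iff.mp hp
      simp [this]
  · intro p hp
    rw [Nat.support_factorization, Nat.mem_primeFactors] at hp
    have := hp.1.pos
    positivity

lemma v5_le (a b : ℤ) (hab : IsCoprime a b) : vp 5 (cc a b) ≤ 3 := by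
  by_contra hlt
  have h1 : (5 : ℤ) ^ 4 ∣ cc a b := (pow_dvd_pow 5 (by omega)).trans (vp_dvd 5 (cc a b))
  have e : 4 * cc a b = (2 * a - 11 * b) ^ 2 - 125 * b ^ 2 := by unfold cc; ring
  have hp : Prime (5 : ℤ) := by norm_num
  obtain ⟨k, hk⟩ := h1
  have d1 : (5 : ℤ) ∣ 2 * a - 11 * b := by
    apply hp.dvd_of_dvd_pow (n := 2)
    exact ⟨4 * 125 * k + 25 * b ^ 2, by rw [hk] at e; linarith⟩
  obtain ⟨u, hu⟩ := d1
  have d2 : (5 : ℤ) ∣ u := by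
    apply hp.dvd_of_dvd_pow (n := 2)
    refine ⟨4 * 5 * k + b ^ 2, ?_⟩
    rw [hu, hk] at e
    linarith
  obtain ⟨v, hv⟩ := d2
  have d3 : (5 : ℤ) ∣ b := by
    apply hp.dvd_of_dvd_pow (n := 2)
    refine ⟨v ^ 2 - 4 * k, ?_⟩
    rw [hu, hk, hv] at e
    linarith
  have d4 : (5 : ℤ) ∣ a := by
    have : (5 : ℤ) ∣ 2 * a := by
      have : 2 * a = 5 * u + 11 * b := by linarith
      rw [this]
      exact dvd_add (Dvd.intro _ rfl) (d3.mul_left _)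
    rcases hp.dvd_or_dvd this with h | h
    · norm_num at h
    · exact h
  exact hp.not_isUnit (hab.isUnit_of_dvd' d4 d3)

lemma fin_sum {S : Finset ℕ} {a b : ℤ} (h : Sol S a b) (h5 : 5 ∈ S) :
    ∑ p ∈ S, (kp p a b : ℝ) * Real.log (p : ℕ) =
      2 * Real.log |(a : ℝ)| + 2 * Real.log |(b : ℝ)| + Real.log |(cc a b : ℝ)| - vp 5 (cc a b) * Real.log 5 := by
  rw [← sum_vp S a h.ha (fun p hp hd => h.hS p hp ((hd.mul_right _).mul_right _)),
    ← sum_vp S b h.hb (fun p hp hd => h.hS p hp ((hd.mul_left _).mul_right _)),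
    ← sum_vp S _ h.hc (fun p hp hd => h.hS p hp (hd.mul_left _))]
  have e : (vp 5 (cc a b) : ℝ) * Real.log 5 = ∑ p ∈ S, if p = 5 then (vp p (cc a b) : ℝ) * Real.log (p : ℕ) else 0 := by
    rw [Finset.sum_ite_eq' S 5, if_pos h5]; norm_num
  rw [e, mul_sum, mul_sum, ← sum_add_distrib, ← sum_add_distrib, ← sum_sub_distrib]
  apply sum_congr rfl
  intro p _
  unfold kp
  split_ifs
  · push_cast; ring
  · push_cast; ring

lemma arch_sum {S : Finset ℕ} {a b : ℤ} (h : Sol S a b) :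
    (Real.log |xv r1 a b 0| + Real.log |xv r1 a b 1| + Real.log |xv r1 a b 2|) +
    (Real.log |xv r2 a b 0| + Real.log |xv r2 a b 1| + Real.log |xv r2 a b 2|) =
      2 * Real.log |(a : ℝ)| + 2 * Real.log |(b : ℝ)| + Real.log |(cc a b : ℝ)| := by
  have hb : (b : ℝ) ≠ 0 := by exact_mod_cast h.hb
  have h1 : Real.log |xv r1 a b 1| + Real.log |xv r2 a b 1| = 2 * Real.log |(b : ℝ)| := by
    have n1 := xv_ne h true 1
    have n2 := xv_ne h false 1
    simp only [rr] at n1 n2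
    rw [← Real.log_mul (abs_ne_zero.mpr n1) (abs_ne_zero.mpr n2), ← abs_mul]
    have : xv r1 a b 1 * xv r2 a b 1 = -(b : ℝ) ^ 2 := by
      simp only [xv, Matrix.cons_val_one, Matrix.cons_val_zero]
      linear_combination (b : ℝ) ^ 2 * r1r2
    rw [this, abs_neg, abs_pow, Real.log_pow]; norm_num
  have h2 : Real.log |xv r1 a b 2| + Real.log |xv r2 a b 2| = Real.log |(cc a b : ℝ)| := by
    have n1 := xv_ne h true 2
    have n2 := xv_ne h false 2
    simp only [rr] at n1 n2
    rw [← Real.log_mul (abs_ne_zero.mpr n1) (abs_ne_zero.mpr n2), ← abs_mul]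
    rw [← cc_factor true]
    rfl
  have h3 : ∀ r : ℝ, xv r a b 0 = a := fun r => rfl
  rw [h3, h3]
  linarith

lemma ww_sum (S : Finset ℕ) (a b : ℤ) : ∑ v, ww S a b v = ∑ p ∈ S, (kp p a b : ℝ) * Real.log (p : ℕ)
    + (el (xv r1 a b) (imin (xv r1 a b)) + el (xv r2 a b) (imin (xv r2 a b))) := by
  rw [Fintype.sum_sum_type, Fintype.sum_bool]
  congr 1
  exact Finset.sum_coe_sort S (fun p => (kp p a b : ℝ) * Real.log (p : ℕ))

lemma ww_le {S : Finset ℕ} {a b : ℤ} (h : Sol S a b) (h5 : 5 ∈ S) : ∑ v, ww S a b v ≤ 3 * hh a b := by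
  rw [ww_sum, fin_sum h h5, ← arch_sum h]
  have h1 := el_upper _ (xv_ne h true) (imin (xv r1 a b))
  have h2 := el_upper _ (xv_ne h false) (imin (xv r2 a b))
  have h3 : 0 ≤ (vp 5 (cc a b) : ℝ) * Real.log 5 := mul_nonneg (Nat.cast_nonneg _) (Real.log_nonneg (by norm_num))
  simp only [rr] at h1 h2
  unfold hh
  linarith

lemma ww_ge {S : Finset ℕ} {a b : ℤ} (h : Sol S a b) (h5 : 5 ∈ S) : 3 * hh a b - 20 ≤ ∑ v, ww S a b v := by
  rw [ww_sum, fin_sum h h5, ← arch_sum h]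
  have h1 := el_lower _ (xv_ne h true) (xv_sum _ _ _)
  have h2 := el_lower _ (xv_ne h false) (xv_sum _ _ _)
  have h3 : (vp 5 (cc a b) : ℝ) * Real.log 5 ≤ 3 * 4 := by
    have : (vp 5 (cc a b) : ℝ) ≤ 3 := by exact_mod_cast v5_le a b h.cop
    have h4 : Real.log 5 ≤ 4 := by
      have := Real.log_le_sub_one_of_pos (show (0:ℝ) < 5 by norm_num)
      linarith
    have h5 : 0 ≤ Real.log 5 := Real.log_nonneg (by norm_num)
    gcongr
  have h4 : Real.log 2 ≤ 1 := by
    have := Real.log_le_sub_one_of_pos (show (0:ℝ) < 2 by norm_num)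
    linarith
  simp only [rr] at h1 h2
  unfold hh
  linarith

lemma min_mul_log (N k l : ℕ) (L : ℝ) (hL : 0 ≤ L) : min ((k : ℝ) * L) ((2 * N + 1) * (l * L)) = (min k ((2 * N + 1) * l) : ℕ) * L := by
  push_cast
  rw [← mul_assoc, min_mul_of_nonneg _ _ hL]

lemma main_ineq {S : Finset ℕ} {a b A B : ℤ} (hx : Sol S a b) (hy : Sol S A B) (hSp : ∀ p ∈ S, p.Prime) (N : ℕ)
    (ht : ∀ p ∈ S, ty p a b = ty p A B)
    (hi : ∀ σ, imin (xv (rr σ) a b) = imin (xv (rr σ) A B)) (hND : ND N a b A B ≠ 0) :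
    ∑ v, min (ww S A B v) ((2 * N + 1) * ww S a b v) ≤ hh A B + (3 * N + 1) * hh a b + (12 * N + 4) * Real.log 2 := by
  have hn := ND_ring r1 r2 r1_root r2_root r12 N a b A B
  have hnR : (ND N a b A B : ℝ) ≠ 0 := by exact_mod_cast hND
  rw [hn] at hnR
  have d1 := left_ne_zero_of_mul hnR
  have d2 := right_ne_zero_of_mul hnR
  have b1 := DD_bound N _ _ (xv_ne hx true) (xv_ne hy true) (xv_sum _ _ _) (xv_sum _ _ _) (imin (xv r1 a b)) d1
  have b2 := DD_bound N _ _ (xv_ne hx false) (xv_ne hy false) (xv_sum _ _ _) (xv_sum _ _ _) (imin (xv r2 a b)) d2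
  have e1 : Real.log |(ND N a b A B : ℝ)| = Real.log |DD N (xv r1 a b) (xv r1 A B)| + Real.log |DD N (xv r2 a b) (xv r2 A B)| := by
    rw [hn, abs_mul, Real.log_mul (abs_ne_zero.mpr d1) (abs_ne_zero.mpr d2)]
  rw [Fintype.sum_sum_type, Fintype.sum_bool]
  have hf : ∑ p : S, min (ww S A B (Sum.inl p)) ((2 * N + 1) * ww S a b (Sum.inl p)) ≤ Real.log |(ND N a b A B : ℝ)| := by
    have : ∑ p : S, min (ww S A B (Sum.inl p)) ((2 * N + 1) * ww S a b (Sum.inl p)) =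
        ∑ p ∈ S, ((min (kp p A B) ((2 * N + 1) * kp p a b) : ℕ) : ℝ) * Real.log (p : ℕ) := by
      rw [← Finset.sum_coe_sort S (fun p : ℕ => ((min (kp p A B) ((2 * N + 1) * kp p a b) : ℕ) : ℝ) * Real.log (p : ℕ))]
      apply sum_congr rfl
      intro p _
      exact min_mul_log _ _ _ _ (Real.log_natCast_nonneg _)
    rw [this]
    have hd : ∏ p ∈ S, (p : ℤ) ^ (min (kp p A B) ((2 * N + 1) * kp p a b)) ∣ ND N a b A B := by
      apply Finset.prod_dvd_of_coprime
      · intro p hp q hq hpq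
        apply IsCoprime.pow
        rw [Nat.isCoprime_iff_coprime]
        exact (Nat.coprime_primes (hSp p hp) (hSp q hq)).mpr hpq
      · intro p hp
        exact local_dvd p (hSp p hp) N a b A B hx.cop hy.cop (ht p hp)
    have hle := Int.le_of_dvd (abs_pos.mpr hND) ((dvd_abs _ _).mpr hd)
    have hleR : (∏ p ∈ S, (p : ℝ) ^ (min (kp p A B) ((2 * N + 1) * kp p a b))) ≤ |(ND N a b A B : ℝ)| := by
      exact_mod_cast hle
    have hpos : ∀ p ∈ S, (0:ℝ) < (p : ℝ) ^ (min (kp p A B) ((2 * N + 1) * kp p a b)) := by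
      intro p hp
      have := (hSp p hp).pos
      positivity
    have := Real.log_le_log (Finset.prod_pos hpos) hleR
    rw [Real.log_prod (fun p hp => (hpos p hp).ne')] at this
    refine le_trans (le_of_eq ?_) this
    apply sum_congr rfl
    intro p _
    rw [Real.log_pow]
  have w1 : ww S A B (Sum.inr true) = el (xv r1 A B) (imin (xv r1 a b)) := by
    have := hi true
    simp only [rr] at this
    rw [this]; rfl
  have w2 : ww S A B (Sum.inr false) = el (xv r2 A B) (imin (xv r2 a b)) := by
    have := hi false
    simp only [rr] at this
    rw [this]; rfl
  have w3 : ww S a b (Sum.inr true) = el (xv r1 a b) (imin (xv r1 a b)) := rfl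
  have w4 : ww S a b (Sum.inr false) = el (xv r2 a b) (imin (xv r2 a b)) := rfl
  rw [w1, w2, w3, w4]
  unfold hh
  simp only [rr] at b1 b2
  rw [e1] at hf
  linarith

lemma ND_ne_odd {S : Finset ℕ} {a b A B : ℤ} (hx : Sol S a b) (hy : Sol S A B) (N : ℕ) (hN : Odd N)
    (hsg : ∀ σ i, (0 < xv (rr σ) a b i ↔ 0 < xv (rr σ) A B i)) : ND N a b A B ≠ 0 := by
  intro h0
  have hn := ND_ring r1 r2 r1_root r2_root r12 N a b A B
  rw [h0, Int.cast_zero] at hn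
  exact mul_ne_zero (DD_ne N hN _ _ (xv_ne hx true) (xv_ne hy true) (xv_sum _ _ _) (xv_sum _ _ _) (hsg true))
    (DD_ne N hN _ _ (xv_ne hx false) (xv_ne hy false) (xv_sum _ _ _) (xv_sum _ _ _) (hsg false)) hn.symm

lemma ND_ne_zero {S : Finset ℕ} {a b A B : ℤ} (hx : Sol S a b) (hy : Sol S A B)
    (hsg : 0 < a ↔ 0 < A) (hne : ¬ (a = A ∧ b = B)) : ND 0 a b A B ≠ 0 := by
  intro h0
  have hn := ND_ring r1 r2 r1_root r2_root r12 0 a b A B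
  rw [h0, Int.cast_zero] at hn
  have e : ∀ r : ℝ, DD 0 (xv r a b) (xv r A B) = r * (a * B - A * b) := by
    intro r
    simp [DD, II, pd, xv]; ring
  rw [e, e] at hn
  have h1 : ((a * B - A * b : ℤ) : ℝ) ^ 2 = 0 := by
    push_cast
    linear_combination ((a : ℝ) * B - A * b) ^ 2 * r1r2 + hn
  have h2 : a * B - A * b = 0 := by
    have := pow_eq_zero_iff (two_ne_zero) |>.mp h1
    exact_mod_cast this
  apply hne
  have d1 : a ∣ A := by
    apply hx.cop.dvd_of_dvd_mul_right
    exact ⟨B, by linarith⟩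
  have d2 : A ∣ a := by
    apply hy.cop.dvd_of_dvd_mul_right
    exact ⟨b, by linarith⟩
  have ha := hx.ha
  have hA := hy.ha
  have e1 : a = A := by
    rcases Int.natAbs_eq_natAbs_iff.mp (Nat.dvd_antisymm (Int.natAbs_dvd_natAbs.mpr d1) (Int.natAbs_dvd_natAbs.mpr d2)) with h | h
    · exact h
    · omega
  refine ⟨e1, ?_⟩
  subst e1
  have : a * (B - b) = 0 := by linarith
  rcases mul_eq_zero.mp this with h | h
  · exact absurd h ha
  · omega

lemma hh_bound {S : Finset ℕ} {a b : ℤ} (h : Sol S a b) : (a : ℝ) ^ 2 ≤ Real.exp (hh a b) ∧ (b : ℝ) ^ 2 ≤ Real.exp (hh a b) := by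
  have m1 := mx_pos _ (xv_ne h true)
  have m2 := mx_pos _ (xv_ne h false)
  simp only [rr] at m1 m2
  have e : Real.exp (hh a b) = mx (xv r1 a b) * mx (xv r2 a b) := by
    unfold hh
    rw [Real.exp_add, Real.exp_log m1, Real.exp_log m2]
  rw [e]
  constructor
  · have a1 := le_mx (xv r1 a b) 0
    have a2 := le_mx (xv r2 a b) 0
    have := mul_le_mul a1 a2 (abs_nonneg _) m1.le
    change |(a : ℝ)| * |(a : ℝ)| ≤ _ at this
    rw [abs_mul_abs_self] at this
    nlinarith
  · have a1 := le_mx (xv r1 a b) 1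
    have a2 := le_mx (xv r2 a b) 1
    have := mul_le_mul a1 a2 (abs_nonneg _) m1.le
    rw [← abs_mul] at this
    have e : xv r1 a b 1 * xv r2 a b 1 = -(b : ℝ) ^ 2 := by
      simp only [xv, Matrix.cons_val_one, Matrix.cons_val_zero]
      linear_combination (b : ℝ) ^ 2 * r1r2
    rw [e, abs_neg, abs_of_nonneg (sq_nonneg _)] at this
    exact this
end PartGlob

section PartComb
open Finset

lemma comb1 {V : Type*} [Fintype V] [Nonempty V] (w w' : V → ℝ) (hw : ∀ v, 0 ≤ w v) (hw' : ∀ v, 0 ≤ w' v)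
    (h h' : ℝ) (h1 : 1000 ≤ h) (hh' : h ≤ h')
    (he : ∀ v, ⌊4 * (Fintype.card V : ℝ) * w v / h⌋₊ = ⌊4 * (Fintype.card V : ℝ) * w' v / h'⌋₊)
    (hs : 3 * h - 20 ≤ ∑ v, w v) (N : ℕ)
    (hm : ∑ v, min (w' v) ((2 * N + 1) * w v) ≤ h' + (3 * N + 1) * h + (12 * N + 4) * Real.log 2) :
    min h' ((2 * N + 1) * h) * (273 / 100) ≤ h' + (3 * N + 1) * h + (12 * N + 4) := by
  have hn : (0 : ℝ) < Fintype.card V := by exact_mod_cast Fintype.card_pos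
  set n : ℝ := ((Fintype.card V : ℕ) : ℝ) with hnd
  have hpos : 0 < h := by linarith
  have hpos' : 0 < h' := by linarith
  set f : V → ℝ := fun v => (⌊4 * n * w v / h⌋₊ : ℝ) / (4 * n) with hf
  have f1 : ∀ v, f v * h ≤ w v := by
    intro v
    have := Nat.floor_le (show 0 ≤ 4 * n * w v / h by have := hw v; positivity)
    rw [le_div_iff₀ hpos] at this
    simp only [hf]
    rw [div_mul_eq_mul_div, div_le_iff₀ (by positivity)]
    linarith
  have f2 : ∀ v, f v * h' ≤ w' v := by
    intro v
    have := Nat.floor_le (show 0 ≤ 4 * n * w' v / h' by have := hw' v; positivity)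
    rw [le_div_iff₀ hpos', ← he v] at this
    simp only [hf]
    rw [div_mul_eq_mul_div, div_le_iff₀ (by positivity)]
    linarith
  have f3 : ∀ v, w v / h - 1 / (4 * n) ≤ f v := by
    intro v
    have := (Nat.lt_floor_add_one (4 * n * w v / h)).le
    simp only [hf]
    rw [sub_le_iff_le_add, ← add_div, le_div_iff₀ (by positivity)]
    calc _ = 4 * n * w v / h := by ring
      _ ≤ _ := this
  have f0 : ∀ v, 0 ≤ f v := fun v => by simp only [hf]; positivity
  have s1 : (∑ v, w v) / h - 1 / 4 ≤ ∑ v, f v := by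
    have := Finset.sum_le_sum (fun v (_ : v ∈ Finset.univ) => f3 v)
    rw [Finset.sum_sub_distrib, ← Finset.sum_div, Finset.sum_const, Finset.card_univ, nsmul_eq_mul, ← hnd] at this
    have e : n * (1 / (4 * n)) = 1 / 4 := by field_simp
    rw [e] at this
    exact this
  have s2 : 273 / 100 ≤ ∑ v, f v := by
    have : 3 - 2 / 100 ≤ (∑ v, w v) / h := by
      rw [le_div_iff₀ hpos]; linarith
    linarith
  have s3 : min h' ((2 * N + 1) * h) * ∑ v, f v ≤ ∑ v, min (w' v) ((2 * N + 1) * w v) := by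
    rw [Finset.mul_sum]
    apply Finset.sum_le_sum
    intro v _
    apply le_min
    · calc _ ≤ h' * f v := by
            have := f0 v
            gcongr
            exact min_le_left _ _
        _ ≤ _ := by linarith [f2 v]
    · calc _ ≤ ((2 * N + 1) * h) * f v := by
            have := f0 v
            gcongr
            exact min_le_right _ _
        _ = (2 * N + 1) * (f v * h) := by ring
        _ ≤ _ := by have := f1 v; gcongr
  have h4 : Real.log 2 ≤ 1 := by
    have := Real.log_le_sub_one_of_pos (show (0:ℝ) < 2 by norm_num)
    linarith
  have hmin : 0 ≤ min h' ((2 * N + 1) * h) := le_min hpos'.le (by positivity)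
  calc _ ≤ min h' ((2 * N + 1) * h) * ∑ v, f v := by gcongr
    _ ≤ _ := s3
    _ ≤ _ := hm
    _ ≤ h' + (3 * N + 1) * h + (12 * N + 4) * 1 := by gcongr
    _ = _ := by ring

lemma pick_N (τ : ℝ) (h : 27 ≤ τ) : ∃ N : ℕ, Odd N ∧ 13 ≤ N ∧ 2 * (N : ℝ) + 1 ≤ τ ∧ τ < 2 * N + 5 := by
  set k := ⌊(τ - 27) / 4⌋₊ with hk
  have h0 : 0 ≤ (τ - 27) / 4 := by linarith
  have h1 := Nat.floor_le h0
  have h2 := Nat.lt_floor_add_one ((τ - 27) / 4)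
  rw [← hk] at h1 h2
  refine ⟨2 * k + 13, ⟨k + 6, by ring⟩, by omega, ?_, ?_⟩
  · push_cast; linarith
  · push_cast; linarith

/-- gap class -/
noncomputable def mm (a b : ℤ) : ℕ := ⌊3 * Real.log (hh a b)⌋₊

/-- discretised weights -/
noncomputable def ev (S : Finset ℕ) (a b : ℤ) (v : S ⊕ Bool) : ℕ :=
  ⌊4 * (Fintype.card (S ⊕ Bool) : ℝ) * ww S a b v / hh a b⌋₊

lemma class_inj_aux {S : Finset ℕ} {a b A B : ℤ} (hx : Sol S a b) (hy : Sol S A B) (hSp : ∀ p ∈ S, p.Prime) (h5 : 5 ∈ S)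
    (hhx : 1000 ≤ hh a b) (hle : hh a b ≤ hh A B)
    (ht : ∀ p ∈ S, ty p a b = ty p A B)
    (hi : ∀ σ, imin (xv (rr σ) a b) = imin (xv (rr σ) A B))
    (hsg : ∀ σ i, (0 < xv (rr σ) a b i ↔ 0 < xv (rr σ) A B i))
    (he : ∀ v, ev S a b v = ev S A B v) (hm : mm a b % 16 = mm A B % 16) : a = A ∧ b = B := by
  by_contra hne
  have hpos : 0 < hh a b := by linarith
  have hpos' : 0 < hh A B := by linarith
  have C := fun N hN => comb1 (ww S a b) (ww S A B) (ww_nonneg hx) (ww_nonneg hy) _ _ hhx hle he (ww_ge hx h5) N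
    (main_ineq hx hy hSp N ht hi hN)
  have hsa : 0 < a ↔ 0 < A := by
    have := hsg true 0
    simpa [xv] using this
  have c0 := C 0 (ND_ne_zero hx hy hsa hne)
  rw [Nat.cast_zero, mul_zero, zero_add, one_mul, min_eq_right hle] at c0
  have g1 : 3 / 2 * hh a b ≤ hh A B := by linarith
  have g2 : hh A B < 27 * hh a b := by
    by_contra hcon
    obtain ⟨N, hN, hN13, n1, n2⟩ := pick_N (hh A B / hh a b) (by rw [le_div_iff₀ hpos]; linarith)
    rw [le_div_iff₀ hpos] at n1
    rw [div_lt_iff₀ hpos] at n2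
    have c := C N (ND_ne_odd hx hy N hN hsg)
    rw [min_eq_right n1] at c
    have hN' : (13:ℝ) ≤ N := by exact_mod_cast hN13
    nlinarith
  have l1 := Real.log_le_log (by positivity) g1
  have l2 := Real.log_lt_log hpos' g2
  rw [Real.log_mul (by norm_num) hpos.ne'] at l1 l2
  have e1 : 1 / 3 ≤ Real.log (3 / 2) := by
    rw [Real.le_log_iff_exp_le (by norm_num)]
    have h3 : Real.exp (1 / 3) ^ 3 ≤ (3 / 2) ^ 3 := by
      rw [← Real.exp_nat_mul]
      norm_num
      have := Real.exp_one_lt_d9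
      linarith
    exact le_of_pow_le_pow_left₀ (by norm_num) (by norm_num) h3
  have e2 : Real.log 27 ≤ 5 := by
    rw [Real.log_le_iff_le_exp (by norm_num)]
    have h3 : (2:ℝ) ^ 5 ≤ Real.exp 1 ^ 5 := by
      have := Real.exp_one_gt_d9
      gcongr
      linarith
    rw [← Real.exp_nat_mul] at h3
    norm_num at h3
    linarith
  have p0 : 0 ≤ 3 * Real.log (hh a b) := by
    have := Real.log_nonneg (show 1 ≤ hh a b by linarith)
    linarith
  have p1 : 0 ≤ 3 * Real.log (hh A B) := by
    have := Real.log_nonneg (show 1 ≤ hh A B by linarith)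
    linarith
  have m1 := Nat.floor_le p0
  have m2 := Nat.lt_floor_add_one (3 * Real.log (hh a b))
  have m3 := Nat.floor_le p1
  have m4 := Nat.lt_floor_add_one (3 * Real.log (hh A B))
  change (mm a b : ℝ) ≤ _ at m1
  change _ < (mm a b : ℝ) + 1 at m2
  change (mm A B : ℝ) ≤ _ at m3
  change _ < (mm A B : ℝ) + 1 at m4
  have q1 : (mm a b : ℝ) < mm A B := by linarith
  have q2 : (mm A B : ℝ) < (mm a b + 16 : ℕ) := by push_cast; linarith
  have q1 : mm a b < mm A B := by exact_mod_cast q1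
  have q2 : mm A B < mm a b + 16 := by exact_mod_cast q2
  omega

lemma class_inj {S : Finset ℕ} {a b A B : ℤ} (hx : Sol S a b) (hy : Sol S A B) (hSp : ∀ p ∈ S, p.Prime) (h5 : 5 ∈ S)
    (hhx : 1000 ≤ hh a b) (hhy : 1000 ≤ hh A B)
    (ht : ∀ p ∈ S, ty p a b = ty p A B)
    (hi : ∀ σ, imin (xv (rr σ) a b) = imin (xv (rr σ) A B))
    (hsg : ∀ σ i, (0 < xv (rr σ) a b i ↔ 0 < xv (rr σ) A B i))
    (he : ∀ v, ev S a b v = ev S A B v) (hm : mm a b % 16 = mm A B % 16) : a = A ∧ b = B := by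
  rcases le_total (hh a b) (hh A B) with h | h
  · exact class_inj_aux hx hy hSp h5 hhx h ht hi hsg he hm
  · have := class_inj_aux hy hx hSp h5 hhy h (fun p hp => (ht p hp).symm) (fun σ => (hi σ).symm)
      (fun σ i => (hsg σ i).symm) (fun v => (he v).symm) hm.symm
    exact ⟨this.1.symm, this.2.symm⟩

/-- the finite set of weight vectors -/
def vecs (V : Type*) [Fintype V] [DecidableEq V] (M : ℕ) : Finset (V → ℕ) :=
  (Fintype.piFinset (fun _ : V => range (M + 1))).filter (fun e => ∑ v, e v ≤ M)

lemma mem_vecs (V : Type*) [Fintype V] [DecidableEq V] (M : ℕ) (e : V → ℕ) (h : ∑ v, e v ≤ M) : e ∈ vecs V M := by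
  unfold vecs
  rw [mem_filter, Fintype.mem_piFinset]
  refine ⟨fun v => ?_, h⟩
  rw [mem_range]
  have := Finset.single_le_sum (f := e) (fun i _ => Nat.zero_le _) (mem_univ v)
  omega

lemma card_vecs (V : Type*) [Fintype V] [DecidableEq V] (M : ℕ) : (vecs V M).card ≤ 2 ^ (M + Fintype.card V) := by
  have h1 : ((vecs V M).card : ℝ) * (1 / 2) ^ M ≤ ∑ e ∈ Fintype.piFinset (fun _ : V => range (M + 1)), ∏ v, (1 / 2 : ℝ) ^ (e v) := by
    calc ((vecs V M).card : ℝ) * (1 / 2) ^ M = ∑ e ∈ vecs V M, (1 / 2 : ℝ) ^ M := by rw [sum_const, nsmul_eq_mul]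
      _ ≤ ∑ e ∈ vecs V M, ∏ v, (1 / 2 : ℝ) ^ (e v) := by
          apply sum_le_sum
          intro e he
          rw [Finset.prod_pow_eq_pow_sum]
          apply pow_le_pow_of_le_one (by norm_num) (by norm_num)
          exact (mem_filter.mp he).2
      _ ≤ _ := by
          apply sum_le_sum_of_subset_of_nonneg (filter_subset _ _)
          intro e _ _
          positivity
  rw [← Finset.prod_univ_sum (fun _ : V => range (M + 1)) (fun _ k => (1 / 2 : ℝ) ^ k)] at h1
  have h2 : ∑ k ∈ range (M + 1), (1 / 2 : ℝ) ^ k ≤ 2 := sum_geometric_two_le _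
  have h3 : ∏ v : V, ∑ k ∈ range (M + 1), (1 / 2 : ℝ) ^ k ≤ 2 ^ Fintype.card V := by
    rw [Finset.prod_const, Finset.card_univ]
    have : 0 ≤ ∑ k ∈ range (M + 1), (1 / 2 : ℝ) ^ k := by positivity
    gcongr
  have h4 := h1.trans h3
  have h5 : ((vecs V M).card : ℝ) ≤ 2 ^ (M + Fintype.card V) := by
    rw [one_div, inv_pow, ← div_eq_mul_inv, div_le_iff₀ (by positivity)] at h4
    rw [pow_add]; linarith
  exact_mod_cast h5

open Classical in
/-- class of a solution -/
noncomputable def key (S : Finset ℕ) (x : ℤ × ℤ) :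
    (Bool → Fin 3 → Bool) × (Bool → Fin 3) × (S → Fin 4) × Fin 16 × (S ⊕ Bool → ℕ) :=
  (fun σ i => decide (0 < xv (rr σ) x.1 x.2 i), fun σ => imin (xv (rr σ) x.1 x.2), fun p => ty p x.1 x.2,
    ⟨mm x.1 x.2 % 16, Nat.mod_lt _ (by norm_num)⟩, ev S x.1 x.2)

lemma ev_sum {S : Finset ℕ} {a b : ℤ} (h : Sol S a b) (h5 : 5 ∈ S) (hh1 : 1000 ≤ hh a b) :
    ∑ v, ev S a b v ≤ 12 * Fintype.card (S ⊕ Bool) := by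
  have hpos : 0 < hh a b := by linarith
  have : (∑ v, (ev S a b v : ℝ)) ≤ 12 * Fintype.card (S ⊕ Bool) := by
    calc (∑ v, (ev S a b v : ℝ)) ≤ ∑ v, 4 * (Fintype.card (S ⊕ Bool) : ℝ) * ww S a b v / hh a b := by
          apply sum_le_sum
          intro v _
          apply Nat.floor_le
          have := ww_nonneg h v
          positivity
      _ = 4 * (Fintype.card (S ⊕ Bool) : ℝ) * (∑ v, ww S a b v) / hh a b := by
          rw [← Finset.sum_div, ← Finset.mul_sum]
      _ ≤ _ := by
          rw [div_le_iff₀ hpos]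
          have := ww_le h h5
          calc _ ≤ 4 * (Fintype.card (S ⊕ Bool) : ℝ) * (3 * hh a b) := by gcongr
            _ = _ := by ring
  exact_mod_cast this

open Classical in
lemma big_count (S : Finset ℕ) (hSp : ∀ p ∈ S, p.Prime) (h5 : 5 ∈ S) :
    {x : ℤ × ℤ | Sol S x.1 x.2 ∧ 1000 ≤ hh x.1 x.2}.Finite ∧
    {x : ℤ × ℤ | Sol S x.1 x.2 ∧ 1000 ≤ hh x.1 x.2}.ncard ≤ 9216 * 4 ^ S.card * 2 ^ (13 * (S.card + 2)) := by
  set F : Finset ((Bool → Fin 3 → Bool) × (Bool → Fin 3) × (S → Fin 4) × Fin 16 × (S ⊕ Bool → ℕ)) :=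
    univ ×ˢ univ ×ˢ univ ×ˢ univ ×ˢ vecs (S ⊕ Bool) (12 * Fintype.card (S ⊕ Bool)) with hF
  have hmaps : ∀ x ∈ {x : ℤ × ℤ | Sol S x.1 x.2 ∧ 1000 ≤ hh x.1 x.2}, key S x ∈ (F : Set _) := by
    rintro x ⟨h1, h2⟩
    simp only [hF, Finset.mem_coe, mem_product, mem_univ, true_and]
    exact mem_vecs _ _ _ (ev_sum h1 h5 h2)
  have hinj : Set.InjOn (key S) {x : ℤ × ℤ | Sol S x.1 x.2 ∧ 1000 ≤ hh x.1 x.2} := by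
    rintro x ⟨h1, h2⟩ y ⟨h3, h4⟩ hk
    simp only [key, Prod.mk.injEq, Fin.mk.injEq] at hk
    obtain ⟨k1, k2, k3, k4, k5⟩ := hk
    have := class_inj h1 h3 hSp h5 h2 h4 (fun p hp => congrFun k3 ⟨p, hp⟩) (congrFun k2)
      (fun σ i => by simpa using congrFun (congrFun k1 σ) i) (congrFun k5) k4
    exact Prod.ext this.1 this.2
  refine ⟨Set.Finite.of_injOn hmaps hinj F.finite_toSet, ?_⟩
  refine (Set.ncard_le_ncard_of_injOn _ hmaps hinj F.finite_toSet).trans ?_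
  rw [Set.ncard_coe_finset, hF]
  simp only [card_product, card_univ]
  have hc : Fintype.card (S ⊕ Bool) = S.card + 2 := by simp
  have := card_vecs (S ⊕ Bool) (12 * Fintype.card (S ⊕ Bool))
  rw [hc] at this ⊢
  have e : 12 * (S.card + 2) + (S.card + 2) = 13 * (S.card + 2) := by ring
  rw [e] at this
  simp only [Fintype.card_fun, Fintype.card_bool, Fintype.card_fin, Fintype.card_coe]
  calc _ ≤ (2 ^ 3) ^ 2 * (3 ^ 2 * (4 ^ S.card * (16 * 2 ^ (13 * (S.card + 2))))) := by gcongr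
    _ = _ := by ring
end PartComb

section PartFin
open Finset

lemma small_count_gen (S : Finset ℕ) (K : ℕ) (hK1 : 1 ≤ K) (hK : Real.exp 1000 ≤ (K : ℝ) ^ 2) :
    {x : ℤ × ℤ | Sol S x.1 x.2 ∧ ¬ 1000 ≤ hh x.1 x.2}.Finite ∧
    {x : ℤ × ℤ | Sol S x.1 x.2 ∧ ¬ 1000 ≤ hh x.1 x.2}.ncard ≤ (3 * K) * (3 * K) := by
  set F : Finset (ℤ × ℤ) := Finset.Icc (-(K : ℤ)) K ×ˢ Finset.Icc (-(K : ℤ)) K with hF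
  have key : ∀ (z : ℤ) (h : ℝ), (z : ℝ) ^ 2 ≤ Real.exp h → h ≤ 1000 → z ∈ Finset.Icc (-(K : ℤ)) K := by
    intro z h h1 h2
    have h3 : Real.exp h ≤ (K : ℝ) ^ 2 := (Real.exp_le_exp.mpr h2).trans hK
    have h4 := abs_le.mp (abs_le_of_sq_le_sq (h1.trans h3) (by positivity))
    rw [Finset.mem_Icc]
    exact ⟨by exact_mod_cast h4.1, by exact_mod_cast h4.2⟩
  have hsub : {x : ℤ × ℤ | Sol S x.1 x.2 ∧ ¬ 1000 ≤ hh x.1 x.2} ⊆ (F : Set (ℤ × ℤ)) := by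
    rintro x ⟨h1, h2⟩
    have hb := hh_bound h1
    rw [not_le] at h2
    rw [Finset.mem_coe, hF, mem_product]
    exact ⟨key _ _ hb.1 h2.le, key _ _ hb.2 h2.le⟩
  refine ⟨F.finite_toSet.subset hsub, ?_⟩
  refine (Set.ncard_le_ncard hsub F.finite_toSet).trans ?_
  rw [Set.ncard_coe_finset, hF, card_product, Int.card_Icc]
  have e : ((K : ℤ) + 1 - -(K : ℤ)).toNat ≤ 3 * K := by omega
  exact Nat.mul_le_mul e e

lemma small_count (S : Finset ℕ) :
    {x : ℤ × ℤ | Sol S x.1 x.2 ∧ ¬ 1000 ≤ hh x.1 x.2}.Finite ∧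
    {x : ℤ × ℤ | Sol S x.1 x.2 ∧ ¬ 1000 ≤ hh x.1 x.2}.ncard ≤ 9 * 7 ^ 1000 := by
  have hK : Real.exp 1000 ≤ ((7 ^ 500 : ℕ) : ℝ) ^ 2 := by
    calc Real.exp 1000 = Real.exp 1 ^ 1000 := by rw [← Real.exp_nat_mul]; norm_num
      _ ≤ 7 ^ 1000 := by
          have := Real.exp_one_lt_d9
          gcongr
          linarith
      _ = _ := by rw [Nat.cast_pow, ← pow_mul, Nat.cast_ofNat]
  obtain ⟨h1, h2⟩ := small_count_gen S (7 ^ 500) (Nat.one_le_pow _ _ (by norm_num)) hK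
  refine ⟨h1, h2.trans (le_of_eq ?_)⟩
  rw [show 1000 = 500 + 500 by rfl, pow_add]
  generalize 7 ^ 500 = k
  ring

lemma all_count (S : Finset ℕ) (hSp : ∀ p ∈ S, p.Prime) (h5 : 5 ∈ S) :
    {x : ℤ × ℤ | Sol S x.1 x.2}.Finite ∧
    {x : ℤ × ℤ | Sol S x.1 x.2}.ncard ≤ 9 * 7 ^ 1000 + 9216 * 4 ^ S.card * 2 ^ (13 * (S.card + 2)) := by
  obtain ⟨f1, c1⟩ := small_count S
  obtain ⟨f2, c2⟩ := big_count S hSp h5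
  have hsub : {x : ℤ × ℤ | Sol S x.1 x.2} ⊆ {x : ℤ × ℤ | Sol S x.1 x.2 ∧ ¬ 1000 ≤ hh x.1 x.2} ∪
      {x : ℤ × ℤ | Sol S x.1 x.2 ∧ 1000 ≤ hh x.1 x.2} := by
    intro x hx
    by_cases h : 1000 ≤ hh x.1 x.2
    · exact Or.inr ⟨hx, h⟩
    · exact Or.inl ⟨hx, h⟩
  have ff := f1.union f2
  refine ⟨ff.subset hsub, ?_⟩
  refine (Set.ncard_le_ncard hsub ff).trans ((Set.ncard_union_le _ _).trans ?_)
  exact Nat.add_le_add c1 c2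

lemma final_num (s t : ℕ) (h : s ≤ t + 1) :
    2 * (9 * 7 ^ 1000 + 9216 * 4 ^ s * 2 ^ (13 * (s + 2))) ≤ 7 ^ 1815 + 6 * 7 ^ (20 * (t + 1)) := by
  have h1 : 2 * (9 * 7 ^ 1000) ≤ 7 ^ 1815 := by
    calc 2 * (9 * 7 ^ 1000) ≤ 7 ^ 2 * 7 ^ 1000 := by
          rw [← mul_assoc]; exact Nat.mul_le_mul_right _ (by norm_num)
      _ = 7 ^ 1002 := by rw [← pow_add]
      _ ≤ 7 ^ 1815 := Nat.pow_le_pow_right (by norm_num) (by norm_num)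
  have h2 : 2 * (9216 * 4 ^ s * 2 ^ (13 * (s + 2))) ≤ 6 * 7 ^ (20 * (t + 1)) := by
    calc 2 * (9216 * 4 ^ s * 2 ^ (13 * (s + 2))) = 18432 * 2 ^ 26 * (2 ^ 15) ^ s := by
          rw [show 13 * (s + 2) = 13 * s + 26 by ring, pow_add, pow_mul,
            show (2:ℕ) ^ 15 = 4 * 2 ^ 13 by norm_num, mul_pow]; ring
      _ ≤ 18432 * 2 ^ 26 * (2 ^ 15) ^ (t + 1) := Nat.mul_le_mul_left _ (Nat.pow_le_pow_right (by norm_num) h)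
      _ ≤ (2 ^ 41) ^ (t + 1) * (2 ^ 15) ^ (t + 1) := by
          apply Nat.mul_le_mul_right
          calc 18432 * 2 ^ 26 ≤ (2 ^ 41) ^ 1 := by norm_num
            _ ≤ _ := Nat.pow_le_pow_right (by norm_num) (by omega)
      _ = (2 ^ 56) ^ (t + 1) := by rw [← mul_pow, ← pow_add]
      _ ≤ (7 ^ 20) ^ (t + 1) := Nat.pow_le_pow_left (by norm_num) _
      _ ≤ 6 * (7 ^ 20) ^ (t + 1) := by omega
      _ = _ := by rw [← pow_mul]
  rw [mul_add]
  exact Nat.add_le_add h1 h2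

end PartFin

open WeierstrassCurve

theorem bound_order_five (Δ : ℤ) (hΔ : Δ ≠ 0) (t : ℕ)
    (ht : t = Δ.natAbs.primeFactors.card) (S : Set (ℤ × ℤ))
    (hS : S = {AB : ℤ × ℤ | 4 * AB.1 ^ 3 + 27 * AB.2 ^ 2 ≠ 0 ∧
      -16 * (4 * AB.1 ^ 3 + 27 * AB.2 ^ 2) = Δ ∧
      ∃ P : WeierstrassCurve.Affine.Point
        (⟨0, 0, 0, (AB.1 : ℚ), (AB.2 : ℚ)⟩ : WeierstrassCurve.Affine ℚ),
        addOrderOf P = 5}) :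
    S.Finite ∧ S.ncard ≤ 7 ^ 1815 + 6 * 7 ^ (20 * (t + 1)) := by
  classical
  set Q : Finset ℕ := insert 5 Δ.natAbs.primeFactors with hQ
  have hQp : ∀ p ∈ Q, p.Prime := by
    intro p hp
    rcases Finset.mem_insert.mp hp with h | h
    · rw [h]; norm_num
    · exact Nat.prime_of_mem_primeFactors h
  have hQ5 : 5 ∈ Q := Finset.mem_insert_self _ _
  have hQc : Q.card ≤ t + 1 := by rw [ht]; exact Finset.card_insert_le _ _
  have hex : ∀ AB ∈ S, ∃ x : ℤ × ℤ, Sol Q x.1 x.2 ∧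
      -48 ^ 3 * AB.1 ^ 3 * (x.1 ^ 5 * x.2 ^ 5 * (x.1 ^ 2 - 11 * x.1 * x.2 - x.2 ^ 2)) =
        Δ * (x.1 ^ 4 - 12 * x.1 ^ 3 * x.2 + 14 * x.1 ^ 2 * x.2 ^ 2 + 12 * x.1 * x.2 ^ 3 + x.2 ^ 4) ^ 3 := by
    intro AB hAB
    rw [hS] at hAB
    obtain ⟨-, hd, P, hP⟩ := hAB
    obtain ⟨a, b, h1, h2, h3, h4, h5, h6⟩ := ec_main AB.1 AB.2 Δ hΔ hd P hP
    refine ⟨(a, b), ⟨h1, h2, h3, h4, ?_⟩, h6⟩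
    intro p hp hpd
    have h7 := h5 p hp hpd
    rcases (Nat.prime_iff_prime_int.mp hp).dvd_or_dvd h7 with h | h
    · have h8 : p ∣ 5 := by exact_mod_cast h
      rw [(Nat.prime_dvd_prime_iff_eq hp (by norm_num)).mp h8]
      exact hQ5
    · apply Finset.mem_insert_of_mem
      rw [Nat.mem_primeFactors]
      exact ⟨hp, Int.natCast_dvd.mp h, Int.natAbs_ne_zero.mpr hΔ⟩
  choose! f hf1 hf2 using hex
  obtain ⟨hfin, hcard⟩ := all_count Q hQp hQ5
  have hfin2 : ({x : ℤ × ℤ | Sol Q x.1 x.2} ×ˢ (Set.univ : Set Bool)).Finite := hfin.prod Set.finite_univ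
  have hmaps : ∀ AB ∈ S, (f AB, decide (0 < AB.2)) ∈ ({x : ℤ × ℤ | Sol Q x.1 x.2} ×ˢ (Set.univ : Set Bool)) :=
    fun AB hAB => ⟨hf1 AB hAB, trivial⟩
  have hinj : Set.InjOn (fun AB : ℤ × ℤ => (f AB, decide (0 < AB.2))) S := by
    intro x hx y hy hxy
    simp only [Prod.mk.injEq, decide_eq_decide] at hxy
    obtain ⟨e1, e2⟩ := hxy
    have p1 := hf2 x hx
    have p2 := hf2 y hy
    have q := hf1 y hy
    rw [e1, ← p2] at p1
    have hcc : (f y).1 ^ 2 - 11 * (f y).1 * (f y).2 - (f y).2 ^ 2 ≠ 0 := q.hc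
    have hne := mul_ne_zero (mul_ne_zero (pow_ne_zero 5 q.ha) (pow_ne_zero 5 q.hb)) hcc
    have p3 := mul_right_cancel₀ hne p1
    have p4 : x.1 ^ 3 = y.1 ^ 3 := by linarith
    have p5 : x.1 = y.1 := (Odd.strictMono_pow (by decide : Odd 3)).injective p4
    have d1 : -16 * (4 * x.1 ^ 3 + 27 * x.2 ^ 2) = Δ := by rw [hS] at hx; exact hx.2.1
    have d2 : -16 * (4 * y.1 ^ 3 + 27 * y.2 ^ 2) = Δ := by rw [hS] at hy; exact hy.2.1
    have p6 : x.2 ^ 2 = y.2 ^ 2 := by rw [p4] at d1; linarith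
    have p7 : x.2 = y.2 := by
      rcases sq_eq_sq_iff_eq_or_eq_neg.mp p6 with h | h
      · exact h
      · omega
    exact Prod.ext p5 p7
  refine ⟨Set.Finite.of_injOn hmaps hinj hfin2, ?_⟩
  refine (Set.ncard_le_ncard_of_injOn _ hmaps hinj hfin2).trans ?_
  rw [Set.ncard_prod, Set.ncard_univ, Nat.card_eq_fintype_card, Fintype.card_bool, mul_comm]
  exact (Nat.mul_le_mul_left 2 hcard).trans (final_num _ _ hQc)
end

section
/- Fix a nonzero integer Δ and let t be the number of distinct prime factors of Δ. Then the set of pairs (A, B) ∈ ℤ × ℤ such that 4A³ + 27B² ≠ 0, the discriminant −16(4A³ + 27B²) of the elliptic curve Y² = X³ + A·X + B equals Δ, and this curve has a rational point of order 7, is finite and has cardinality at most 7¹⁹⁴⁴⁰ + 6·7^(70(t+1)). -/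
open WeierstrassCurve

/-- The coefficient `A` of the universal curve with a point of order seven. -/
def cA (d : ℚ) : ℚ := -((d ^ 2 - d + 1) *
  (d ^ 6 - 11 * d ^ 5 + 30 * d ^ 4 - 15 * d ^ 3 - 10 * d ^ 2 + 5 * d + 1)) / 48

/-- The coefficient `B` of the universal curve with a point of order seven. -/
def cB (d : ℚ) : ℚ := (d ^ 12 - 18 * d ^ 11 + 117 * d ^ 10 - 354 * d ^ 9 + 570 * d ^ 8
  - 486 * d ^ 7 + 273 * d ^ 6 - 222 * d ^ 5 + 174 * d ^ 4 - 46 * d ^ 3 - 15 * d ^ 2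
  + 6 * d + 1) / 864

/-- The discriminant of the universal curve with a point of order seven. -/
def cD (d : ℚ) : ℚ := d ^ 7 * (d - 1) ^ 7 * (d ^ 3 - 8 * d ^ 2 + 5 * d + 1)

lemma tate_algebra (A B x1 y1 l e g : ℚ) (hy : y1 ≠ 0) (he : e ≠ 0) (hg0 : g ≠ 0)
    (hA : A = 2 * y1 * l - 3 * x1 ^ 2) (hB : B = y1 ^ 2 - x1 ^ 3 - A * x1)
    (hl : l ^ 2 = 3 * x1 + e) (hg : g = y1 + l * e)
    (hR : e ^ 3 * (e ^ 3 - 4 * g * y1) = 16 * y1 * g ^ 3) :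
    ∃ d w : ℚ, d ≠ 0 ∧ d ≠ 1 ∧ A = cA d * w ^ 4 ∧ B = cB d * w ^ 6 ∧
      -16 * (4 * A ^ 3 + 27 * B ^ 2) = cD d * w ^ 12 := by
  have hd0 : e ^ 3 / (4 * y1 * g) ≠ 0 := by positivity
  have hd1 : e ^ 3 / (4 * y1 * g) ≠ 1 := by
    intro h
    rw [div_eq_one_iff_eq (by positivity)] at h
    have : 16 * y1 * g ^ 3 = 0 := by rw [← hR, h]; ring
    have : 16 * y1 * g ^ 3 ≠ 0 := by positivity
    contradiction
  obtain ⟨w, hw⟩ : ∃ w, w = -2 * y1 / e := ⟨_, rfl⟩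
  refine ⟨e ^ 3 / (4 * y1 * g), w, hd0, hd1, ?_⟩
  obtain ⟨d, hd⟩ : ∃ d, d = e ^ 3 / (4 * y1 * g) := ⟨_, rfl⟩
  rw [← hd]
  have hw0 : w ≠ 0 := by
    rw [hw]; exact div_ne_zero (mul_ne_zero (by norm_num) hy) he
  have hg2 : g / y1 = d ^ 2 - d := by
    rw [hd]; field_simp; linear_combination (-1) * hR
  have hb : e = (d ^ 3 - d ^ 2) * w ^ 2 := by
    have : d ^ 3 - d ^ 2 = d * (d ^ 2 - d) := by ring
    rw [this, ← hg2, hd, hw]; field_simp; norm_num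
  have hy1 : y1 = -(d ^ 3 - d ^ 2) * w ^ 3 / 2 := by
    have : y1 = - e * w / 2 := by rw [hw]; field_simp
    rw [this, hb]; ring
  have hl1 : l = (1 - (d ^ 2 - d)) * w / 2 := by
    rw [← hg2, hw, hg]; field_simp; ring
  have hx1 : x1 = (l ^ 2 - e) / 3 := by linarith
  have rA : A = cA d * w ^ 4 := by
    rw [hA, hx1, hl1, hy1, hb]; simp only [cA]; ring
  have rB : B = cB d * w ^ 6 := by
    rw [hB, rA, hx1, hl1, hy1, hb]; simp only [cA, cB]; ring
  refine ⟨rA, rB, ?_⟩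
  rw [rA, rB]; simp only [cA, cB, cD]; ring

lemma dbl_form (A B : ℚ) (x y : ℚ)
    (h : Affine.Nonsingular (⟨0, 0, 0, A, B⟩ : WeierstrassCurve.Affine ℚ) x y)
    (h2 : Affine.Point.some x y h + Affine.Point.some x y h ≠ 0) :
    y ≠ 0 ∧ ∃ (l x2 y2 : ℚ)
      (h2 : Affine.Nonsingular (⟨0, 0, 0, A, B⟩ : WeierstrassCurve.Affine ℚ) x2 y2),
      Affine.Point.some x y h + Affine.Point.some x y h = Affine.Point.some x2 y2 h2 ∧
      2 * y * l = 3 * x ^ 2 + A ∧ x2 = l ^ 2 - 2 * x ∧ y2 = -(y + l * (x2 - x)) := by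
  have hy : y ≠ 0 := by
    intro h
    apply h2
    apply Affine.Point.add_self_of_Y_eq
    simp [Affine.negY, h]
  have hyn : y ≠ Affine.negY (⟨0, 0, 0, A, B⟩ : WeierstrassCurve.Affine ℚ) x y := by
    simp only [Affine.negY]
    intro h; apply hy; linarith
  refine ⟨hy, Affine.slope (⟨0, 0, 0, A, B⟩ : WeierstrassCurve.Affine ℚ) x x y y, _, _, _, Affine.Point.add_self_of_Y_ne (h₁ := h) hyn, ?_, ?_, ?_⟩
  · rw [Affine.slope_of_Y_ne rfl hyn]
    have : y - Affine.negY (⟨0, 0, 0, A, B⟩ : WeierstrassCurve.Affine ℚ) x y = 2 * y := by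
      simp only [Affine.negY]; ring
    rw [this]; field_simp; ring
  · simp only [Affine.addX]; ring
  · simp only [Affine.addY, Affine.negAddY, Affine.negY]; ring

lemma add_form (A B : ℚ) (x y x' y' : ℚ)
    (h : Affine.Nonsingular (⟨0, 0, 0, A, B⟩ : WeierstrassCurve.Affine ℚ) x y)
    (h' : Affine.Nonsingular (⟨0, 0, 0, A, B⟩ : WeierstrassCurve.Affine ℚ) x' y')
    (hx : x ≠ x') :
    ∃ (l x2 y2 : ℚ)
      (h2 : Affine.Nonsingular (⟨0, 0, 0, A, B⟩ : WeierstrassCurve.Affine ℚ) x2 y2),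
      Affine.Point.some x y h + Affine.Point.some x' y' h' = Affine.Point.some x2 y2 h2 ∧
      l * (x - x') = y - y' ∧ x2 = l ^ 2 - x - x' := by
  refine ⟨Affine.slope (⟨0, 0, 0, A, B⟩ : WeierstrassCurve.Affine ℚ) x x' y y', _, _, _, Affine.Point.add_of_X_ne (h₁ := h) (h₂ := h') hx, ?_, ?_⟩
  · rw [Affine.slope_of_X_ne hx]
    have : x - x' ≠ 0 := sub_ne_zero.2 hx
    field_simp
  · simp only [Affine.addX]; ring

lemma curve_param (A B : ℚ) (P : WeierstrassCurve.Affine.Point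
        (⟨0, 0, 0, A, B⟩ : WeierstrassCurve.Affine ℚ)) (hP : addOrderOf P = 7) :
    ∃ d w : ℚ, d ≠ 0 ∧ d ≠ 1 ∧ A = cA d * w ^ 4 ∧ B = cB d * w ^ 6 ∧
      -16 * (4 * A ^ 3 + 27 * B ^ 2) = cD d * w ^ 12 := by
  have key : ∀ n : ℕ, n • P = 0 → 7 ∣ n := fun n hn => hP ▸ addOrderOf_dvd_of_nsmul_eq_zero hn
  have h7 : 7 • P = 0 := hP ▸ addOrderOf_nsmul_eq_zero P
  have h1 : P ≠ 0 := fun h => by have := key 1 (by simpa using h); omega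
  have h2 : P + P ≠ 0 := fun h => by have := key 2 (by rw [two_nsmul]; exact h); omega
  have h3 : P + (P + P) ≠ 0 := fun h => by
    have := key 3 (by rw [← h]; abel); omega
  have h4 : (P + P) + (P + P) ≠ 0 := fun h => by
    have := key 4 (by rw [← h]; abel); omega
  have h34 : P + (P + P) = - ((P + P) + (P + P)) := by
    rw [eq_neg_iff_add_eq_zero, ← h7]; abel
  have h31 : P + (P + P) ≠ P := fun h => h2 (by simpa using h)
  have h31' : P + (P + P) ≠ -P := fun h => by
    rw [eq_neg_iff_add_eq_zero] at h
    have := key 4 (by rw [← h]; abel); omega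
  have h21 : P ≠ P + P := fun h => h1 (by simpa using h)
  have h21' : P ≠ -(P + P) := fun h => by
    rw [eq_neg_iff_add_eq_zero] at h
    exact h3 h
  rcases P with _ | ⟨x1, y1, hns⟩
  · exact absurd rfl h1
  have heq := ((Affine.nonsingular_iff x1 y1).1 hns).1
  rw [Affine.equation_iff] at heq
  simp only [zero_mul, add_zero] at heq
  obtain ⟨hy, l, x2, y2, hns2, e2, hl, hx2, hy2⟩ := dbl_form A B x1 y1 hns h2
  rw [e2] at h2 h3 h4 h34 h31 h31' h21 h21'
  have hx12 : x1 ≠ x2 := by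
    intro h
    rcases Affine.Point.X_eq_iff.1 h with h | h
    · exact h21 h
    · exact h21' h
  obtain ⟨hy20, m, x4, y4, hns4, e4, hm, hx4, hy4⟩ := dbl_form A B x2 y2 hns2 h4
  obtain ⟨k, x3, y3, hns3, e3, hk, hx3⟩ := add_form A B x1 y1 x2 y2 hns hns2 hx12
  rw [e3] at h3 h34 h31 h31'
  rw [e4] at h34
  have hx34 : x3 = x4 := Affine.Point.X_eq_iff.2 (Or.inr h34)
  have hx31 : x3 ≠ x1 := by
    intro h
    rcases Affine.Point.X_eq_iff.1 h with h | h
    · exact h31 h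
    · exact h31' h
  obtain ⟨e, he⟩ : ∃ e, e = x2 - x1 := ⟨_, rfl⟩
  have he0 : e ≠ 0 := by rw [he]; exact sub_ne_zero.2 hx12.symm
  obtain ⟨g, hg⟩ : ∃ g, g = y1 + l * e := ⟨_, rfl⟩
  have hg0 : g ≠ 0 := by
    intro h; apply hy20; rw [hy2, ← he, ← hg, h]; simp
  have hk' : k = -(y1 + g) / e := by
    rw [eq_div_iff he0, he, hg, he]; linear_combination (-1) * hk + hy2
  have hl2 : l ^ 2 = 3 * x1 + e := by rw [he, hx2]; ring
  have hx2' : x2 = x1 + e := by rw [he]; ring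
  have hm' : m = -(2 * l * g + e ^ 2) / (2 * g) := by
    rw [eq_div_iff (by positivity)]
    have : y2 = - g := by rw [hy2, hg, he]
    rw [this, hx2'] at hm
    rw [hg] at hm ⊢
    linear_combination (-1) * hm + 2 * e * hl2 + hl
  refine tate_algebra A B x1 y1 l e g hy he0 hg0 (by linarith) (by linarith) hl2 hg ?_
  have E : x3 - x1 = x4 - x1 := by rw [hx34]
  have E3 : x3 - x1 = 4 * y1 * g / e ^ 2 := by
    have : x3 - x1 = k ^ 2 - l ^ 2 := by rw [hx3, hl2, hx2']; ring
    rw [this, hk', hg]; field_simp; ring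
  have E4 : x4 - x1 = e * (e ^ 3 - 4 * g * y1) / (4 * g ^ 2) := by
    have h1 : x4 - x1 = m ^ 2 - l ^ 2 - e := by rw [hx4, hl2, hx2']; ring
    have h2 : y1 = g - l * e := by rw [hg]; ring
    rw [h1, hm', h2]; field_simp; ring
  rw [E3, E4] at E
  field_simp at E
  linear_combination (-1) * E


lemma beta_nat_s18 (b : ℕ) : ∀ a : ℕ, ∫ s in (0:ℝ)..1, s ^ a * (1 - s) ^ b =
    (a.factorial * b.factorial : ℝ) / (a + b + 1).factorial := by
  induction b with
  | zero =>
    intro a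
    simp [Nat.factorial_succ]
    field_simp
  | succ b ih =>
    intro a
    have h := intervalIntegral.integral_eq_sub_of_hasDerivAt (a := (0:ℝ)) (b := 1)
      (f := fun s : ℝ => s ^ (a + 1) * (1 - s) ^ (b + 1))
      (f' := fun s => ((a:ℝ) + 1) * (s ^ a * (1 - s) ^ (b + 1))
        - ((b:ℝ) + 1) * (s ^ (a + 1) * (1 - s) ^ b))
      (by
        intro s _
        have h1 : HasDerivAt (fun s : ℝ => s ^ (a + 1)) (((a + 1 : ℕ) : ℝ) * s ^ a) s := by
          simpa using hasDerivAt_pow (a + 1) s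
        have h2 : HasDerivAt (fun s : ℝ => (1 - s) ^ (b + 1))
            (((b + 1 : ℕ) : ℝ) * (1 - s) ^ b * (-1)) s := by
          simpa using ((hasDerivAt_id' s).const_sub 1).fun_pow (b + 1)
        have h3 := h1.fun_mul h2
        have e : ((a:ℝ) + 1) * (s ^ a * (1 - s) ^ (b + 1)) - ((b:ℝ) + 1) * (s ^ (a + 1) * (1 - s) ^ b)
            = ((a + 1 : ℕ) : ℝ) * s ^ a * (1 - s) ^ (b + 1) +
              s ^ (a + 1) * (((b + 1 : ℕ) : ℝ) * (1 - s) ^ b * (-1)) := by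
          push_cast; ring
        rw [e]
        exact h3)
      (by apply Continuous.intervalIntegrable; fun_prop)
    rw [intervalIntegral.integral_sub (by apply Continuous.intervalIntegrable; fun_prop)
      (by apply Continuous.intervalIntegrable; fun_prop),
      intervalIntegral.integral_const_mul, intervalIntegral.integral_const_mul, ih (a + 1)] at h
    simp only [one_pow, sub_self, zero_pow (Nat.succ_ne_zero _), mul_zero, zero_mul] at h
    have e : a + 1 + b + 1 = a + (b + 1) + 1 := by ring
    rw [e] at h
    have ha : (a : ℝ) + 1 ≠ 0 := by positivity
    have hf : ((a + (b + 1) + 1).factorial : ℝ) ≠ 0 := by positivity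
    rw [Nat.factorial_succ a] at h
    rw [Nat.factorial_succ b]
    push_cast at h ⊢
    apply mul_left_cancel₀ ha
    rw [sub_eq_zero.1 h]
    field_simp

/-- The auxiliary binary forms. -/
def Wp {R : Type*} [CommRing R] (N : ℕ) (X Y : R) : R :=
  ∑ m ∈ Finset.range (N + 1),
    (((N + m).choose N * (2 * N - m).choose N : ℕ) : R) * X ^ (N - m) * (-Y) ^ m

lemma coef_eq (N m : ℕ) (hm : m ≤ N) :
    (N.choose m : ℝ) * (((N + m).factorial * (2 * N - m).factorial : ℝ) / (3 * N + 1).factorial) =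
    ((N.factorial : ℝ) ^ 3 / (3 * N + 1).factorial) *
      (((N + m).choose N * (2 * N - m).choose N : ℕ) : ℝ) := by
  have h1 := Nat.choose_mul_factorial_mul_factorial hm
  have h2 := Nat.choose_mul_factorial_mul_factorial (Nat.le_add_right N m)
  have h3 := Nat.choose_mul_factorial_mul_factorial (show N ≤ 2 * N - m by omega)
  rw [Nat.add_sub_cancel_left] at h2
  rw [show 2 * N - m - N = N - m by omega] at h3
  have hf : ((3 * N + 1).factorial : ℝ) ≠ 0 := by positivity
  have hm0 : (m.factorial : ℝ) ≠ 0 := by positivity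
  have hm1 : ((N - m).factorial : ℝ) ≠ 0 := by positivity
  rw [← h2, ← h3]
  have h1' : (N.choose m : ℝ) * m.factorial * (N - m).factorial = N.factorial := by
    exact_mod_cast h1
  push_cast
  field_simp
  rw [← h1']
  ring

lemma int_form (N : ℕ) (α β γ : ℝ) :
    ∫ t in α..β, ((t - α) * (t - β) * (t - γ)) ^ N =
      ((-1) ^ N * (N.factorial : ℝ) ^ 3 / (3 * N + 1).factorial) *
      ((β - α) ^ (2 * N + 1) * Wp N (α - γ) (γ - β)) := by
  have h := intervalIntegral.smul_integral_comp_mul_add (a := 0) (b := 1)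
    (fun t : ℝ => ((t - α) * (t - β) * (t - γ)) ^ N) (β - α) α
  rw [show (β - α) * 0 + α = α by ring, show (β - α) * 1 + α = β by ring] at h
  rw [← h]
  have h2 : ∀ s : ℝ, (((β - α) * s + α - α) * ((β - α) * s + α - β) * ((β - α) * s + α - γ)) ^ N =
      ∑ m ∈ Finset.range (N + 1), ((-1) ^ N * (β - α) ^ (2 * N) * (N.choose m : ℝ) * (α - γ) ^ (N - m) * (-(γ - β)) ^ m)
        * (s ^ (N + m) * (1 - s) ^ (2 * N - m)) := by
    intro s
    have e : ((β - α) * s + α - α) * ((β - α) * s + α - β) * ((β - α) * s + α - γ) =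
      ((-1) * (β - α) ^ 2 * s * (1 - s)) * (s * (-(γ - β)) + (1 - s) * (α - γ)) := by ring
    rw [e, mul_pow, add_pow, Finset.mul_sum]
    apply Finset.sum_congr rfl
    intro m hm
    have hm : m ≤ N := by simpa [Nat.lt_succ_iff] using hm
    rw [show 2 * N - m = N + (N - m) by omega]
    simp only [mul_pow, pow_add, ← pow_mul]
    ring
  simp_rw [h2]
  rw [intervalIntegral.integral_finsetSum
    (fun i _ => by apply Continuous.intervalIntegrable; fun_prop)]
  simp_rw [intervalIntegral.integral_const_mul, beta_nat_s18]
  rw [smul_eq_mul, Wp, Finset.mul_sum, Finset.mul_sum, Finset.mul_sum]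
  apply Finset.sum_congr rfl
  intro m hm
  have hm : m ≤ N := by simpa [Nat.lt_succ_iff] using hm
  have h5 := coef_eq N m hm
  rw [show N + m + (2 * N - m) + 1 = 3 * N + 1 by omega]
  linear_combination ((-1) ^ N * (β - α) ^ (2 * N + 1) * (α - γ) ^ (N - m) * (-(γ - β)) ^ m) * h5

lemma W_real (N : ℕ) (x y z : ℝ) (h : x + y + z = 0) :
    x ^ (2 * N + 1) * Wp N z y + y ^ (2 * N + 1) * Wp N x z + z ^ (2 * N + 1) * Wp N y x = 0 := by
  have hc : ((-1) ^ N * (N.factorial : ℝ) ^ 3 / (3 * N + 1).factorial) ≠ 0 := by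
    have : (N.factorial : ℝ) ≠ 0 := by positivity
    have : ((3 * N + 1).factorial : ℝ) ≠ 0 := by positivity
    refine div_ne_zero (mul_ne_zero (pow_ne_zero _ (by norm_num)) (by positivity)) this
  have i1 := int_form N 0 z (-y)
  have i2 := int_form N z (-y) 0
  have i3 := int_form N (-y) 0 z
  have c2 : ∀ t : ℝ, (t - z) * (t - -y) * (t - 0) = (t - 0) * (t - z) * (t - -y) := by intro t; ring
  have c3 : ∀ t : ℝ, (t - -y) * (t - 0) * (t - z) = (t - 0) * (t - z) * (t - -y) := by intro t; ring
  simp only [c2] at i2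
  simp only [c3] at i3
  have hcont : Continuous (fun t : ℝ => ((t - 0) * (t - z) * (t - -y)) ^ N) := by fun_prop
  have s1 := intervalIntegral.integral_add_adjacent_intervals
    (hcont.intervalIntegrable (μ := MeasureTheory.volume) 0 z) (hcont.intervalIntegrable z (-y))
  have s2 := intervalIntegral.integral_add_adjacent_intervals
    (hcont.intervalIntegrable (μ := MeasureTheory.volume) 0 (-y)) (hcont.intervalIntegrable (-y) 0)
  rw [intervalIntegral.integral_same, ← s1, i1, i2, i3, ← mul_add, ← mul_add] at s2
  have := (mul_eq_zero.1 s2).resolve_left hc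
  rw [show z - 0 = z by ring, show (0:ℝ) - -y = y by ring, show -y - z = x by linarith] at this
  linarith

lemma W_cast (N : ℕ) (X Y : ℤ) : ((Wp N X Y : ℤ) : ℝ) = Wp N (X : ℝ) (Y : ℝ) := by
  simp [Wp]

lemma W_int (N : ℕ) (x y z : ℤ) (h : x + y + z = 0) :
    x ^ (2 * N + 1) * Wp N z y + y ^ (2 * N + 1) * Wp N x z + z ^ (2 * N + 1) * Wp N y x = 0 := by
  have := W_real N x y z (by exact_mod_cast h)
  simp only [← W_cast] at this
  exact_mod_cast this

lemma W_bound (N : ℕ) (X Y H : ℤ) (hX : |X| ≤ H) (hY : |Y| ≤ H) :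
    |Wp N X Y| ≤ 16 ^ N * H ^ N := by
  have hH : 0 ≤ H := (abs_nonneg _).trans hX
  have key : ∀ m ∈ Finset.range (N + 1),
      |(((N + m).choose N * (2 * N - m).choose N : ℕ) : ℤ) * X ^ (N - m) * (-Y) ^ m| ≤
        8 ^ N * H ^ N := by
    intro m hm
    have hm : m ≤ N := by simpa [Nat.lt_succ_iff] using hm
    rw [abs_mul, abs_mul, abs_pow, abs_pow, abs_neg, Nat.abs_cast]
    have h1 : (N + m).choose N * (2 * N - m).choose N ≤ 8 ^ N := by
      calc _ ≤ 2 ^ (N + m) * 2 ^ (2 * N - m) :=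
            Nat.mul_le_mul (Nat.choose_le_two_pow _ _) (Nat.choose_le_two_pow _ _)
        _ = 8 ^ N := by
            rw [← pow_add, show N + m + (2 * N - m) = 3 * N by omega, pow_mul]; norm_num
    have h1' : (((N + m).choose N * (2 * N - m).choose N : ℕ) : ℤ) ≤ 8 ^ N := by exact_mod_cast h1
    calc _ ≤ 8 ^ N * H ^ (N - m) * H ^ m := by gcongr
      _ = 8 ^ N * H ^ N := by rw [mul_assoc, ← pow_add, Nat.sub_add_cancel hm]
  have h2 : ((N + 1 : ℕ) : ℤ) ≤ 2 ^ N := by exact_mod_cast Nat.lt_two_pow_self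
  calc |Wp N X Y| ≤ ∑ m ∈ Finset.range (N + 1), (8 ^ N * H ^ N : ℤ) :=
        (Finset.abs_sum_le_sum_abs _ _).trans (Finset.sum_le_sum key)
    _ = ((N + 1 : ℕ) : ℤ) * (8 ^ N * H ^ N) := by simp
    _ ≤ 2 ^ N * (8 ^ N * H ^ N) := by gcongr
    _ = 16 ^ N * H ^ N := by rw [← mul_assoc, ← mul_pow]; norm_num

lemma W_pos (N : ℕ) (X Y : ℤ) (h : X * Y < 0) : 0 < X ^ N * Wp N X Y := by
  rw [Wp, Finset.mul_sum]
  apply Finset.sum_pos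
  · intro m hm
    have hm : m ≤ N := by simpa [Nat.lt_succ_iff] using hm
    have hX : X ≠ 0 := by rintro rfl; simp at h
    have h1 : 0 < (X ^ (N - m)) ^ 2 := by positivity
    have h2 : 0 < (X * (-Y)) ^ m := pow_pos (by linarith) _
    have h3 : 0 < (((N + m).choose N * (2 * N - m).choose N : ℕ) : ℤ) := by
      exact_mod_cast Nat.mul_pos (Nat.choose_pos (by omega)) (Nat.choose_pos (by omega))
    have : X ^ N * ((((N + m).choose N * (2 * N - m).choose N : ℕ) : ℤ) * X ^ (N - m) * (-Y) ^ m) =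
      (((N + m).choose N * (2 * N - m).choose N : ℕ) : ℤ) * (X ^ (N - m)) ^ 2 * (X * (-Y)) ^ m := by
      have : X ^ N = X ^ (N - m) * X ^ m := by rw [← pow_add, Nat.sub_add_cancel hm]
      rw [this, mul_pow]; ring
    rw [this]; positivity
  · simp

/-- Components of the auxiliary vectors. -/
def zf (N : ℕ) (a b c : ℤ) : ℤ := a ^ (2 * N + 1) * Wp N c b

lemma zf_sum (N : ℕ) (a b c : ℤ) (h : a + b + c = 0) :
    zf N a b c + zf N b c a + zf N c a b = 0 := W_int N a b c h

lemma zf_sign (N : ℕ) (a b c : ℤ) (hab : 0 < a * b) (hac : a * c < 0) (hbc : b * c < 0) :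
    0 < zf N a b c * zf N b c a * (a * c) ^ N := by
  have h1 := W_pos N c b (by linarith)
  have h2 := W_pos N a c hac
  have h3 : 0 < (a * b) ^ (2 * N + 1) := by positivity
  have : zf N a b c * zf N b c a * (a * c) ^ N =
    (a * b) ^ (2 * N + 1) * (c ^ N * Wp N c b) * (a ^ N * Wp N a c) := by
    simp only [zf, mul_pow]; ring
  rw [this]; positivity

lemma nonvan_aux (N : ℕ) (a b c a' b' : ℤ) (hab : 0 < a * b) (hac : a * c < 0) (hbc : b * c < 0)
    (ha' : a' ≠ 0) (hb' : b' ≠ 0) (h : b' * zf N a b c = a' * zf N b c a) :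
    0 < a' * b' * (a * c) ^ N := by
  have h1 := zf_sign N a b c hab hac hbc
  have h3 : zf N a b c ≠ 0 := by intro h; rw [h] at h1; simp at h1
  have h2 : 0 < (b' * zf N a b c) ^ 2 := by positivity
  have h4 : (b' * zf N a b c) ^ 2 * (a * c) ^ (2 * N) =
    (a' * b' * (a * c) ^ N) * (zf N a b c * zf N b c a * (a * c) ^ N) := by
    rw [sq]; nth_rewrite 2 [h]; rw [two_mul, pow_add]; ring
  have hac0 : a * c ≠ 0 := hac.ne
  have h5 : 0 < (b' * zf N a b c) ^ 2 * (a * c) ^ (2 * N) := by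
    rw [pow_mul]; positivity
  rw [h4] at h5
  exact (pos_iff_pos_of_mul_pos h5).2 h1

lemma nonvan_pos (N : ℕ) (a b c a' b' : ℤ) (hab : 0 < a * b) (hac : a * c < 0) (hbc : b * c < 0)
    (ha' : a' ≠ 0) (hb' : b' ≠ 0) :
    b' * zf N a b c - a' * zf N b c a ≠ 0 ∨
    b' * zf (N + 1) a b c - a' * zf (N + 1) b c a ≠ 0 := by
  by_contra! hcon
  have h1 := nonvan_aux N a b c a' b' hab hac hbc ha' hb' (by linarith [hcon.1])
  have h2 := nonvan_aux (N + 1) a b c a' b' hab hac hbc ha' hb' (by linarith [hcon.2])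
  have : 0 < (a' * b' * (a * c) ^ N) * (a' * b' * (a * c) ^ (N + 1)) := mul_pos h1 h2
  have h3 : (a' * b' * (a * c) ^ N) * (a' * b' * (a * c) ^ (N + 1)) =
    (a' * b' * (a * c) ^ N) ^ 2 * (a * c) := by ring
  rw [h3] at this
  nlinarith [sq_nonneg (a' * b' * (a * c) ^ N)]

lemma M_cyc (a' b' c' z0 z1 z2 : ℤ) (h : a' + b' + c' = 0) (hz : z0 + z1 + z2 = 0) :
    b' * z0 - a' * z1 = c' * z1 - b' * z2 := by
  have : c' = - a' - b' := by linarith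
  have h2 : z2 = - z0 - z1 := by linarith
  rw [this, h2]; ring

lemma nonvan (N : ℕ) (a b c a' b' c' : ℤ) (h : a + b + c = 0) (h' : a' + b' + c' = 0)
    (ha : a ≠ 0) (hb : b ≠ 0) (hc : c ≠ 0) (ha' : a' ≠ 0) (hb' : b' ≠ 0) (hc' : c' ≠ 0) :
    b' * zf N a b c - a' * zf N b c a ≠ 0 ∨
    b' * zf (N + 1) a b c - a' * zf (N + 1) b c a ≠ 0 := by
  have r1 : ∀ N, b' * zf N a b c - a' * zf N b c a = c' * zf N b c a - b' * zf N c a b :=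
    fun N => M_cyc _ _ _ _ _ _ h' (zf_sum N a b c h)
  have r2 : ∀ N, c' * zf N b c a - b' * zf N c a b = a' * zf N c a b - c' * zf N a b c :=
    fun N => M_cyc _ _ _ _ _ _ (by linarith) (zf_sum N b c a (by linarith))
  have sgn : ∀ a b c : ℤ, a + b + c = 0 → 0 < a * b → a * c < 0 ∧ b * c < 0 := by
    intro a b c h hab
    have : c = - a - b := by linarith
    subst this
    constructor <;> nlinarith [sq_nonneg a, sq_nonneg b]
  rcases lt_or_gt_of_ne (mul_ne_zero ha hb) with h1 | h1
  · rcases lt_or_gt_of_ne (mul_ne_zero hb hc) with h2 | h2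
    · have h3 : 0 < c * a := by
        have : c * a ≠ 0 := mul_ne_zero hc ha
        have h5 : 0 < (a * b) * (b * c) := mul_pos_of_neg_of_neg h1 h2
        have h6 : (a * b) * (b * c) = b ^ 2 * (c * a) := by ring
        rw [h6] at h5
        exact pos_of_mul_pos_right h5 (sq_nonneg b)
      obtain ⟨q1, q2⟩ := sgn c a b (by linarith) h3
      have := nonvan_pos N c a b c' a' h3 q1 q2 hc' ha'
      simpa only [r1, r2] using this
    · obtain ⟨q1, q2⟩ := sgn b c a (by linarith) h2
      have := nonvan_pos N b c a b' c' h2 q1 q2 hb' hc'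
      simpa only [r1] using this
  · obtain ⟨q1, q2⟩ := sgn a b c (by linarith) h1
    exact nonvan_pos N a b c a' b' h1 q1 q2 ha' hb'

lemma fund (N : ℕ) (a b c a' b' c' H Y : ℤ) (h : a + b + c = 0) (h' : a' + b' + c' = 0)
    (hab : IsCoprime a b) (hbc : IsCoprime b c) (hac : IsCoprime a c)
    (haH : |a| ≤ H) (hbH : |b| ≤ H) (hcH : |c| ≤ H) (hbY : |b'| ≤ Y)
    (hM : b' * zf N a b c - a' * zf N b c a ≠ 0) :
    ((Int.gcd a' (a ^ (2 * N + 1)) * Int.gcd b' (b ^ (2 * N + 1)) *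
      Int.gcd c' (c ^ (2 * N + 1)) : ℕ) : ℤ) ≤
      16 ^ N * H ^ N * (Y * |a| ^ (2 * N + 1) + |a'| * H ^ (2 * N + 1)) := by
  set M := b' * zf N a b c - a' * zf N b c a with hMdef
  have r1 : M = c' * zf N b c a - b' * zf N c a b := M_cyc _ _ _ _ _ _ h' (zf_sum N a b c h)
  have dv : ∀ a b c a' : ℤ, (Int.gcd a' (a ^ (2 * N + 1)) : ℤ) ∣ a' ∧
      (Int.gcd a' (a ^ (2 * N + 1)) : ℤ) ∣ zf N a b c := by
    intro a b c a'
    exact ⟨Int.gcd_dvd_left .., (Int.gcd_dvd_right ..).trans (Dvd.intro _ rfl)⟩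
  have d0 : (Int.gcd a' (a ^ (2 * N + 1)) : ℤ) ∣ M :=
    dvd_sub (Dvd.dvd.mul_left (dv a b c a').2 _) (Dvd.dvd.mul_right (dv a b c a').1 _)
  have d1 : (Int.gcd b' (b ^ (2 * N + 1)) : ℤ) ∣ M :=
    dvd_sub (Dvd.dvd.mul_right (dv b c a b').1 _) (Dvd.dvd.mul_left (dv b c a b').2 _)
  have d2 : (Int.gcd c' (c ^ (2 * N + 1)) : ℤ) ∣ M := by
    rw [r1]
    exact dvd_sub (Dvd.dvd.mul_right (dv c a b c').1 _) (Dvd.dvd.mul_left (dv c a b c').2 _)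
  have cop : ∀ a b a' b' : ℤ, IsCoprime a b →
      IsCoprime (Int.gcd a' (a ^ (2 * N + 1)) : ℤ) (Int.gcd b' (b ^ (2 * N + 1)) : ℤ) := by
    intro a b a' b' hab
    exact ((hab.pow (m := 2 * N + 1) (n := 2 * N + 1)).of_isCoprime_of_dvd_left
      (Int.gcd_dvd_right ..)).of_isCoprime_of_dvd_right (Int.gcd_dvd_right ..)
  have d : ((Int.gcd a' (a ^ (2 * N + 1)) * Int.gcd b' (b ^ (2 * N + 1)) *
      Int.gcd c' (c ^ (2 * N + 1)) : ℕ) : ℤ) ∣ M := by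
    push_cast
    exact (IsCoprime.mul_left (cop _ _ _ _ hac) (cop _ _ _ _ hbc)).mul_dvd
      ((cop _ _ _ _ hab).mul_dvd d0 d1) d2
  have hH : 0 ≤ H := (abs_nonneg _).trans haH
  have hY : 0 ≤ Y := (abs_nonneg _).trans hbY
  calc _ ≤ |M| := Int.le_of_dvd (abs_pos.2 hM) ((dvd_abs _ _).2 d)
    _ ≤ |b'| * |zf N a b c| + |a'| * |zf N b c a| := by
      rw [hMdef, ← abs_mul, ← abs_mul]; exact abs_sub _ _
    _ ≤ Y * (|a| ^ (2 * N + 1) * (16 ^ N * H ^ N)) +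
        |a'| * (H ^ (2 * N + 1) * (16 ^ N * H ^ N)) := by
      rw [zf, zf, abs_mul, abs_mul, abs_pow, abs_pow]
      gcongr
      · exact W_bound N c b H hcH hbH
      · exact W_bound N a c H haH hcH
    _ = _ := by ring

/-- The logarithmic `p`-part of an integer. -/
noncomputable def vl (p : ℕ) (x : ℤ) : ℝ := (x.natAbs.factorization p : ℝ) * Real.log p

lemma vl_nonneg (p : ℕ) (x : ℤ) : 0 ≤ vl p x :=
  mul_nonneg (Nat.cast_nonneg _) (Real.log_natCast_nonneg p)

lemma log_fact (S : Finset ℕ) (n : ℕ) (hS : ∀ p, p.Prime → p ∣ n → p ∈ S) :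
    Real.log n = ∑ p ∈ S, (n.factorization p : ℝ) * Real.log p := by
  rw [Real.log_nat_eq_sum_factorization]
  apply Finsupp.sum_of_support_subset
  · intro p hp
    exact hS p (Nat.prime_of_mem_primeFactors hp) (Nat.dvd_of_mem_primeFactors hp)
  · simp

lemma log_abs_eq (S : Finset ℕ) (x : ℤ) (hS : ∀ p : ℕ, p.Prime → (p : ℤ) ∣ x → p ∈ S) :
    Real.log |(x : ℝ)| = ∑ p ∈ S, vl p x := by
  have := log_fact S x.natAbs (fun p hp hd => hS p hp (Int.natCast_dvd.2 hd))
  rw [Nat.cast_natAbs, Int.cast_abs] at this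
  exact this

lemma log_gcd (S : Finset ℕ) (x y : ℤ) (k : ℕ) (hy : y ≠ 0) (hx : x ≠ 0)
    (hS : ∀ p : ℕ, p.Prime → (p : ℤ) ∣ y → p ∈ S) :
    Real.log (Int.gcd y (x ^ k)) = ∑ p ∈ S, min (vl p y) (k * vl p x) := by
  rw [log_fact S]
  · apply Finset.sum_congr rfl
    intro p _
    rw [Int.gcd, Nat.factorization_gcd (by simpa using hy) (by simp [hx])]
    rw [Finsupp.inf_apply, Int.natAbs_pow, Nat.factorization_pow]
    simp only [vl, Finsupp.smul_apply, smul_eq_mul]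
    rw [← mul_assoc, ← min_mul_of_nonneg _ _ (Real.log_natCast_nonneg p)]
    push_cast
    rfl
  · intro p hp hd
    exact hS p hp ((Int.natCast_dvd_natCast.2 hd).trans (Int.gcd_dvd_left ..))

lemma log_add_le (A B : ℝ) (hA : 0 < A) (hB : 0 < B) :
    Real.log (A + B) ≤ Real.log 2 + max (Real.log A) (Real.log B) := by
  rcases le_total A B with h | h
  · rw [max_eq_right (Real.log_le_log hA h), ← Real.log_mul (by norm_num) hB.ne']
    exact Real.log_le_log (by positivity) (by linarith)
  · rw [max_eq_left (Real.log_le_log hB h), ← Real.log_mul (by norm_num) hA.ne']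
    exact Real.log_le_log (by positivity) (by linarith)

lemma fund_log (S : Finset ℕ) (N : ℕ) (a b c a' b' c' H Y : ℤ) (h : a + b + c = 0)
    (h' : a' + b' + c' = 0)
    (hab : IsCoprime a b) (hbc : IsCoprime b c) (hac : IsCoprime a c)
    (ha : a ≠ 0) (hb : b ≠ 0) (hc : c ≠ 0) (ha' : a' ≠ 0) (hb' : b' ≠ 0) (hc' : c' ≠ 0)
    (haS : ∀ p : ℕ, p.Prime → (p : ℤ) ∣ a' → p ∈ S)
    (hbS : ∀ p : ℕ, p.Prime → (p : ℤ) ∣ b' → p ∈ S)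
    (hcS : ∀ p : ℕ, p.Prime → (p : ℤ) ∣ c' → p ∈ S)
    (haH : |a| ≤ H) (hbH : |b| ≤ H) (hcH : |c| ≤ H) (hbY : |b'| ≤ Y)
    (hM : b' * zf N a b c - a' * zf N b c a ≠ 0) :
    ∑ p ∈ S, min (vl p a') ((2 * N + 1 : ℕ) * vl p a)
     + ∑ p ∈ S, min (vl p b') ((2 * N + 1 : ℕ) * vl p b)
     + ∑ p ∈ S, min (vl p c') ((2 * N + 1 : ℕ) * vl p c) ≤
    N * (4 * Real.log 2 + Real.log H) + Real.log 2 +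
      max (Real.log Y + (2 * N + 1 : ℕ) * Real.log |(a:ℝ)|)
        (Real.log |(a':ℝ)| + (2 * N + 1 : ℕ) * Real.log H) := by
  have hf := fund N a b c a' b' c' H Y h h' hab hbc hac haH hbH hcH hbY hM
  have hf' : ((Int.gcd a' (a ^ (2 * N + 1)) : ℝ) * Int.gcd b' (b ^ (2 * N + 1)) *
      Int.gcd c' (c ^ (2 * N + 1))) ≤
      16 ^ N * (H:ℝ) ^ N * (Y * |(a:ℝ)| ^ (2 * N + 1) + |(a':ℝ)| * (H:ℝ) ^ (2 * N + 1)) := by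
    exact_mod_cast hf
  have g0 : (Int.gcd a' (a ^ (2 * N + 1)) : ℝ) ≠ 0 := by
    have := Int.gcd_ne_zero_left (b := a ^ (2 * N + 1)) ha'
    exact_mod_cast this
  have g1 : (Int.gcd b' (b ^ (2 * N + 1)) : ℝ) ≠ 0 := by
    have := Int.gcd_ne_zero_left (b := b ^ (2 * N + 1)) hb'
    exact_mod_cast this
  have g2 : (Int.gcd c' (c ^ (2 * N + 1)) : ℝ) ≠ 0 := by
    have := Int.gcd_ne_zero_left (b := c ^ (2 * N + 1)) hc'
    exact_mod_cast this
  have hH : (0:ℝ) < H := by exact_mod_cast (abs_pos.2 ha).trans_le haH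
  have hY : (0:ℝ) < Y := by exact_mod_cast (abs_pos.2 hb').trans_le hbY
  have ha0 : (0:ℝ) < |(a:ℝ)| := abs_pos.2 (by exact_mod_cast ha)
  have ha0' : (0:ℝ) < |(a':ℝ)| := abs_pos.2 (by exact_mod_cast ha')
  rw [← log_gcd S a a' (2 * N + 1) ha' ha haS, ← log_gcd S b b' (2 * N + 1) hb' hb hbS,
    ← log_gcd S c c' (2 * N + 1) hc' hc hcS, ← Real.log_mul g0 g1,
    ← Real.log_mul (mul_ne_zero g0 g1) g2]
  have hpos : 0 < (Int.gcd a' (a ^ (2 * N + 1)) : ℝ) * Int.gcd b' (b ^ (2 * N + 1)) *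
      Int.gcd c' (c ^ (2 * N + 1)) := by positivity
  refine (Real.log_le_log hpos hf').trans ?_
  rw [Real.log_mul (by positivity) (by positivity), Real.log_mul (by positivity) (by positivity),
    Real.log_pow, Real.log_pow]
  have h16 : Real.log 16 = 4 * Real.log 2 := by
    rw [show (16:ℝ) = 2 ^ 4 by norm_num, Real.log_pow]; norm_num
  have := log_add_le (Y * |(a:ℝ)| ^ (2 * N + 1)) (|(a':ℝ)| * (H:ℝ) ^ (2 * N + 1))
    (by positivity) (by positivity)
  rw [Real.log_mul hY.ne' (by positivity), Real.log_mul ha0'.ne' (by positivity),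
    Real.log_pow, Real.log_pow] at this
  rw [h16]
  linarith

lemma minsum1 (S : Finset ℕ) (u v : ℕ → ℝ) (hu : ∀ p, 0 ≤ u p) (h q k : ℝ) (hh : 0 < h)
    (hq : 0 < q) (hk : q ≤ k * h) :
    ∑ p ∈ S, v p - q * ∑ p ∈ S, |u p / h - v p / q| ≤ ∑ p ∈ S, min (v p) (k * u p) := by
  rw [Finset.mul_sum, ← Finset.sum_sub_distrib]
  apply Finset.sum_le_sum
  intro p _
  have h1 := abs_nonneg (u p / h - v p / q)
  have h2 := neg_abs_le (u p / h - v p / q)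
  apply le_min
  · nlinarith
  · have h3 : q * (u p / h) ≤ k * u p := by
      rw [mul_div_assoc', div_le_iff₀ hh]
      nlinarith [hu p]
    have h4 : q * (v p / q) = v p := by field_simp
    nlinarith

lemma minsum2 (S : Finset ℕ) (u v : ℕ → ℝ) (hv : ∀ p, 0 ≤ v p) (h q : ℝ) (hh : 0 < h)
    (hq : 0 < q) (hk : h ≤ q) :
    ∑ p ∈ S, u p - h * ∑ p ∈ S, |u p / h - v p / q| ≤ ∑ p ∈ S, min (v p) (u p) := by
  rw [Finset.mul_sum, ← Finset.sum_sub_distrib]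
  apply Finset.sum_le_sum
  intro p _
  have h1 := abs_nonneg (u p / h - v p / q)
  have h2 := le_abs_self (u p / h - v p / q)
  apply le_min
  · have h3 : h * (v p / q) ≤ v p := by
      rw [mul_div_assoc', div_le_iff₀ hq]
      nlinarith [hv p]
    have h4 : h * (u p / h) = u p := by field_simp
    nlinarith
  · nlinarith

lemma absum (S : Finset ℕ) (u v : ℕ → ℝ) (h q : ℝ) :
    |(∑ p ∈ S, u p) / h - (∑ p ∈ S, v p) / q| ≤ ∑ p ∈ S, |u p / h - v p / q| := by
  rw [Finset.sum_div, Finset.sum_div, ← Finset.sum_sub_distrib]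
  exact Finset.abs_sum_le_sum_abs _ _

lemma scalar1 (ly0 ly1 ly2 lx0 h q k N L ε : ℝ) (hh : 0 < h) (hq : 0 < q) (hk : q ≤ k * h)
    (hk0 : 0 ≤ k)
    (h1 : q - L ≤ ly1) (h2 : q - L ≤ ly2) (h0 : ly0 ≤ q) (hd : lx0 / h - ly0 / q ≤ ε)
    (H : ly0 + ly1 + ly2 - q * ε ≤ N * (4 * L + h) + L + max (q + k * lx0) (ly0 + k * h))
    (hε : 0 ≤ ε) :
    2 * q ≤ (k + N) * h + ε * (k * h + q) + (4 * N + 3) * L := by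
  have hm : max (q + k * lx0) (ly0 + k * h) ≤ ly0 + k * h + k * h * ε := by
    apply max_le
    · have e1 : lx0 ≤ h * (ly0 / q + ε) := by
        have : lx0 = h * (lx0 / h) := by field_simp
        rw [this]; apply mul_le_mul_of_nonneg_left _ hh.le; linarith
      have e2 : k * lx0 ≤ k * (h * (ly0 / q + ε)) := mul_le_mul_of_nonneg_left e1 hk0
      have e3 : ly0 / q ≤ 1 := (div_le_one hq).2 h0
      have e4 : q * (ly0 / q) = ly0 := by field_simp
      nlinarith [mul_nonneg (sub_nonneg.2 hk) (sub_nonneg.2 e3)]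
    · have : 0 ≤ k * h * ε := by positivity
      linarith
  nlinarith

lemma scalar2 (lx0 lx1 lx2 ly0 h q L ε : ℝ) (hh : 0 < h) (hq : 0 < q) (hk : h ≤ q)
    (h1 : h - L ≤ lx1) (h2 : h - L ≤ lx2) (h0 : ly0 ≤ q) (hd : ly0 / q - lx0 / h ≤ ε)
    (H : lx0 + lx1 + lx2 - h * ε ≤ L + max (q + lx0) (ly0 + h))
    (hε : 0 ≤ ε) :
    2 * h ≤ q + 2 * h * ε + 3 * L := by
  have hm : max (q + lx0) (ly0 + h) ≤ q + lx0 + h * ε := by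
    apply max_le
    · have : 0 ≤ h * ε := by positivity
      linarith
    · have e1 : h * (ly0 / q) ≤ lx0 + h * ε := by
        have : lx0 = h * (lx0 / h) := by field_simp
        rw [this, ← mul_add]; apply mul_le_mul_of_nonneg_left _ hh.le; linarith
      have e3 : ly0 / q ≤ 1 := (div_le_one hq).2 h0
      have e4 : q * (ly0 / q) = ly0 := by field_simp
      nlinarith [mul_nonneg (sub_nonneg.2 hk) (sub_nonneg.2 e3)]
  nlinarith

lemma pair_bound (S : Finset ℕ) (a b c a' b' c' H Y : ℤ) (h : a + b + c = 0)
    (h' : a' + b' + c' = 0)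
    (hab : IsCoprime a b) (hbc : IsCoprime b c) (hac : IsCoprime a c)
    (ha : a ≠ 0) (hb : b ≠ 0) (hc : c ≠ 0) (ha' : a' ≠ 0) (hb' : b' ≠ 0) (hc' : c' ≠ 0)
    (haS : ∀ p : ℕ, p.Prime → (p : ℤ) ∣ a → p ∈ S)
    (hbS : ∀ p : ℕ, p.Prime → (p : ℤ) ∣ b → p ∈ S)
    (hcS : ∀ p : ℕ, p.Prime → (p : ℤ) ∣ c → p ∈ S)
    (haS' : ∀ p : ℕ, p.Prime → (p : ℤ) ∣ a' → p ∈ S)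
    (hbS' : ∀ p : ℕ, p.Prime → (p : ℤ) ∣ b' → p ∈ S)
    (hcS' : ∀ p : ℕ, p.Prime → (p : ℤ) ∣ c' → p ∈ S)
    (haH : |a| ≤ H) (hbH : |b| ≤ H) (hcH : |c| ≤ H)
    (haY : |a'| ≤ Y) (hbY : |b'| ≤ Y)
    (hb2 : H ≤ 2 * |b|) (hc2 : H ≤ 2 * |c|) (hb2' : Y ≤ 2 * |b'|) (hc2' : Y ≤ 2 * |c'|)
    (hbig : 1000 * Real.log 2 ≤ Real.log H) (hHY : Real.log H ≤ Real.log Y)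
    (hne : b' * a - a' * b ≠ 0)
    (hE : ∑ p ∈ S, |vl p a / Real.log H - vl p a' / Real.log Y|
      + ∑ p ∈ S, |vl p b / Real.log H - vl p b' / Real.log Y|
      + ∑ p ∈ S, |vl p c / Real.log H - vl p c' / Real.log Y| ≤ 1 / 20) :
    (9 / 5) * Real.log H ≤ Real.log Y ∧ Real.log Y ≤ 19 * Real.log H := by
  have hL : 0 < Real.log 2 := Real.log_pos (by norm_num)
  have hh : 0 < Real.log H := by linarith
  have hq : 0 < Real.log Y := by linarith
  have half : ∀ (x Z : ℤ), x ≠ 0 → 0 < Z → Z ≤ 2 * |x| → Real.log Z - Real.log 2 ≤ Real.log |(x:ℝ)| := by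
    intro x Z hx hZ hZx
    have hx0 : (0:ℝ) < |(x:ℝ)| := abs_pos.2 (by exact_mod_cast hx)
    have h1 : (Z:ℝ) ≤ 2 * |(x:ℝ)| := by exact_mod_cast hZx
    have := Real.log_le_log (by exact_mod_cast hZ) h1
    rw [Real.log_mul (by norm_num) hx0.ne'] at this
    linarith
  have hH0 : 0 < H := (abs_pos.2 ha).trans_le haH
  have hY0 : 0 < Y := (abs_pos.2 ha').trans_le haY
  have qb := half b H hb hH0 hb2
  have qc := half c H hc hH0 hc2
  have qb' := half b' Y hb' hY0 hb2'
  have qc' := half c' Y hc' hY0 hc2'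
  have qa' : Real.log |(a':ℝ)| ≤ Real.log Y :=
    Real.log_le_log (abs_pos.2 (by exact_mod_cast ha')) (by exact_mod_cast haY)
  have sa := absum S (fun p => vl p a) (fun p => vl p a') (Real.log H) (Real.log Y)
  rw [← log_abs_eq S a haS, ← log_abs_eq S a' haS'] at sa
  have n1 : 0 ≤ ∑ p ∈ S, |vl p b / Real.log H - vl p b' / Real.log Y| :=
    Finset.sum_nonneg fun _ _ => abs_nonneg _
  have n2 : 0 ≤ ∑ p ∈ S, |vl p c / Real.log H - vl p c' / Real.log Y| :=
    Finset.sum_nonneg fun _ _ => abs_nonneg _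
  obtain ⟨sa1, sa2⟩ := abs_le.1 (sa.trans (show _ ≤ (1:ℝ)/20 by linarith))
  constructor
  · have hM : b' * zf 0 a b c - a' * zf 0 b c a ≠ 0 := by simpa [zf, Wp] using hne
    have hf := fund_log S 0 a b c a' b' c' H Y h h' hab hbc hac ha hb hc ha' hb' hc' haS' hbS' hcS'
      haH hbH hcH hbY hM
    simp only [mul_zero, zero_add, Nat.cast_one, one_mul, CharP.cast_eq_zero, zero_mul] at hf
    have m0 := minsum2 S (fun p => vl p a) (fun p => vl p a') (fun p => vl_nonneg p a') _ _ hh hq hHY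
    have m1 := minsum2 S (fun p => vl p b) (fun p => vl p b') (fun p => vl_nonneg p b') _ _ hh hq hHY
    have m2 := minsum2 S (fun p => vl p c) (fun p => vl p c') (fun p => vl_nonneg p c') _ _ hh hq hHY
    rw [← log_abs_eq S _ haS] at m0
    rw [← log_abs_eq S _ hbS] at m1
    rw [← log_abs_eq S _ hcS] at m2
    have := scalar2 (Real.log |(a:ℝ)|) (Real.log |(b:ℝ)|) (Real.log |(c:ℝ)|) (Real.log |(a':ℝ)|)
      (Real.log H) (Real.log Y) (Real.log 2) (1/20) hh hq hHY qb qc qa' (by linarith)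
      (by nlinarith) (by norm_num)
    linarith
  · by_contra! hcon
    obtain ⟨N0, hN0⟩ : ∃ N0, N0 = ⌈(Real.log Y / Real.log H - 1) / 2⌉₊ := ⟨_, rfl⟩
    have ht : 19 < Real.log Y / Real.log H := by rw [lt_div_iff₀ hh]; exact hcon
    have u1 : (Real.log Y / Real.log H - 1) / 2 ≤ N0 := by rw [hN0]; exact Nat.le_ceil _
    have u2 : (N0 : ℝ) < (Real.log Y / Real.log H - 1) / 2 + 1 := by
      rw [hN0]; exact Nat.ceil_lt_add_one (by linarith)
    have u3 : 10 ≤ N0 := by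
      have : (9 : ℝ) < N0 := by linarith
      exact_mod_cast this
    have v1 : Real.log Y ≤ (2 * N0 + 1) * Real.log H := by
      rw [← div_le_iff₀ hh]; linarith
    have v2 : (2 * N0 - 1) * Real.log H < Real.log Y := by
      rw [← lt_div_iff₀ hh]; linarith
    have main : ∀ N : ℕ, 10 ≤ N → Real.log Y ≤ (2 * N + 1) * Real.log H →
        (2 * N - 3) * Real.log H < Real.log Y →
        b' * zf N a b c - a' * zf N b c a ≠ 0 → False := by
      intro N hN w1 w2 hM
      have hf := fund_log S N a b c a' b' c' H Y h h' hab hbc hac ha hb hc ha' hb' hc'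
        haS' hbS' hcS' haH hbH hcH hbY hM
      have w1' : Real.log Y ≤ (2 * N + 1 : ℕ) * Real.log H := by push_cast; exact w1
      have m0 := minsum1 S (fun p => vl p a) (fun p => vl p a') (fun p => vl_nonneg p a) _ _ _ hh hq w1'
      have m1 := minsum1 S (fun p => vl p b) (fun p => vl p b') (fun p => vl_nonneg p b) _ _ _ hh hq w1'
      have m2 := minsum1 S (fun p => vl p c) (fun p => vl p c') (fun p => vl_nonneg p c) _ _ _ hh hq w1'
      rw [← log_abs_eq S _ haS'] at m0
      rw [← log_abs_eq S _ hbS'] at m1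
      rw [← log_abs_eq S _ hcS'] at m2
      have := scalar1 (Real.log |(a':ℝ)|) (Real.log |(b':ℝ)|) (Real.log |(c':ℝ)|)
        (Real.log |(a:ℝ)|) (Real.log H) (Real.log Y) ((2 * N + 1 : ℕ) : ℝ) N (Real.log 2) (1/20)
        hh hq w1' (Nat.cast_nonneg _) qb' qc' qa' (by linarith) (by nlinarith) (by norm_num)
      push_cast at this
      have hN' : (10:ℝ) ≤ N := by exact_mod_cast hN
      have z1 : (4 * (N:ℝ) + 3) * Real.log 2 ≤ (4 * N + 3) * (Real.log H / 1000) := by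
        apply mul_le_mul_of_nonneg_left _ (by positivity); linarith
      nlinarith [mul_le_mul_of_nonneg_right hN' hh.le]
    rcases nonvan N0 a b c a' b' c' h h' ha hb hc ha' hb' hc' with hM | hM
    · exact main N0 u3 v1 (by nlinarith) hM
    · refine main (N0 + 1) (by omega) ?_ ?_ hM
      · push_cast; nlinarith
      · push_cast; nlinarith

lemma card_cells {ι : Type*} [Fintype ι] [DecidableEq ι] (R : ℕ) :
    ((Fintype.piFinset (fun _ : ι => Finset.range (R + 1))).filter
      (fun k => ∑ i, k i ≤ R)).card ≤ 2 ^ (R + Fintype.card ι) := by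
  set F := (Fintype.piFinset (fun _ : ι => Finset.range (R + 1))).filter
      (fun k => ∑ i, k i ≤ R) with hF
  have geo : ∑ j ∈ Finset.range (R + 1), (1 / 2 : ℝ) ^ j ≤ 2 := by
    have := sum_geometric_two_le (R + 1)
    simpa using this
  have h1 : ∑ k ∈ F, ∏ i, (1 / 2 : ℝ) ^ (k i) ≤ 2 ^ Fintype.card ι := by
    calc ∑ k ∈ F, ∏ i, (1 / 2 : ℝ) ^ (k i)
        ≤ ∑ k ∈ Fintype.piFinset (fun _ : ι => Finset.range (R + 1)), ∏ i, (1 / 2 : ℝ) ^ (k i) := by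
          apply Finset.sum_le_sum_of_subset_of_nonneg (Finset.filter_subset _ _)
          intros; positivity
      _ = ∏ _i : ι, ∑ j ∈ Finset.range (R + 1), (1 / 2 : ℝ) ^ j :=
          (Finset.prod_univ_sum (fun _ : ι => Finset.range (R + 1)) (fun _ j => (1 / 2 : ℝ) ^ j)).symm
      _ ≤ ∏ _i : ι, (2 : ℝ) := by
          apply Finset.prod_le_prod
          · intros; positivity
          · intros; exact geo
      _ = _ := by simp
  have h2 : (F.card : ℝ) * (1 / 2) ^ R ≤ ∑ k ∈ F, ∏ i, (1 / 2 : ℝ) ^ (k i) := by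
    rw [← nsmul_eq_mul]
    apply Finset.card_nsmul_le_sum
    intro k hk
    rw [Finset.prod_pow_eq_pow_sum]
    exact pow_le_pow_of_le_one (by norm_num) (by norm_num) (Finset.mem_filter.1 hk).2
  have h3 : (F.card : ℝ) ≤ 2 ^ (R + Fintype.card ι) := by
    have := h2.trans h1
    rw [one_div, inv_pow, ← div_eq_mul_inv, div_le_iff₀ (by positivity)] at this
    rw [pow_add]; linarith
  exact_mod_cast h3

lemma floor_close (K u v : ℝ) (hK : 0 < K) (hu : 0 ≤ u) (hv : 0 ≤ v)
    (h : ⌊K * u⌋₊ = ⌊K * v⌋₊) : |u - v| ≤ 1 / K := by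
  have a1 := Nat.floor_le (mul_nonneg hK.le hu)
  have a2 := Nat.lt_floor_add_one (K * u)
  have b1 := Nat.floor_le (mul_nonneg hK.le hv)
  have b2 := Nat.lt_floor_add_one (K * v)
  rw [h] at a1 a2
  have a3 : |(u - v) * K| ≤ 1 := by
    rw [abs_le]; constructor <;> nlinarith
  rw [abs_mul, abs_of_pos hK] at a3
  rwa [le_div_iff₀ hK]

lemma sum_close (S : Finset ℕ) (u v : ℕ → ℝ) (hu : ∀ p, 0 ≤ u p) (hv : ∀ p, 0 ≤ v p)
    (h : ∀ p ∈ S, ⌊(60 * S.card : ℝ) * u p⌋₊ = ⌊(60 * S.card : ℝ) * v p⌋₊) :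
    ∑ p ∈ S, |u p - v p| ≤ 1 / 60 := by
  rcases S.eq_empty_or_nonempty with rfl | hne
  · simp
  have hc : (0:ℝ) < S.card := by exact_mod_cast hne.card_pos
  calc ∑ p ∈ S, |u p - v p| ≤ ∑ p ∈ S, 1 / (60 * S.card : ℝ) :=
        Finset.sum_le_sum fun p hp => floor_close _ _ _ (by positivity) (hu p) (hv p) (h p hp)
    _ = 1 / 60 := by rw [Finset.sum_const, nsmul_eq_mul]; field_simp

lemma floor_sum (S : Finset ℕ) (u : ℕ → ℝ) (hu : ∀ p, 0 ≤ u p) (h : ∑ p ∈ S, u p ≤ 1) :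
    ∑ p : S, ⌊(60 * S.card : ℝ) * u p⌋₊ ≤ 60 * S.card := by
  have : ((∑ p : S, ⌊(60 * S.card : ℝ) * u p⌋₊ : ℕ) : ℝ) ≤ (60 * S.card : ℕ) := by
    push_cast
    calc ∑ p : S, ((⌊(60 * S.card : ℝ) * u p⌋₊ : ℕ) : ℝ) ≤ ∑ p : S, (60 * S.card : ℝ) * u p :=
          Finset.sum_le_sum fun p _ => Nat.floor_le (mul_nonneg (by positivity) (hu p))
      _ = (60 * S.card : ℝ) * ∑ p ∈ S, u p := by
          rw [Finset.mul_sum, Finset.sum_coe_sort S (fun p => (60 * S.card : ℝ) * u p)]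
      _ ≤ _ := by nlinarith [show (0:ℝ) ≤ 60 * S.card by positivity]
  exact_mod_cast this

lemma floor_log_gap (h q : ℝ) (hh : 1 ≤ h) (h1 : (9 / 5) * h ≤ q) (h2 : q ≤ 19 * h) :
    ⌊Real.log h / Real.log (9 / 5)⌋₊ % 7 ≠ ⌊Real.log q / Real.log (9 / 5)⌋₊ % 7 := by
  have hL : 0 < Real.log (9 / 5) := Real.log_pos (by norm_num)
  have l0 : 0 ≤ Real.log h := Real.log_nonneg hh
  have l1 : Real.log (9 / 5) + Real.log h ≤ Real.log q := by
    rw [← Real.log_mul (by norm_num) (by positivity)]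
    exact Real.log_le_log (by positivity) h1
  have l2 : Real.log q ≤ 6 * Real.log (9 / 5) + Real.log h := by
    have e : 6 * Real.log (9 / 5) = Real.log ((9 / 5) ^ 6) := by rw [Real.log_pow]; norm_num
    rw [e, ← Real.log_mul (by norm_num) (by positivity)]
    exact Real.log_le_log (by linarith) (by nlinarith)
  have g1 : ⌊Real.log h / Real.log (9 / 5)⌋₊ + 1 ≤ ⌊Real.log q / Real.log (9 / 5)⌋₊ := by
    rw [← Nat.floor_add_one (by positivity)]
    apply Nat.floor_le_floor
    rw [le_div_iff₀ hL, add_mul, div_mul_cancel₀ _ hL.ne']; linarith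
  have g2 : ⌊Real.log q / Real.log (9 / 5)⌋₊ ≤ ⌊Real.log h / Real.log (9 / 5)⌋₊ + 6 := by
    rw [← Nat.floor_add_ofNat (by positivity)]
    apply Nat.floor_le_floor
    rw [div_le_iff₀ hL, add_mul, div_mul_cancel₀ _ hL.ne']; linarith
  omega

/-- A nondegenerate coprime integer solution of `a + b + c = 0` supported on `S`, of height `H`. -/
structure Sol_s18 (S : Finset ℕ) (a b c H : ℤ) : Prop where
  sum : a + b + c = 0
  cab : IsCoprime a b
  cbc : IsCoprime b c
  cac : IsCoprime a c
  a0 : a ≠ 0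
  b0 : b ≠ 0
  c0 : c ≠ 0
  aS : ∀ p : ℕ, p.Prime → (p : ℤ) ∣ a → p ∈ S
  bS : ∀ p : ℕ, p.Prime → (p : ℤ) ∣ b → p ∈ S
  cS : ∀ p : ℕ, p.Prime → (p : ℤ) ∣ c → p ∈ S
  aH : |a| ≤ H
  bH : |b| ≤ H
  cH : |c| ≤ H
  big : 1000 * Real.log 2 ≤ Real.log H

lemma Sol_s18.rot {S : Finset ℕ} {a b c H : ℤ} (h : Sol_s18 S a b c H) : Sol_s18 S b c a H :=
  ⟨by linarith [h.sum], h.cbc, h.cac.symm, h.cab.symm, h.b0, h.c0, h.a0, h.bS, h.cS, h.aS,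
    h.bH, h.cH, h.aH, h.big⟩

lemma Sol_s18.vl_sum {S : Finset ℕ} {a b c H : ℤ} (h : Sol_s18 S a b c H) (hH : 0 < Real.log H) :
    ∑ p ∈ S, vl p a / Real.log H ≤ 1 := by
  rw [← Finset.sum_div, ← log_abs_eq S a h.aS, div_le_one hH]
  exact Real.log_le_log (abs_pos.2 (by exact_mod_cast h.a0)) (by exact_mod_cast h.aH)

lemma sunit_one {ι : Type*} (S : Finset ℕ) (T : Finset ι) (a b c H : ι → ℤ)
    (hT : ∀ x ∈ T, Sol_s18 S (a x) (b x) (c x) (H x))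
    (hb : ∀ x ∈ T, H x ≤ 2 * |b x|) (hc : ∀ x ∈ T, H x ≤ 2 * |c x|)
    (hne : ∀ x ∈ T, ∀ y ∈ T, x ≠ y → b y * a x - a y * b x ≠ 0) :
    T.card ≤ 7 * 2 ^ (183 * S.card) := by
  classical
  have hlog2 : (1 / 2 : ℝ) < Real.log 2 := by linarith [Real.log_two_gt_d9]
  have hH1 : ∀ x ∈ T, 1 ≤ Real.log (H x) := fun x hx => by linarith [(hT x hx).big]
  let f : ι → ℤ → ℕ → ℕ := fun x z p => ⌊(60 * S.card : ℝ) * (vl p z / Real.log (H x))⌋₊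
  let κ : ι → (S ⊕ S ⊕ S) → ℕ := fun x =>
    Sum.elim (fun p => f x (a x) p) (Sum.elim (fun p => f x (b x) p) (fun p => f x (c x) p))
  let e : ι → ℕ := fun x => ⌊Real.log (Real.log (H x)) / Real.log (9 / 5)⌋₊
  let C := (Fintype.piFinset (fun _ : S ⊕ S ⊕ S => Finset.range (180 * S.card + 1))).filter
      (fun k => ∑ i, k i ≤ 180 * S.card)
  have hκ : ∀ x ∈ T, ∑ i, κ x i ≤ 180 * S.card := by
    intro x hx
    have hp : 0 < Real.log (H x) := by linarith [hH1 x hx]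
    have s1 := floor_sum S (fun p => vl p (a x) / Real.log (H x))
      (fun p => div_nonneg (vl_nonneg _ _) hp.le) ((hT x hx).vl_sum hp)
    have s2 := floor_sum S (fun p => vl p (b x) / Real.log (H x))
      (fun p => div_nonneg (vl_nonneg _ _) hp.le) ((hT x hx).rot.vl_sum hp)
    have s3 := floor_sum S (fun p => vl p (c x) / Real.log (H x))
      (fun p => div_nonneg (vl_nonneg _ _) hp.le) ((hT x hx).rot.rot.vl_sum hp)
    simp only [Fintype.sum_sum_type, κ, Sum.elim_inl, Sum.elim_inr, f]
    omega
  have hcard : T.card ≤ (Finset.range 7 ×ˢ C).card := by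
    apply Finset.card_le_card_of_injOn (fun x => (e x % 7, κ x))
    · intro x hx
      simp only [Finset.coe_product, Set.mem_prod, Finset.mem_coe, Finset.mem_range, C,
        Finset.mem_filter, Fintype.mem_piFinset]
      refine ⟨Nat.mod_lt _ (by norm_num), ?_, hκ x hx⟩
      intro i
      have := Finset.single_le_sum (f := κ x) (fun i _ => Nat.zero_le _) (Finset.mem_univ i)
      have := hκ x hx
      omega
    · intro x hx y hy hxy
      simp only [Prod.mk.injEq] at hxy
      obtain ⟨he, hk⟩ := hxy
      by_contra hxny
      wlog hle : Real.log (H x) ≤ Real.log (H y) generalizing x y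
      · exact this hy hx he.symm hk.symm (Ne.symm hxny) (le_of_not_ge hle)
      have px : 0 < Real.log (H x) := by linarith [hH1 x hx]
      have py : 0 < Real.log (H y) := by linarith [hH1 y hy]
      have c1 := sum_close S (fun p => vl p (a x) / Real.log (H x))
        (fun p => vl p (a y) / Real.log (H y))
        (fun p => div_nonneg (vl_nonneg _ _) px.le) (fun p => div_nonneg (vl_nonneg _ _) py.le)
        (fun p hp => congrFun hk (Sum.inl ⟨p, hp⟩))
      have c2 := sum_close S (fun p => vl p (b x) / Real.log (H x))
        (fun p => vl p (b y) / Real.log (H y))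
        (fun p => div_nonneg (vl_nonneg _ _) px.le) (fun p => div_nonneg (vl_nonneg _ _) py.le)
        (fun p hp => congrFun hk (Sum.inr (Sum.inl ⟨p, hp⟩)))
      have c3 := sum_close S (fun p => vl p (c x) / Real.log (H x))
        (fun p => vl p (c y) / Real.log (H y))
        (fun p => div_nonneg (vl_nonneg _ _) px.le) (fun p => div_nonneg (vl_nonneg _ _) py.le)
        (fun p hp => congrFun hk (Sum.inr (Sum.inr ⟨p, hp⟩)))
      have X := hT x hx
      have Y := hT y hy
      have := pair_bound S (a x) (b x) (c x) (a y) (b y) (c y) (H x) (H y) X.sum Y.sum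
        X.cab X.cbc X.cac X.a0 X.b0 X.c0 Y.a0 Y.b0 Y.c0 X.aS X.bS X.cS Y.aS Y.bS Y.cS
        X.aH X.bH X.cH Y.aH Y.bH (hb x hx) (hc x hx) (hb y hy) (hc y hy) X.big hle
        (hne x hx y hy hxny) (by linarith)
      exact floor_log_gap _ _ (hH1 x hx) this.1 this.2 he
  have hC := card_cells (ι := S ⊕ S ⊕ S) (180 * S.card)
  refine hcard.trans ?_
  rw [Finset.card_product, Finset.card_range]
  apply Nat.mul_le_mul_left
  refine hC.trans (le_of_eq ?_)
  congr 1
  simp only [Fintype.card_sum, Fintype.card_coe]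
  ring

lemma sunit {ι : Type*} (S : Finset ℕ) (T : Finset ι) (a b c H : ι → ℤ)
    (hT : ∀ x ∈ T, Sol_s18 S (a x) (b x) (c x) (H x))
    (hH : ∀ x ∈ T, H x = max |a x| (max |b x| |c x|))
    (hne : ∀ x ∈ T, ∀ y ∈ T, x ≠ y → b y * a x - a y * b x ≠ 0) :
    T.card ≤ 21 * 2 ^ (183 * S.card) := by
  classical
  let T1 := T.filter (fun x => H x ≤ 2 * |b x| ∧ H x ≤ 2 * |c x|)
  let T2 := T.filter (fun x => H x ≤ 2 * |c x| ∧ H x ≤ 2 * |a x|)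
  let T3 := T.filter (fun x => H x ≤ 2 * |a x| ∧ H x ≤ 2 * |b x|)
  have cov : T ⊆ T1 ∪ (T2 ∪ T3) := by
    intro x hx
    have h1 := hH x hx
    have h2 := (hT x hx).sum
    simp only [T1, T2, T3, Finset.mem_union, Finset.mem_filter, hx, true_and]
    have := abs_nonneg (a x)
    grind
  have k1 : T1.card ≤ 7 * 2 ^ (183 * S.card) := by
    apply sunit_one S T1 a b c H
    · intro x hx; exact hT x (Finset.mem_filter.1 hx).1
    · intro x hx; exact (Finset.mem_filter.1 hx).2.1
    · intro x hx; exact (Finset.mem_filter.1 hx).2.2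
    · intro x hx y hy; exact hne x (Finset.mem_filter.1 hx).1 y (Finset.mem_filter.1 hy).1
  have k2 : T2.card ≤ 7 * 2 ^ (183 * S.card) := by
    apply sunit_one S T2 b c a H
    · intro x hx; exact (hT x (Finset.mem_filter.1 hx).1).rot
    · intro x hx; exact (Finset.mem_filter.1 hx).2.1
    · intro x hx; exact (Finset.mem_filter.1 hx).2.2
    · intro x hx y hy hxy h
      apply hne x (Finset.mem_filter.1 hx).1 y (Finset.mem_filter.1 hy).1 hxy
      have e1 := (hT x (Finset.mem_filter.1 hx).1).sum
      have e2 := (hT y (Finset.mem_filter.1 hy).1).sum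
      linear_combination h + b y * e1 - b x * e2
  have k3 : T3.card ≤ 7 * 2 ^ (183 * S.card) := by
    apply sunit_one S T3 c a b H
    · intro x hx; exact (hT x (Finset.mem_filter.1 hx).1).rot.rot
    · intro x hx; exact (Finset.mem_filter.1 hx).2.1
    · intro x hx; exact (Finset.mem_filter.1 hx).2.2
    · intro x hx y hy hxy h
      apply hne x (Finset.mem_filter.1 hx).1 y (Finset.mem_filter.1 hy).1 hxy
      have e1 := (hT x (Finset.mem_filter.1 hx).1).sum
      have e2 := (hT y (Finset.mem_filter.1 hy).1).sum
      linear_combination h - a y * e1 + a x * e2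
  have := Finset.card_le_card cov
  have := Finset.card_union_le T1 (T2 ∪ T3)
  have := Finset.card_union_le T2 T3
  omega

/-- Homogenized `c4`. -/
def hC (m n : ℤ) : ℤ := (m ^ 2 - m * n + n ^ 2) * (m ^ 6 - 11 * m ^ 5 * n + 30 * m ^ 4 * n ^ 2
  - 15 * m ^ 3 * n ^ 3 - 10 * m ^ 2 * n ^ 4 + 5 * m * n ^ 5 + n ^ 6)

lemma prime_dvd_disc (m n A D : ℤ) (hmn : IsCoprime m n)
    (h : hC m n ^ 3 * D = (-48 * A) ^ 3 * (m ^ 7 * n ^ 7 * (m - n) ^ 7 *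
      (m ^ 3 - 8 * m ^ 2 * n + 5 * m * n ^ 2 + n ^ 3)))
    (p : ℕ) (hp : p.Prime) (hd : (p : ℤ) ∣ m ∨ (p : ℤ) ∣ n ∨ (p : ℤ) ∣ m - n) :
    (p : ℤ) ∣ D := by
  have hp' : Prime (p : ℤ) := Nat.prime_iff_prime_int.1 hp
  have hr : (p : ℤ) ∣ hC m n ^ 3 * D := by
    rw [h]
    apply dvd_mul_of_dvd_right
    apply dvd_mul_of_dvd_left
    rcases hd with hd | hd | hd
    · exact ((dvd_pow hd (by norm_num)).mul_right _).mul_right _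
    · exact ((dvd_pow hd (by norm_num)).mul_left _).mul_right _
    · exact (dvd_pow hd (by norm_num)).mul_left _
  rcases hp'.dvd_or_dvd hr with hr | hr
  swap
  · exact hr
  exfalso
  have hr := hp'.dvd_of_dvd_pow hr
  have nb : ¬ ((p : ℤ) ∣ m ∧ (p : ℤ) ∣ n) := fun ⟨h1, h2⟩ =>
    hp'.not_isUnit (hmn.isUnit_of_dvd' h1 h2)
  rcases hd with hd | hd | hd
  · have h1 : (p : ℤ) ∣ hC m n - n ^ 8 := hd.trans ⟨(m - n) * (m * (m ^ 5 - 11 * m ^ 4 * n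
      + 30 * m ^ 3 * n ^ 2 - 15 * m ^ 2 * n ^ 3 - 10 * m * n ^ 4 + 5 * n ^ 5) + n ^ 6)
      + n ^ 2 * (m ^ 5 - 11 * m ^ 4 * n
      + 30 * m ^ 3 * n ^ 2 - 15 * m ^ 2 * n ^ 3 - 10 * m * n ^ 4 + 5 * n ^ 5), by
        simp only [hC]; ring⟩
    have h2 := (dvd_sub hr h1)
    rw [sub_sub_cancel] at h2
    exact nb ⟨hd, hp'.dvd_of_dvd_pow h2⟩
  · have h1 : (p : ℤ) ∣ hC m n - m ^ 8 := by
      have e : hC m n - m ^ 8 = n * ((n - m) * (m ^ 6 + n * (- 11 * m ^ 5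
        + 30 * m ^ 4 * n - 15 * m ^ 3 * n ^ 2 - 10 * m ^ 2 * n ^ 3 + 5 * m * n ^ 4 + n ^ 5))
        + m ^ 2 * (- 11 * m ^ 5
        + 30 * m ^ 4 * n - 15 * m ^ 3 * n ^ 2 - 10 * m ^ 2 * n ^ 3 + 5 * m * n ^ 4 + n ^ 5)) := by
        simp only [hC]; ring
      rw [e]; exact hd.mul_right _
    have h2 := (dvd_sub hr h1)
    rw [sub_sub_cancel] at h2
    exact nb ⟨hp'.dvd_of_dvd_pow h2, hd⟩
  · have h0 : m ≡ n [ZMOD p] := ((Int.modEq_iff_dvd).2 hd).symm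
    have h1 : hC m n ≡ hC n n [ZMOD p] := by
      unfold hC; gcongr
    have h3 : hC n n = n ^ 8 := by simp only [hC]; ring
    rw [h3] at h1
    have h2 : (p : ℤ) ∣ n ^ 8 := (Int.ModEq.dvd_iff h1).1 hr
    have h4 := hp'.dvd_of_dvd_pow h2
    exact nb ⟨by simpa using dvd_add hd h4, h4⟩

/-- The height of a rational number, in the normalization used for unit equations. -/
def hgt (d : ℚ) : ℤ := max |d.num| (max |-(d.den : ℤ)| |(d.den : ℤ) - d.num|)

lemma clear_den (d w : ℚ) (A B D : ℤ)
    (hA : (A : ℚ) = cA d * w ^ 4) (hD : (D : ℚ) = cD d * w ^ 12) :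
    hC d.num d.den ^ 3 * D = (-48 * A) ^ 3 * (d.num ^ 7 * (d.den : ℤ) ^ 7 * (d.num - d.den) ^ 7 *
      (d.num ^ 3 - 8 * d.num ^ 2 * d.den + 5 * d.num * (d.den : ℤ) ^ 2 + (d.den : ℤ) ^ 3)) := by
  have hn : (d.den : ℚ) ≠ 0 := by exact_mod_cast d.den_nz
  obtain ⟨m, hm⟩ : ∃ m : ℚ, m = d.num := ⟨_, rfl⟩
  obtain ⟨n, hn'⟩ : ∃ n : ℚ, n = d.den := ⟨_, rfl⟩
  have hd : d = m / n := by rw [hm, hn', Rat.num_div_den]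
  have : ((hC d.num d.den ^ 3 * D : ℤ) : ℚ) = (((-48 * A) ^ 3 * (d.num ^ 7 * (d.den : ℤ) ^ 7 *
    (d.num - d.den) ^ 7 * (d.num ^ 3 - 8 * d.num ^ 2 * d.den + 5 * d.num * (d.den : ℤ) ^ 2
      + (d.den : ℤ) ^ 3)) : ℤ) : ℚ) := by
    simp only [hC]
    push_cast
    rw [hA, hD, ← hm, ← hn', cA, cD, hd]
    rw [← hn'] at hn
    field_simp
  exact_mod_cast this

lemma make_sol (d w : ℚ) (A B D : ℤ) (hd0 : d ≠ 0) (hd1 : d ≠ 1) (hD0 : D ≠ 0)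
    (hA : (A : ℚ) = cA d * w ^ 4) (hD : (D : ℚ) = cD d * w ^ 12)
    (hbig : 1000 * Real.log 2 ≤ Real.log (hgt d)) :
    Sol_s18 D.natAbs.primeFactors d.num (-(d.den : ℤ)) (d.den - d.num) (hgt d) := by
  have hc : IsCoprime d.num (d.den : ℤ) := d.isCoprime_num_den
  have key := prime_dvd_disc d.num d.den A D hc (clear_den d w A B D hA hD)
  have mem : ∀ p : ℕ, p.Prime → (p : ℤ) ∣ D → p ∈ D.natAbs.primeFactors := fun p hp hd =>
    Nat.mem_primeFactors.2 ⟨hp, Int.natCast_dvd.1 hd, by simpa using hD0⟩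
  refine ⟨by ring, hc.neg_right, ?_, ?_, by simpa using hd0, by simp, ?_, ?_, ?_, ?_,
    le_max_left _ _, (le_max_left _ _).trans (le_max_right _ _),
    (le_max_right _ _).trans (le_max_right _ _), hbig⟩
  · obtain ⟨u, v, huv⟩ := hc
    exact ⟨-v - u, -u, by linear_combination huv⟩
  · obtain ⟨u, v, huv⟩ := hc
    exact ⟨u + v, v, by linear_combination huv⟩
  · intro h
    apply hd1
    rw [← Rat.num_div_den d]
    have : (d.num : ℚ) = d.den := by
      have : d.num = d.den := by linarith
      exact_mod_cast this
    rw [this, div_self (by exact_mod_cast d.den_nz)]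
  · intro p hp h; exact mem p hp (key p hp (Or.inl h))
  · intro p hp h; exact mem p hp (key p hp (Or.inr (Or.inl (by simpa using h))))
  · intro p hp h
    exact mem p hp (key p hp (Or.inr (Or.inr (by rw [← neg_sub]; exact (dvd_neg).2 h))))

lemma minor_ne (x y : ℚ) (h : x ≠ y) :
    (-(y.den : ℤ)) * x.num - y.num * (-(x.den : ℤ)) ≠ 0 := by
  intro e
  apply h
  rw [Rat.eq_iff_mul_eq_mul]
  linarith

lemma small_count_s18 (k : ℕ) (T : Finset ℚ) (hT : ∀ d ∈ T, hgt d ≤ 2 ^ k) :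
    T.card ≤ 7 ^ (2 * k + 4) := by
  have h1 : T.card ≤ (Finset.Icc (-(2 ^ k) : ℤ) (2 ^ k) ×ˢ Finset.Icc (-(2 ^ k) : ℤ) (2 ^ k)).card := by
    apply Finset.card_le_card_of_injOn (fun d => (d.num, (d.den : ℤ)))
    · intro d hd
      have := hT d hd
      simp only [hgt, max_le_iff, abs_le] at this
      simp only [Finset.coe_product, Set.mem_prod, Finset.mem_coe, Finset.mem_Icc]
      omega
    · intro x _ y _ hxy
      simp only [Prod.mk.injEq, Nat.cast_inj] at hxy
      exact Rat.ext hxy.1 hxy.2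
  refine h1.trans ?_
  rw [Finset.card_product, Int.card_Icc]
  have e : ((2 : ℤ) ^ k + 1 - -(2 ^ k)).toNat = 2 * 2 ^ k + 1 := by
    have : (2 : ℤ) ^ k + 1 - -(2 ^ k) = ((2 * 2 ^ k + 1 : ℕ) : ℤ) := by push_cast; ring
    rw [this, Int.toNat_natCast]
  rw [e]
  have h2 : 2 * 2 ^ k + 1 ≤ 7 ^ (k + 2) := by
    have a1 : 2 ^ k ≤ 7 ^ k := Nat.pow_le_pow_left (by norm_num) k
    have a2 : 1 ≤ 7 ^ k := Nat.one_le_pow _ _ (by norm_num)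
    rw [pow_add]; omega
  calc _ ≤ 7 ^ (k + 2) * 7 ^ (k + 2) := Nat.mul_le_mul h2 h2
    _ = 7 ^ (2 * k + 4) := by rw [← pow_add]; congr 1; ring

lemma hgt_pos (d : ℚ) : 0 < hgt d := by
  have : 0 < |-(d.den : ℤ)| := by simp [d.den_pos]
  exact this.trans_le ((le_max_left _ _).trans (le_max_right _ _))

lemma small_of_log (k : ℕ) (d : ℚ) (h : ¬ (k * Real.log 2 ≤ Real.log (hgt d))) :
    hgt d ≤ 2 ^ k := by
  have hp : (0:ℝ) < hgt d := by exact_mod_cast hgt_pos d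
  push Not at h
  rw [← Real.log_pow, Real.log_lt_log_iff hp (by positivity)] at h
  exact_mod_cast h.le

lemma arith_bound (t : ℕ) : 21 * 2 ^ (183 * t) ≤ 6 * 7 ^ (70 * (t + 1)) := by
  have h1 : 2 ^ (183 * t) ≤ 7 ^ (70 * t) := by
    rw [pow_mul, pow_mul]
    exact Nat.pow_le_pow_left (by norm_num) t
  have h2 : 7 ^ (70 * (t + 1)) = 7 ^ (70 * t) * 7 ^ 70 := by rw [← pow_add]; congr 1
  have h3 : (7 : ℕ) ≤ 7 ^ 70 := by norm_num
  rw [h2]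
  calc 21 * 2 ^ (183 * t) ≤ 21 * 7 ^ (70 * t) := Nat.mul_le_mul_left _ h1
    _ ≤ 42 * 7 ^ (70 * t) := Nat.mul_le_mul_right _ (by norm_num)
    _ = 6 * (7 ^ (70 * t) * 7) := by ring
    _ ≤ _ := Nat.mul_le_mul_left _ (Nat.mul_le_mul_left _ h3)

lemma count_d (D : ℤ) (hD0 : D ≠ 0) (T : Finset ℚ)
    (hT : ∀ d ∈ T, d ≠ 0 ∧ d ≠ 1 ∧ ∃ (w : ℚ) (A B : ℤ),
      (A : ℚ) = cA d * w ^ 4 ∧ (D : ℚ) = cD d * w ^ 12) :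
    T.card ≤ 7 ^ (2 * 1000 + 4) + 6 * 7 ^ (70 * (D.natAbs.primeFactors.card + 1)) := by
  classical
  rw [← Finset.card_filter_add_card_filter_not (s := T)
    (fun d : ℚ => ¬ (((1000 : ℕ) : ℝ) * Real.log 2 ≤ Real.log (hgt d)))]
  apply Nat.add_le_add
  · apply small_count_s18
    intro d hd
    exact small_of_log _ d (Finset.mem_filter.1 hd).2
  · refine le_trans ?_ (arith_bound _)
    apply sunit D.natAbs.primeFactors _ (fun d : ℚ => d.num) (fun d => -(d.den : ℤ))
      (fun d => d.den - d.num) hgt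
    · intro d hd
      obtain ⟨hd, hb⟩ := Finset.mem_filter.1 hd
      obtain ⟨h0, h1, w, A, B, hA, hD⟩ := hT d hd
      rw [not_not] at hb
      exact make_sol d w A B D h0 h1 hD0 hA hD (by exact_mod_cast hb)
    · intro d _; rfl
    · intro x _ y _ hxy; exact minor_ne x y hxy

lemma finite_of_bound {α : Type*} (S : Set α) (N : ℕ)
    (h : ∀ T : Finset α, ↑T ⊆ S → T.card ≤ N) : S.Finite ∧ S.ncard ≤ N := by
  have hf : S.Finite := by
    by_contra hi
    obtain ⟨T, hT, hc⟩ := Set.Infinite.exists_subset_card_eq (s := S) hi (N + 1)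
    have := h T hT
    omega
  refine ⟨hf, ?_⟩
  rw [Set.ncard_eq_toFinset_card S hf]
  exact h _ (by simp)

lemma bump (a b x y : ℕ) (hxy : x ≤ y) (h : a ≤ 7 ^ x + b) : a ≤ 7 ^ y + b :=
  h.trans (Nat.add_le_add_right (Nat.pow_le_pow_right (by norm_num) hxy) b)

theorem bound_order_seven (Δ : ℤ) (hΔ : Δ ≠ 0) (t : ℕ)
    (ht : t = Δ.natAbs.primeFactors.card) (S : Set (ℤ × ℤ))
    (hS : S = {AB : ℤ × ℤ | 4 * AB.1 ^ 3 + 27 * AB.2 ^ 2 ≠ 0 ∧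
      -16 * (4 * AB.1 ^ 3 + 27 * AB.2 ^ 2) = Δ ∧
      ∃ P : WeierstrassCurve.Affine.Point
        (⟨0, 0, 0, (AB.1 : ℚ), (AB.2 : ℚ)⟩ : WeierstrassCurve.Affine ℚ),
        addOrderOf P = 7}) :
    S.Finite ∧ S.ncard ≤ 7 ^ 19440 + 6 * 7 ^ (70 * (t + 1)) := by
  classical
  apply finite_of_bound
  intro T hT
  have key : ∀ AB : ℤ × ℤ, ∃ d w : ℚ, AB ∈ T → d ≠ 0 ∧ d ≠ 1 ∧ (AB.1 : ℚ) = cA d * w ^ 4 ∧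
      (AB.2 : ℚ) = cB d * w ^ 6 ∧ (Δ : ℚ) = cD d * w ^ 12 := by
    intro AB
    by_cases hAB : AB ∈ T
    · have := hT hAB
      rw [hS] at this
      obtain ⟨-, h2, P, hP⟩ := this
      obtain ⟨d, w, h0, h1, hA, hB, hD⟩ := curve_param _ _ P hP
      refine ⟨d, w, fun _ => ⟨h0, h1, hA, hB, ?_⟩⟩
      rw [← hD, ← h2]; push_cast; ring
    · exact ⟨0, 0, fun h => absurd h hAB⟩
  choose d w hdw using key
  have inj : Set.InjOn d T := by
    intro x hx y hy hxy
    obtain ⟨-, -, xA, xB, xD⟩ := hdw x hx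
    obtain ⟨-, -, yA, yB, yD⟩ := hdw y hy
    rw [← hxy] at yA yB yD
    have hcD : cD (d x) ≠ 0 := by
      intro h
      rw [h, zero_mul] at xD
      exact hΔ (by exact_mod_cast xD)
    have h12 : w x ^ 12 = w y ^ 12 := mul_left_cancel₀ hcD (xD.symm.trans yD)
    have h2 : w x ^ 2 = w y ^ 2 := by
      apply (pow_left_inj₀ (sq_nonneg (w x)) (sq_nonneg (w y)) (show (6 : ℕ) ≠ 0 by norm_num)).1
      rw [← pow_mul, ← pow_mul]; exact h12
    have h4 : w x ^ 4 = w y ^ 4 := by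
      calc w x ^ 4 = (w x ^ 2) ^ 2 := by ring
        _ = (w y ^ 2) ^ 2 := by rw [h2]
        _ = _ := by ring
    have h6 : w x ^ 6 = w y ^ 6 := by
      calc w x ^ 6 = (w x ^ 2) ^ 3 := by ring
        _ = (w y ^ 2) ^ 3 := by rw [h2]
        _ = _ := by ring
    have e1 : (x.1 : ℚ) = y.1 := by rw [xA, yA, h4]
    have e2 : (x.2 : ℚ) = y.2 := by rw [xB, yB, h6]
    exact Prod.ext (by exact_mod_cast e1) (by exact_mod_cast e2)
  rw [← Finset.card_image_of_injOn inj, ht]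
  refine bump _ _ (2 * 1000 + 4) _ (by norm_num) (count_d Δ hΔ _ ?_)
  · intro q hq
    obtain ⟨x, hx, rfl⟩ := Finset.mem_image.1 hq
    obtain ⟨h0, h1, hA, hB, hD⟩ := hdw x hx
    exact ⟨h0, h1, w x, x.1, x.2, hA, hD⟩
end
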